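/- arXiv:1007.2391 — 2 statements merged into one kernel-verified Lean document; each statement's English description precedes it below -/
import Mathlib

section
/- Let H ⊂ ℂ^n be a compact convex set with nonempty interior and suppose (H,ν) satisfies the density condition. Then for every continuous Q : H → ℝ (with w = e^{−Q}) and every μ ∈ 𝓜(H), J^Q(μ) = W^Q(μ) = ( inf{ δ̄^{e^{−Q̃}}(H) · exp(∫_H Q̃ dμ) : Q̃ : H → ℝ continuous } ) · exp(−∫_H Q dμ). -/
/-!
The density bound holds at all scales `r < k` with one `k` outside a set of small Lebesgue measure,
and by a Remez inequality on segments the points where a polynomial is almost as large as at a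
maximum fill a definite volume of the convex set `H`. The two sets meet, and near a common point the
polynomial stays large on a ball of `ν`-mass at least `e^{-εd}`. So `ν` is Bernstein–Markov for all
weights: `L²(ν)` norms and sup-norms of `|p| e^{-dQ}`, `deg p ≤ d`, agree up to `e^{o(d)}`.

Up to a factor `s!`, `Z_d(Q) = ∫ |VDM_d^Q|² dν^{⊗s}` is the Gram determinant of the monomials, the
product of the squared `L²` norms of monic orthogonal polynomials, so it is bounded below through
weighted Chebyshev constants. As these are submultiplicative, the `limsup` defining `δ̄^{e^{-Q}}(H)`
is an asymptotic lower bound for `Z_d(Q)^{1/(2ds)}` along all large `d`.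

`J^Q(μ) ≤ W^Q(μ)` because `ν` has mass at most `1`, and `W^Q(μ)` is bounded by each term of the
infimum by passing from `Q` to `Q̃` on the neighbourhood where `∫ (Q̃ - Q) dσ` is close to
`∫ (Q̃ - Q) dμ`. For the lower bound on `J^Q(μ)`, take finitely many test functions `f i` cutting
out a neighbourhood of `μ`, and for each `d` minimise a penalised version of
`t ↦ (2ds)⁻¹ log Z_d(Q_t) + ∫ Q_t dμ`, `Q_t = Q + ∑ t i • f i`, over a box. At the minimum the means
of the linear statistics under the law `|VDM_d^{Q_t}|² ν^{⊗s} / Z_d(Q_t)` are almost `∫ f i dμ`.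
Under this determinantal law they concentrate, so half of the mass lies in the neighbourhood, and
changing the weight back from `Q_t` to `Q` there gives the bound.
-/

open MeasureTheory Filter Topology ENNReal

noncomputable section

/-- Points of `ℂⁿ` (with the Euclidean metric). -/
abbrev Pt (n : ℕ) := EuclideanSpace ℂ (Fin n)

instance Pt.measurableSpace (n : ℕ) : MeasurableSpace (Pt n) := borel _

instance Pt.borelSpace (n : ℕ) : BorelSpace (Pt n) := ⟨rfl⟩

/-- `s(d) = binomial(d+n, n)`, the number of multi-indices `α ∈ ℕⁿ` with `|α| ≤ d`. -/
def sdim (n d : ℕ) : ℕ := (d + n).choose n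

lemma sdim_pos (n d : ℕ) : 0 < sdim n d := Nat.choose_pos (Nat.le_add_left n d)

/-- `E` is an enumeration of the multi-indices `α ∈ ℕⁿ` with `|α| ≤ d`. -/
def IsEnum (n d : ℕ) (E : Fin (sdim n d) → (Fin n → ℕ)) : Prop :=
  Function.Injective E ∧ ∀ α : Fin n → ℕ, ((∑ i, α i) ≤ d ↔ α ∈ Set.range E)

/-- The Vandermonde determinant `VDM_d(a_1, …, a_{s(d)}) = det [a_j^{α_i}]`. -/
def VDM (n d : ℕ) (E : Fin (sdim n d) → (Fin n → ℕ))
    (a : Fin (sdim n d) → Pt n) : ℂ :=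
  Matrix.det (Matrix.of fun i j => ∏ k, (a j k) ^ (E i k))

/-- `|VDM_d^Q(a)| = |VDM_d(a)| · w(a_1)^d ⋯ w(a_s)^d` where `w = e^{-Q}`, as a member
of `ℝ≥0∞`. -/
def absVDMQ (n d : ℕ) (E : Fin (sdim n d) → (Fin n → ℕ)) (H : Set (Pt n)) (Q : H → ℝ)
    (a : Fin (sdim n d) → H) : ℝ≥0∞ :=
  ENNReal.ofReal (‖VDM n d E (fun j => (a j : Pt n))‖ *
    ∏ j, Real.exp (-(d : ℝ) * Q (a j)))

/-- The empirical measure `(1/s) ∑_j δ_{a_j}` of a tuple of points. -/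
def emp {X : Type*} [MeasurableSpace X] {s : ℕ} (a : Fin s → X) : Measure X :=
  ((s : ℝ≥0∞))⁻¹ • ∑ j, Measure.dirac (a j)

lemma emp_univ {X : Type*} [MeasurableSpace X] {s : ℕ} (hs : s ≠ 0) (a : Fin s → X) :
    emp a Set.univ = 1 := by
  have : (emp a) Set.univ = ((s : ℝ≥0∞))⁻¹ * ∑ j : Fin s, (Measure.dirac (a j)) Set.univ := by
    simp [emp, Measure.smul_apply, Measure.finset_sum_apply]
  rw [this]
  simp only [measure_univ, Finset.sum_const, Finset.card_univ, Fintype.card_fin, nsmul_eq_mul,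
    mul_one]
  exact ENNReal.inv_mul_cancel (by exact_mod_cast hs) (by simp)

/-- The empirical probability measure `(1/s) ∑_j δ_{a_j}` of a tuple of points. -/
def empPM {X : Type*} [MeasurableSpace X] {s : ℕ} (hs : s ≠ 0) (a : Fin s → X) :
    ProbabilityMeasure X := ⟨emp a, ⟨emp_univ hs a⟩⟩

/-- `G̃_s(μ)`: the tuples in `H^s` whose empirical measure lies in `G`. -/
def Gtilde {n : ℕ} (d : ℕ) (H : Set (Pt n)) (G : Set (ProbabilityMeasure H)) :
    Set (Fin (sdim n d) → H) :=
  {a | empPM (sdim_pos n d).ne' a ∈ G}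

/-- `J_d^Q(μ, G) = (∫_{G̃_s(μ)} |VDM_d^Q(a)|² dν^{⊗s}(a))^{1/(2ds)}`. -/
def Jd (n d : ℕ) (E : Fin (sdim n d) → (Fin n → ℕ)) (H : Set (Pt n)) (ν : Measure H)
    (Q : H → ℝ) (G : Set (ProbabilityMeasure H)) : ℝ≥0∞ :=
  (∫⁻ a in Gtilde d H G, (absVDMQ n d E H Q a) ^ 2
      ∂(Measure.pi fun _ : Fin (sdim n d) => ν)) ^ (1 / (2 * d * sdim n d) : ℝ)

/-- `W_d^Q(μ, G) = sup { |VDM_d^Q(a)|^{1/(ds)} : a ∈ G̃_s(μ) }`. -/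
def Wd (n d : ℕ) (E : Fin (sdim n d) → (Fin n → ℕ)) (H : Set (Pt n))
    (Q : H → ℝ) (G : Set (ProbabilityMeasure H)) : ℝ≥0∞ :=
  ⨆ a ∈ Gtilde d H G, (absVDMQ n d E H Q a) ^ (1 / (d * sdim n d) : ℝ)

/-- `J^Q(μ) = inf_{G ∋ μ} limsup_{d → ∞} J_d^Q(μ, G)`, the infimum being over all open
neighborhoods `G` of `μ` in `𝓜(H)`. -/
def JQ (n : ℕ) (E : ∀ d, Fin (sdim n d) → (Fin n → ℕ)) (H : Set (Pt n)) (ν : Measure H)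
    (Q : H → ℝ) (μ : ProbabilityMeasure H) : ℝ≥0∞ :=
  ⨅ G ∈ {G : Set (ProbabilityMeasure H) | IsOpen G ∧ μ ∈ G},
    limsup (fun d => Jd n d (E d) H ν Q G) atTop

/-- `W^Q(μ) = inf_{G ∋ μ} limsup_{d → ∞} W_d^Q(μ, G)`, the infimum being over all open
neighborhoods `G` of `μ` in `𝓜(H)`. -/
def WQ (n : ℕ) (E : ∀ d, Fin (sdim n d) → (Fin n → ℕ)) (H : Set (Pt n))
    (Q : H → ℝ) (μ : ProbabilityMeasure H) : ℝ≥0∞ :=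
  ⨅ G ∈ {G : Set (ProbabilityMeasure H) | IsOpen G ∧ μ ∈ G},
    limsup (fun d => Wd n d (E d) H Q G) atTop

/-- `δ̄^w(H) = lim sup_d (sup_{a ∈ H^{s(d)}} |VDM_d^Q(a)|)^{1/(d·s(d))}` where `w = e^{-Q}`. -/
def deltaBar (n : ℕ) (E : ∀ d, Fin (sdim n d) → (Fin n → ℕ)) (H : Set (Pt n))
    (Q : H → ℝ) : ℝ≥0∞ :=
  limsup (fun d => (⨆ a : Fin (sdim n d) → H, absVDMQ n d (E d) H Q a)
    ^ (1 / (d * sdim n d) : ℝ)) atTop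

/-- The density condition on `(H, ν)`: there is `T > 0` such that for every `z₀ ∈ H`
there is `r(z₀) > 0` with `ν(B(z₀,r)) ≥ r^T` for all `0 < r < r(z₀)`. -/
def DensityCond {n : ℕ} (H : Set (Pt n)) (ν : Measure H) : Prop :=
  ∃ T : ℝ, 0 < T ∧ ∀ z₀ : H, ∃ r₀ > 0, ∀ r : ℝ, 0 < r → r < r₀ →
    ENNReal.ofReal (r ^ T) ≤ ν (Metric.ball z₀ r)

/-! ### Remez and Bernstein–Markov inequalities -/

/-- The positive part of `-log |1 - e⁻ᵘ|`: the logarithmic loss of the linear factor with root `1`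
at the point `e⁻ᵘ`. In the logarithmic coordinate `u`, the loss of a factor with any other nonzero
root is a translate of this function. -/
def remezKernel (u : ℝ) : ℝ := max 0 (-Real.log |1 - Real.exp (-u)|)

lemma remezKernel_nonneg (u : ℝ) : 0 ≤ remezKernel u := le_max_left _ _

lemma measurable_remezKernel : Measurable remezKernel := by
  unfold remezKernel; fun_prop

lemma remezKernel_eq_zero_of_le_neg_one {u : ℝ} (hu : u ≤ -1) : remezKernel u = 0 := by
  have hexp := Real.add_one_le_exp (-u)
  refine max_eq_left (neg_nonpos.2 (Real.log_nonneg ?_))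
  rw [abs_sub_comm]
  exact (by linarith : 1 ≤ Real.exp (-u) - 1).trans (le_abs_self _)

lemma half_abs_le_abs_one_sub_exp_neg {u : ℝ} (hu : u ≤ 1) : |u| / 2 ≤ |1 - Real.exp (-u)| := by
  rcases le_or_gt u 0 with hu0 | hu0
  · have hexp := Real.add_one_le_exp (-u)
    rw [abs_of_nonpos hu0, abs_sub_comm]
    exact (by linarith : -u / 2 ≤ Real.exp (-u) - 1).trans (le_abs_self _)
  · have hexp : Real.exp (-u) ≤ 1 / (u + 1) := by
      rw [Real.exp_neg, inv_eq_one_div]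
      exact one_div_le_one_div_of_le (by linarith) (Real.add_one_le_exp u)
    have hinv : 1 / (u + 1) ≤ 1 - u / 2 := by
      rw [div_le_iff₀ (by linarith)]; nlinarith
    rw [abs_of_pos hu0]
    exact (by linarith : u / 2 ≤ 1 - Real.exp (-u)).trans (le_abs_self _)

lemma remezKernel_le_abs_log_add {u : ℝ} (hu : u ≤ 1) :
    remezKernel u ≤ |Real.log u| + Real.log 2 := by
  have hlog2 : 0 ≤ Real.log 2 := Real.log_nonneg one_le_two
  refine max_le (by positivity) ?_
  rcases eq_or_ne u 0 with rfl | hu0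
  · simpa using hlog2
  · have hlog := Real.log_le_log (by positivity) (half_abs_le_abs_one_sub_exp_neg hu)
    rw [Real.log_div (by positivity) two_ne_zero, Real.log_abs] at hlog
    linarith [neg_abs_le (Real.log u)]

lemma remezKernel_le_two_mul_exp_neg {u : ℝ} (hu : 1 < u) :
    remezKernel u ≤ 2 * Real.exp (-u) := by
  refine max_le (by positivity) ?_
  have hhalf : Real.exp (-u) ≤ 1 / 2 := by
    rw [Real.exp_neg, inv_eq_one_div]
    exact one_div_le_one_div_of_le two_pos (by linarith [Real.add_one_le_exp u])
  have hinv : (1 - Real.exp (-u))⁻¹ ≤ 1 + 2 * Real.exp (-u) := by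
    rw [inv_eq_one_div, div_le_iff₀ (by linarith)]
    nlinarith [Real.exp_pos (-u)]
  have hlog := Real.one_sub_inv_le_log_of_pos (x := 1 - Real.exp (-u)) (by linarith)
  rw [Real.log_abs]
  linarith

lemma integrable_remezKernel : Integrable remezKernel := by
  have hmeas := measurable_remezKernel.aestronglyMeasurable (μ := volume)
  have hleft : IntegrableOn remezKernel (Set.Iic (-1)) :=
    integrableOn_zero.congr_fun
      (fun u hu => (remezKernel_eq_zero_of_le_neg_one hu).symm) measurableSet_Iic
  have hmid : IntegrableOn remezKernel (Set.Ioc (-1) 1) := by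
    have hlog : IntegrableOn Real.log (Set.Ioc (-1) 1) :=
      (intervalIntegrable_iff_integrableOn_Ioc_of_le (by norm_num)).1
        intervalIntegral.intervalIntegrable_log'
    refine (hlog.abs.add (integrableOn_const (C := Real.log 2) (by simp))).mono' hmeas.restrict
      (ae_restrict_of_forall_mem measurableSet_Ioc fun u hu => ?_)
    rw [Real.norm_of_nonneg (remezKernel_nonneg u)]
    exact remezKernel_le_abs_log_add hu.2
  have hright : IntegrableOn remezKernel (Set.Ioi 1) := by
    refine ((integrableOn_exp_neg_Ioi 1).const_mul 2).mono' hmeas.restrict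
      (ae_restrict_of_forall_mem measurableSet_Ioi fun u hu => ?_)
    rw [Real.norm_of_nonneg (remezKernel_nonneg u)]
    exact remezKernel_le_two_mul_exp_neg hu
  have hunion : Set.Iic (-1) ∪ Set.Ioc (-1) 1 ∪ Set.Ioi 1 = (Set.univ : Set ℝ) := by
    rw [Set.Iic_union_Ioc_eq_Iic (by norm_num), Set.Iic_union_Ioi]
  exact integrableOn_univ.1 (hunion ▸ (hleft.union hmid).union hright)

/-- The constant in the one-dimensional Remez inequality `volume_norm_eval_exp_neg_lt_le`. The
summand `1` only serves to make it positive. -/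
def remezConst : ℝ := 1 + ∫ u, remezKernel u

lemma remezConst_pos : 0 < remezConst :=
  add_pos_of_pos_of_nonneg one_pos (integral_nonneg remezKernel_nonneg)

lemma exp_neg_remezKernel_mul_norm_le {z : ℂ} (hz : z ≠ 0) {u : ℝ} (hu : u ≠ -Real.log ‖z‖) :
    Real.exp (-remezKernel (u + Real.log ‖z‖)) * ‖z‖ ≤ ‖(Real.exp (-u) : ℂ) - z‖ := by
  set v := Real.log ‖z‖
  have hznorm : 0 < ‖z‖ := norm_pos_iff.2 hz
  have hpos : 0 < |1 - Real.exp (-(u + v))| := by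
    refine abs_pos.2 (sub_ne_zero.2 fun h => hu ?_)
    have := (Real.exp_eq_one_iff _).1 h.symm
    linarith
  calc Real.exp (-remezKernel (u + v)) * ‖z‖
      ≤ |1 - Real.exp (-(u + v))| * ‖z‖ := by
        gcongr
        rw [← Real.le_log_iff_exp_le hpos]
        exact neg_le.1 (le_max_right _ _)
    _ = |‖z‖ - Real.exp (-u)| := by
        rw [← abs_of_pos hznorm, ← abs_mul, abs_of_pos hznorm, sub_mul, one_mul, neg_add,
          Real.exp_add, Real.exp_neg v, Real.exp_log hznorm, mul_assoc,
          inv_mul_cancel₀ hznorm.ne', mul_one]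
    _ = |‖z‖ - ‖(Real.exp (-u) : ℂ)‖| := by
        rw [Complex.norm_real, Real.norm_of_nonneg (Real.exp_pos _).le]
    _ ≤ ‖z - (Real.exp (-u) : ℂ)‖ := abs_norm_sub_norm_le _ _
    _ = ‖(Real.exp (-u) : ℂ) - z‖ := norm_sub_rev _ _

lemma integrable_integral_sum_remezKernel (S : Multiset ℂ) :
    Integrable (fun u : ℝ => (S.map fun z => remezKernel (u + Real.log ‖z‖)).sum) ∧
    ∫ u : ℝ, (S.map fun z => remezKernel (u + Real.log ‖z‖)).sum =
      S.card * ∫ u, remezKernel u := by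
  induction S using Multiset.induction with
  | empty => simp
  | cons z S ih =>
    have hz : Integrable fun u => remezKernel (u + Real.log ‖z‖) :=
      integrable_remezKernel.comp_add_right _
    simp only [Multiset.map_cons, Multiset.sum_cons, Multiset.card_cons]
    refine ⟨hz.add ih.1, ?_⟩
    rw [integral_add hz ih.1, ih.2, integral_add_right_eq_self]
    push_cast
    ring

lemma ae_exp_neg_sum_remezKernel_mul_le (S : Multiset ℂ) (hS : ∀ z ∈ S, z ≠ 0) :
    ∀ᵐ u : ℝ, Real.exp (-(S.map fun z => remezKernel (u + Real.log ‖z‖)).sum) *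
        ‖(S.map fun z => 0 - z).prod‖ ≤ ‖(S.map fun z => (Real.exp (-u) : ℂ) - z).prod‖ := by
  induction S using Multiset.induction with
  | empty => simp
  | cons z S ih =>
    filter_upwards [ih fun w hw => hS w (Multiset.mem_cons_of_mem hw),
      Measure.ae_ne volume (-Real.log ‖z‖)] with u hprod hu
    have hfactor := exp_neg_remezKernel_mul_norm_le (hS z (Multiset.mem_cons_self z S)) hu
    simp only [Multiset.map_cons, Multiset.sum_cons, Multiset.prod_cons, norm_mul, neg_add,
      Real.exp_add, zero_sub, norm_neg] at hprod ⊢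
    rw [mul_mul_mul_comm]
    gcongr

lemma volume_norm_eval_exp_neg_lt_le {g : Polynomial ℂ} {d : ℕ} (hg : g.natDegree ≤ d) {ε : ℝ}
    (hε : 0 < ε) :
    volume {u : ℝ | ‖g.eval (Real.exp (-u) : ℂ)‖ < Real.exp (-(ε * d)) * ‖g.eval 0‖} ≤
      ENNReal.ofReal (remezConst / ε) := by
  rcases eq_or_ne (g.eval 0) 0 with hg0 | hg0
  · simp [hg0, not_lt.2 (norm_nonneg _)]
  rcases Nat.eq_zero_or_pos d with rfl | hd
  · rw [Polynomial.eq_C_of_natDegree_le_zero hg]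
    simp
  have hroots : ∀ z ∈ g.roots, z ≠ 0 := by
    rintro z hz rfl
    exact hg0 (Polynomial.isRoot_of_mem_roots hz)
  set Ψ : ℝ → ℝ := fun u => (g.roots.map fun z => remezKernel (u + Real.log ‖z‖)).sum
  have hΨ_nonneg : 0 ≤ Ψ := fun u => Multiset.sum_nonneg fun x hx => by
    obtain ⟨z, -, rfl⟩ := Multiset.mem_map.1 hx
    exact remezKernel_nonneg _
  obtain ⟨hΨ_int, hΨ_eq⟩ := integrable_integral_sum_remezKernel g.roots
  have hbad : {u : ℝ | ‖g.eval (Real.exp (-u) : ℂ)‖ < Real.exp (-(ε * d)) * ‖g.eval 0‖} ≤ᵐ[volume]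
      {u | ε * d ≤ Ψ u} := by
    filter_upwards [ae_exp_neg_sum_remezKernel_mul_le g.roots hroots] with u hu hlt
    by_contra hΨu
    refine absurd (lt_of_lt_of_le hlt ?_) (lt_irrefl _)
    simp only [(IsAlgClosed.splits g).eval_eq_prod_roots, norm_mul]
    rw [mul_left_comm]
    gcongr
    refine le_trans ?_ hu
    gcongr
    exact (not_le.1 hΨu).le
  have hmarkov := mul_meas_ge_le_integral_of_nonneg (ae_of_all _ hΨ_nonneg) hΨ_int (ε * d)
  have hfinite : volume {u | ε * d ≤ Ψ u} ≠ ⊤ := (hΨ_int.measure_ge_lt_top (by positivity)).ne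
  refine (measure_mono_ae hbad).trans ?_
  rw [← ofReal_measureReal hfinite]
  refine ENNReal.ofReal_le_ofReal ?_
  rw [le_div_iff₀ hε, ← mul_le_mul_iff_right₀ (Nat.cast_pos.2 hd : (0 : ℝ) < d)]
  calc (d : ℝ) * (volume.real {u | ε * d ≤ Ψ u} * ε)
      = ε * d * volume.real {u | ε * d ≤ Ψ u} := by ring
    _ ≤ g.roots.card * ∫ u, remezKernel u := hmarkov.trans_eq hΨ_eq
    _ ≤ d * remezConst := by
        gcongr
        · exact integral_nonneg remezKernel_nonneg
        · exact (Polynomial.card_roots' g).trans hg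
        · exact le_add_of_nonneg_left zero_le_one

/-- The restriction of `f` to every real affine line, in an affine parametrization, is a complex
polynomial of degree at most `d`. This is all that the Remez-type estimates below use about a
polynomial of total degree at most `d`. -/
def LineDegreeLE {E : Type*} [AddCommGroup E] [Module ℝ E] (d : ℕ) (f : E → ℂ) : Prop :=
  ∀ a b : E, ∃ g : Polynomial ℂ, g.natDegree ≤ d ∧ ∀ r : ℝ, g.eval (r : ℂ) = f (a + r • b)

lemma lineDegreeLE_eval {n d : ℕ} {p : MvPolynomial (Fin n) ℂ} (hp : p.totalDegree ≤ d) :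
    LineDegreeLE d fun x : Pt n => MvPolynomial.eval x p := by
  intro a b
  refine ⟨MvPolynomial.aeval
    (fun i => Polynomial.C (a i) + Polynomial.X * Polynomial.C (b i)) p, ?_, fun r => ?_⟩
  · have hdeg := MvPolynomial.aeval_natDegree_le p hp
      (fun i => Polynomial.C (a i) + Polynomial.X * Polynomial.C (b i)) (n := 1)
      (fun i => by compute_degree)
    rwa [mul_one] at hdeg
  · rw [MvPolynomial.aeval_def, MvPolynomial.eval₂_eq', Polynomial.eval_finsetSum]
    simp [MvPolynomial.eval_eq', Polynomial.eval_prod, mul_comm (r : ℂ)]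

section LineDegree

variable {E : Type*} [NormedAddCommGroup E] [NormedSpace ℝ E] {d : ℕ} {f : E → ℂ}

lemma LineDegreeLE.volume_ray_lt_le (hf : LineDegreeLE d f) (a b : E) {ε : ℝ} (hε : 0 < ε) :
    volume {u : ℝ | ‖f (a + Real.exp (-u) • b)‖ < Real.exp (-(ε * d)) * ‖f a‖} ≤
      ENNReal.ofReal (remezConst / ε) := by
  obtain ⟨g, hg, hgf⟩ := hf a b
  have hg0 : g.eval 0 = f a := by simpa using hgf 0
  simpa only [hgf, hg0] using volume_norm_eval_exp_neg_lt_le hg hε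

lemma LineDegreeLE.le_volume_ray (hf : LineDegreeLE d f) (a b : E) {ε : ℝ} (hε : 0 < ε) :
    ENNReal.ofReal (remezConst / ε) ≤ volume {u : ℝ | u ∈ Set.Icc 0 (2 * (remezConst / ε)) ∧
      Real.exp (-(ε * d)) * ‖f a‖ ≤ ‖f (a + Real.exp (-u) • b)‖} := by
  have hκ : 0 < remezConst / ε := div_pos remezConst_pos hε
  have hcover : volume (Set.Icc 0 (2 * (remezConst / ε))) ≤
      volume {u : ℝ | u ∈ Set.Icc 0 (2 * (remezConst / ε)) ∧
        Real.exp (-(ε * d)) * ‖f a‖ ≤ ‖f (a + Real.exp (-u) • b)‖} +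
      ENNReal.ofReal (remezConst / ε) := by
    refine (measure_mono fun u hu => ?_).trans ((measure_union_le _ _).trans
      (add_le_add_right (hf.volume_ray_lt_le a b hε) _))
    exact (le_or_gt _ _).imp (fun h => ⟨hu, h⟩) id
  have hlength : volume (Set.Icc 0 (2 * (remezConst / ε))) =
      ENNReal.ofReal (remezConst / ε) + ENNReal.ofReal (remezConst / ε) := by
    rw [Real.volume_Icc, sub_zero, two_mul, ENNReal.ofReal_add hκ.le hκ.le]
  rw [hlength] at hcover
  exact (ENNReal.add_le_add_iff_right ENNReal.ofReal_ne_top).1 hcover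

lemma LineDegreeLE.exists_mem_ray_le (hf : LineDegreeLE d f) (a b : E) {ε : ℝ} (hε : 0 < ε) :
    ∃ u ∈ Set.Icc 0 (2 * (remezConst / ε)),
      Real.exp (-(ε * d)) * ‖f a‖ ≤ ‖f (a + Real.exp (-u) • b)‖ := by
  have hpos := (ENNReal.ofReal_pos.2 (div_pos remezConst_pos hε)).trans_le
    (hf.le_volume_ray a b hε)
  exact nonempty_of_measure_ne_zero hpos.ne'

variable {H : Set E}

lemma homothety_mem_inter_closedBall (hH : Bornology.IsBounded H) (hconv : Convex ℝ H) {z x : E}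
    (hz : z ∈ H) (hx : x ∈ H) {r t : ℝ} (hr : 0 ≤ r) (hrt : r ≤ t) (ht : t ≤ 1) :
    AffineMap.homothety z r x ∈ H ∩ Metric.closedBall z (t * Metric.diam H) := by
  rw [AffineMap.homothety_apply, vsub_eq_sub, vadd_eq_add, add_comm]
  refine ⟨hconv.add_smul_sub_mem hz hx ⟨hr, hrt.trans ht⟩, ?_⟩
  rw [Metric.mem_closedBall, dist_self_add_left, norm_smul, Real.norm_of_nonneg hr,
    ← dist_eq_norm]
  exact mul_le_mul hrt (Metric.dist_le_diam_of_mem hH hx hz) dist_nonneg (hr.trans hrt)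

lemma LineDegreeLE.exists_growth (hH : Bornology.IsBounded H) (hconv : Convex ℝ H)
    (hint : (interior H).Nonempty) {ε : ℝ} (hε : 0 < ε) {t : ℝ} (ht : 0 < t) (ht1 : t ≤ 1) :
    ∃ η > 0, ∀ (d : ℕ) (f : E → ℂ), LineDegreeLE d f → ∀ z ∈ H, ∀ y ∈ Metric.ball z η,
      ∃ x ∈ H ∩ Metric.closedBall z (t * Metric.diam H),
        Real.exp (-(ε * d)) * ‖f y‖ ≤ ‖f x‖ := by
  obtain ⟨c, hc⟩ := hint
  obtain ⟨ρ, hρ, hball⟩ := Metric.isOpen_iff.1 isOpen_interior c hc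
  set L := 2 * (remezConst / ε)
  refine ⟨ρ * t * Real.exp (-L), by positivity, fun d f hf z hz y hy => ?_⟩
  obtain ⟨u, ⟨hu0, huL⟩, hfu⟩ := hf.exists_mem_ray_le y (z + t • (c - z) - y) hε
  set l := Real.exp (-u)
  have hl : 0 < l := Real.exp_pos _
  have hl1 : l ≤ 1 := Real.exp_le_one_iff.2 (by linarith)
  have hLl : Real.exp (-L) ≤ l := Real.exp_le_exp.2 (by linarith)
  set w := c + ((1 - l) / (l * t)) • (y - z) with hw
  have hwH : w ∈ H := by
    refine interior_subset (hball ?_)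
    have hcoef : 0 ≤ (1 - l) / (l * t) := div_nonneg (by linarith) (by positivity)
    rw [Metric.mem_ball, dist_self_add_left, norm_smul, Real.norm_of_nonneg hcoef, ← dist_eq_norm]
    calc (1 - l) / (l * t) * dist y z
        ≤ 1 / (l * t) * dist y z := by gcongr; linarith
      _ < 1 / (l * t) * (ρ * t * Real.exp (-L)) := by gcongr; exact hy
      _ ≤ 1 / (l * t) * (ρ * t * l) := by gcongr
      _ = ρ := by field_simp
  have hmove : y + l • (z + t • (c - z) - y) = AffineMap.homothety z (l * t) w := by
    have hscale : (l * t) • (w - z) = (l * t) • (c - z) + (1 - l) • (y - z) := by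
      rw [hw, add_sub_right_comm, smul_add, smul_smul, mul_div_cancel₀ _ (by positivity)]
    rw [AffineMap.homothety_apply, vsub_eq_sub, vadd_eq_add, hscale]
    module
  rw [hmove] at hfu
  exact ⟨_, homothety_mem_inter_closedBall hH hconv hz hwH (by positivity)
    (mul_le_of_le_one_left ht.le hl1) ht1, hfu⟩

/-- The pairs `(u, x)` such that `f` has not decreased much from `z` to the point of the segment
from `z` to `z + t (x - z)` with logarithmic coordinate `u`. Slicing this set in both directions
turns the one-dimensional Remez inequality into one for convex bodies. -/
def remezRegion (f : E → ℂ) (d : ℕ) (H : Set E) (ε t : ℝ) (z : E) : Set (ℝ × E) :=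
  {q | q.1 ∈ Set.Icc 0 (2 * (remezConst / ε)) ∧ q.2 ∈ H ∧
    Real.exp (-(ε * d)) * ‖f z‖ ≤ ‖f (z + Real.exp (-q.1) • (t • (q.2 - z)))‖}

lemma isClosed_remezRegion (hf : Continuous f) (hH : IsClosed H) (ε t : ℝ) (z : E) :
    IsClosed (remezRegion f d H ε t z) :=
  (isClosed_Icc.preimage continuous_fst).inter ((hH.preimage continuous_snd).inter
    (isClosed_le continuous_const (hf.comp (by fun_prop)).norm))

variable [FiniteDimensional ℝ E] [MeasurableSpace E] [BorelSpace E]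
  (m : Measure E) [m.IsAddHaarMeasure]

lemma measure_preimage_homothety_le (z : E) {r₀ r : ℝ} (hr₀ : 0 < r₀) (hr : r₀ ≤ r) (S : Set E) :
    m (AffineMap.homothety z r ⁻¹' S) ≤
      ENNReal.ofReal ((r₀ ^ Module.finrank ℝ E)⁻¹) * m S := by
  have hpos : 0 < r := hr₀.trans_le hr
  have himage := measure_mono (μ := m)
    (Set.image_preimage_subset (AffineMap.homothety z r : E → E) S)
  rw [Measure.addHaar_image_homothety, abs_of_pos (by positivity)] at himage
  calc m (AffineMap.homothety z r ⁻¹' S)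
      ≤ (ENNReal.ofReal (r ^ Module.finrank ℝ E))⁻¹ * m S :=
        (ENNReal.mul_le_iff_le_inv (by positivity) ENNReal.ofReal_ne_top).1 himage
    _ ≤ ENNReal.ofReal ((r₀ ^ Module.finrank ℝ E)⁻¹) * m S := by
        rw [← ENNReal.ofReal_inv_of_pos (by positivity)]
        gcongr

variable {m}

lemma LineDegreeLE.le_measure_remezRegion (hf : LineDegreeLE d f) (hfc : Continuous f)
    (hH : IsClosed H) {ε : ℝ} (hε : 0 < ε) (t : ℝ) (z : E) :
    ENNReal.ofReal (remezConst / ε) * m H ≤ (volume.prod m) (remezRegion f d H ε t z) := by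
  rw [Measure.prod_apply_symm (isClosed_remezRegion hfc hH ε t z).measurableSet,
    ← setLIntegral_const]
  refine (setLIntegral_mono' hH.measurableSet fun x hx => ?_).trans (setLIntegral_le_lintegral H _)
  refine (hf.le_volume_ray z (t • (x - z)) hε).trans (measure_mono ?_)
  exact fun u hu => ⟨hu.1, hx, hu.2⟩

lemma measure_remezRegion_le (hfc : Continuous f) (hH : IsClosed H) (hbdd : Bornology.IsBounded H)
    (hconv : Convex ℝ H) {t : ℝ} (ht : 0 < t) (ht1 : t ≤ 1) (ε : ℝ) {z : E} (hz : z ∈ H) :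
    (volume.prod m) (remezRegion f d H ε t z) ≤
      ENNReal.ofReal (((Real.exp (-(2 * (remezConst / ε))) * t) ^ Module.finrank ℝ E)⁻¹) *
        m {x ∈ H ∩ Metric.closedBall z (t * Metric.diam H) |
          Real.exp (-(ε * d)) * ‖f z‖ ≤ ‖f x‖} * ENNReal.ofReal (2 * (remezConst / ε)) := by
  set L := 2 * (remezConst / ε)
  have hsupport : (Function.support fun u => m (Prod.mk u ⁻¹' remezRegion f d H ε t z)) ⊆
      Set.Icc 0 L := fun u hu => (nonempty_of_measure_ne_zero hu).elim fun _ hx => hx.1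
  rw [Measure.prod_apply (isClosed_remezRegion hfc hH ε t z).measurableSet,
    ← setLIntegral_eq_of_support_subset hsupport, ← sub_zero L, ← Real.volume_Icc,
    ← setLIntegral_const, sub_zero]
  refine setLIntegral_mono' measurableSet_Icc fun u hu => ?_
  refine (measure_mono fun x hx => ?_).trans
    (measure_preimage_homothety_le m z (by positivity) (r := Real.exp (-u) * t)
      (by gcongr; exact hu.2) _)
  obtain ⟨-, hxH, hfx⟩ := hx
  refine ⟨homothety_mem_inter_closedBall hbdd hconv hz hxH (by positivity)
    (mul_le_of_le_one_left ht.le (Real.exp_le_one_iff.2 (neg_nonpos.2 hu.1))) ht1, ?_⟩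
  rwa [AffineMap.homothety_apply, vsub_eq_sub, vadd_eq_add, add_comm, mul_smul]

variable (m) in
lemma LineDegreeLE.exists_le_measure (hH : IsCompact H) (hconv : Convex ℝ H) (hm : m H ≠ 0)
    {ε : ℝ} (hε : 0 < ε) {t : ℝ} (ht : 0 < t) (ht1 : t ≤ 1) :
    ∃ c > 0, ∀ (d : ℕ) (f : E → ℂ), Continuous f → LineDegreeLE d f → ∀ z ∈ H,
      c ≤ m {x ∈ H ∩ Metric.closedBall z (t * Metric.diam H) |
        Real.exp (-(ε * d)) * ‖f z‖ ≤ ‖f x‖} := by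
  have hκ : 0 < remezConst / ε := div_pos remezConst_pos hε
  set κ := ENNReal.ofReal (remezConst / ε)
  set A := ENNReal.ofReal (((Real.exp (-(2 * (remezConst / ε))) * t) ^ Module.finrank ℝ E)⁻¹)
  set B := ENNReal.ofReal (2 * (remezConst / ε))
  have hAB : A * B ≠ 0 := mul_ne_zero (ENNReal.ofReal_pos.2 (by positivity)).ne'
    (ENNReal.ofReal_pos.2 (by positivity)).ne'
  have hAB_top : A * B ≠ ⊤ := ENNReal.mul_ne_top ENNReal.ofReal_ne_top ENNReal.ofReal_ne_top
  refine ⟨κ * m H / (A * B), ENNReal.div_pos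
    (mul_ne_zero (ENNReal.ofReal_pos.2 hκ).ne' hm) hAB_top, ?_⟩
  intro d f hfc hf z hz
  refine (ENNReal.div_le_iff hAB hAB_top).2 ?_
  calc κ * m H ≤ (volume.prod m) (remezRegion f d H ε t z) :=
        hf.le_measure_remezRegion hfc hH.isClosed hε t z
    _ ≤ A * _ * B := measure_remezRegion_le hfc hH.isClosed hH.isBounded hconv ht ht1 ε hz
    _ = _ := by rw [mul_right_comm, mul_comm]

end LineDegree

lemma continuous_eval {n : ℕ} (p : MvPolynomial (Fin n) ℂ) :
    Continuous fun x : Pt n => MvPolynomial.eval x p :=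
  (MvPolynomial.continuous_eval p).comp (PiLp.continuous_ofLp 2 _)

lemma differentiable_eval {n : ℕ} (p : MvPolynomial (Fin n) ℂ) :
    Differentiable ℂ fun x : Pt n => MvPolynomial.eval x p := by
  simp only [MvPolynomial.eval_eq']
  fun_prop

lemma exists_radius_of_density {E : Type*} [PseudoMetricSpace E] [MeasurableSpace E] {H : Set E}
    {ν : Measure H} {T : ℝ}
    (hT : ∀ z₀ : H, ∃ r₀ > 0, ∀ r : ℝ, 0 < r → r < r₀ →
      ENNReal.ofReal (r ^ T) ≤ ν (Metric.ball z₀ r))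
    {m : Measure E} (hm : m H ≠ ⊤) {c : ℝ≥0∞} (hc : 0 < c) :
    ∃ k > 0, ∀ S ⊆ H, MeasurableSet S → c ≤ m S → ∃ z : H, (z : E) ∈ S ∧
      ∀ r : ℝ, 0 < r → r < k → ENNReal.ofReal (r ^ T) ≤ ν (Metric.ball z r) := by
  rcases lt_or_ge (m H) c with hHc | hHc
  · exact ⟨1, one_pos, fun S hS _ hcS => absurd (hcS.trans (measure_mono hS)) hHc.not_ge⟩
  set K : ℕ → Set E := fun k => Subtype.val '' {z : H | ∀ r : ℝ, 0 < r → r < 1 / ((k : ℝ) + 1) →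
    ENNReal.ofReal (r ^ T) ≤ ν (Metric.ball z r)}
  have hmono : Monotone K := fun a b hab => Set.image_mono fun z hz r hr hrb =>
    hz r hr (hrb.trans_le (one_div_le_one_div_of_le (by positivity) (by gcongr)))
  have hunion : ⋃ k, K k = H := by
    refine (Set.iUnion_subset fun k => Subtype.coe_image_subset _ _).antisymm fun z hz => ?_
    obtain ⟨r₀, hr₀, hdens⟩ := hT ⟨z, hz⟩
    obtain ⟨k, hk⟩ := exists_nat_one_div_lt hr₀
    exact Set.mem_iUnion.2 ⟨k, ⟨z, hz⟩, fun r hr hrk => hdens r hr (hrk.trans hk), rfl⟩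
  have htend := tendsto_measure_iUnion_atTop (μ := m) hmono
  rw [hunion] at htend
  have hlt : m H - c < m H := ENNReal.sub_lt_self hm (hc.trans_le hHc).ne' hc.ne'
  obtain ⟨k, hk⟩ := (htend.eventually (lt_mem_nhds hlt)).exists
  refine ⟨1 / ((k : ℝ) + 1), by positivity, fun S hS hSmeas hcS => ?_⟩
  by_contra! hfail
  have hsub : K k ⊆ H \ S := by
    rintro _ ⟨z, hz, rfl⟩
    refine ⟨z.2, fun hzS => ?_⟩
    obtain ⟨r, hr, hrk, hlt⟩ := hfail z hzS
    exact hlt.not_ge (hz r hr hrk)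
  have hsmall : m (K k) ≤ m H - m S := by
    rw [← measure_sdiff hS hSmeas.nullMeasurableSet (measure_ne_top_of_subset hS hm)]
    exact measure_mono hsub
  exact hk.not_ge (hsmall.trans (tsub_le_tsub_left hcS _))

lemma half_le_norm_of_le_norm_center {E : Type*} [NormedAddCommGroup E] [NormedSpace ℂ E]
    {f : E → ℂ} {z w : E} {η A B : ℝ} (hf : DifferentiableOn ℂ f (Metric.ball z η)) (hη : 0 < η)
    (hB : ∀ y ∈ Metric.ball z η, ‖f y‖ ≤ B) (hA : A ≤ ‖f z‖) (hB0 : 0 < B)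
    (hw : dist w z < η * (A / (4 * B))) : A / 2 ≤ ‖f w‖ := by
  have hzB := hB z (Metric.mem_ball_self hη)
  have hwη : w ∈ Metric.ball z η := by
    refine Metric.mem_ball.2 (hw.trans_le (mul_le_of_le_one_right hη.le ?_))
    rw [div_le_one (by positivity)]
    linarith
  have hmaps : Set.MapsTo f (Metric.ball z η) (Metric.closedBall (f z) (2 * B)) := fun y hy => by
    rw [mem_closedBall_iff_norm]
    linarith [norm_sub_le (f y) (f z), hB y hy]
  have hschwarz : ‖f w - f z‖ ≤ A / 2 := by
    rw [← dist_eq_norm]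
    calc dist (f w) (f z)
        ≤ 2 * B / η * dist w z := Complex.dist_le_div_mul_dist_of_mapsTo_ball hf hmaps hwη
      _ ≤ 2 * B / η * (η * (A / (4 * B))) := by gcongr
      _ = A / 2 := by field_simp; ring
  have htriangle := norm_sub_norm_le (f z) (f w)
  rw [norm_sub_rev] at htriangle
  linarith

lemma exists_mul_le {D δ : ℝ} (hD : 0 ≤ D) (hδ : 0 < δ) : ∃ t, 0 < t ∧ t ≤ 1 ∧ t * D ≤ δ := by
  refine ⟨min 1 (δ / (D + 1)), lt_min one_pos (by positivity), min_le_left _ _, ?_⟩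
  calc min 1 (δ / (D + 1)) * D ≤ δ / (D + 1) * (D + 1) := by
        gcongr
        · exact min_le_right _ _
        · linarith
    _ = δ := by field_simp

section BernsteinMarkov

variable {n : ℕ} {H : Set (Pt n)} {ν : Measure H}

lemma exists_ball_half_le_norm (hc : IsCompact H) (hconv : Convex ℝ H)
    (hint : (interior H).Nonempty) {T : ℝ}
    (hT : ∀ z₀ : H, ∃ r₀ > 0, ∀ r : ℝ, 0 < r → r < r₀ →
      ENNReal.ofReal (r ^ T) ≤ ν (Metric.ball z₀ r))
    {δ e : ℝ} (hδ : 0 < δ) (he : 0 < e) :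
    ∃ r₀ > 0, ∀ (d : ℕ) (f : Pt n → ℂ), Differentiable ℂ f → LineDegreeLE d f → ∀ z : H,
      (∀ x : H, dist x z < δ → ‖f x‖ ≤ ‖f z‖ * Real.exp (e * d)) →
      ∃ w : H, Metric.ball w (r₀ * Real.exp (-(3 * e * d))) ⊆ Metric.ball z δ ∧
        ENNReal.ofReal ((r₀ * Real.exp (-(3 * e * d))) ^ T) ≤
          ν (Metric.ball w (r₀ * Real.exp (-(3 * e * d)))) ∧
        ∀ x ∈ Metric.ball w (r₀ * Real.exp (-(3 * e * d))),
          Real.exp (-(e * d)) * ‖f z‖ / 2 ≤ ‖f x‖ := by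
  obtain ⟨t, ht, ht1, htδ⟩ := exists_mul_le (D := Metric.diam H) Metric.diam_nonneg
    (by positivity : 0 < δ / 4)
  have hm : (volume : Measure (Pt n)) H ≠ 0 :=
    (Measure.measure_pos_of_nonempty_interior _ hint).ne'
  obtain ⟨c, hc0, hvol⟩ := LineDegreeLE.exists_le_measure volume hc hconv hm he ht ht1
  obtain ⟨k, hk, hdens⟩ := exists_radius_of_density hT (m := volume) hc.measure_lt_top.ne hc0
  obtain ⟨η, hη, hgrowth⟩ := LineDegreeLE.exists_growth hc.isBounded hconv hint he ht ht1
  refine ⟨min (η / 4) (min (k / 2) (δ / 2)), by positivity, fun d f hf hline z hz => ?_⟩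
  set r₀ := min (η / 4) (min (k / 2) (δ / 2))
  set r := r₀ * Real.exp (-(3 * e * d))
  have hr₀ : r ≤ r₀ := mul_le_of_le_one_right (by positivity)
    (Real.exp_le_one_iff.2 (neg_nonpos.2 (by positivity)))
  have hrk : r < k :=
    (hr₀.trans ((min_le_right _ _).trans (min_le_left _ _))).trans_lt (half_lt_self hk)
  have hrδ : r ≤ δ / 2 := hr₀.trans ((min_le_right _ _).trans (min_le_right _ _))
  have hS : MeasurableSet {x ∈ H ∩ Metric.closedBall (z : Pt n) (t * Metric.diam H) |
      Real.exp (-(e * d)) * ‖f z‖ ≤ ‖f x‖} :=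
    ((hc.isClosed.inter Metric.isClosed_closedBall).inter
      (isClosed_le continuous_const hf.continuous.norm)).measurableSet
  obtain ⟨w, ⟨⟨-, hwz⟩, hfw⟩, hνw⟩ := hdens _ (fun x hx => hx.1.1) hS
    (hvol d f hf.continuous hline z z.2)
  replace hwz : dist w z ≤ δ / 4 := hwz.trans htδ
  refine ⟨w, Metric.ball_subset_ball' (by linarith), hνw r (by positivity) hrk, fun x hx => ?_⟩
  rcases (norm_nonneg (f z)).eq_or_lt with hfz | hfz
  · simp [← hfz]
  have hbound : ∀ y ∈ Metric.ball (w : Pt n) η, ‖f y‖ ≤ ‖f z‖ * Real.exp (2 * e * d) := by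
    intro y hy
    obtain ⟨x, ⟨hxH, hxw⟩, hfx⟩ := hgrowth d f hline w w.2 y hy
    replace hxw : dist (⟨x, hxH⟩ : H) w ≤ δ / 4 := hxw.trans htδ
    have hfxz := hfx.trans (hz ⟨x, hxH⟩ (by linarith [dist_triangle (⟨x, hxH⟩ : H) w z]))
    rw [Real.exp_neg, inv_mul_le_iff₀ (Real.exp_pos _), mul_left_comm, ← Real.exp_add] at hfxz
    exact hfxz.trans_eq (by ring_nf)
  refine half_le_norm_of_le_norm_center hf.differentiableOn hη hbound hfw (by positivity)
    (lt_of_lt_of_le hx ?_)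
  calc r ≤ η / 4 * Real.exp (-(3 * e * d)) :=
        mul_le_mul_of_nonneg_right (min_le_left _ _) (Real.exp_pos _).le
    _ = η * (Real.exp (-(e * d)) * ‖f z‖ / (4 * (‖f z‖ * Real.exp (2 * e * d)))) := by
        rw [show -(3 * e * d) = -(e * d) - 2 * e * d by ring, Real.exp_sub]
        field_simp

/-- The weighted absolute value `|p| wᵈ`, where `w = e^{-Q}`, of a polynomial at a point of `H`. -/
def weightedAbs (d : ℕ) (Q : H → ℝ) (p : MvPolynomial (Fin n) ℂ) (x : H) : ℝ :=
  ‖MvPolynomial.eval x.1 p‖ * Real.exp (-(d : ℝ) * Q x)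

lemma weightedAbs_nonneg (d : ℕ) (Q : H → ℝ) (p : MvPolynomial (Fin n) ℂ) (x : H) :
    0 ≤ weightedAbs d Q p x := by
  unfold weightedAbs; positivity

lemma continuous_weightedAbs (d : ℕ) {Q : H → ℝ} (hQ : Continuous Q)
    (p : MvPolynomial (Fin n) ℂ) : Continuous (weightedAbs d Q p) := by
  have hp := (continuous_eval p).comp (continuous_subtype_val (p := (· ∈ H)))
  unfold weightedAbs
  exact hp.norm.mul (by fun_prop)

lemma norm_eval_le_of_weightedAbs_le {d : ℕ} {Q : H → ℝ} {p : MvPolynomial (Fin n) ℂ} {x z : H}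
    (h : weightedAbs d Q p x ≤ weightedAbs d Q p z) {e : ℝ} (hQ : Q x - Q z ≤ e) :
    ‖MvPolynomial.eval x.1 p‖ ≤ ‖MvPolynomial.eval z.1 p‖ * Real.exp (e * d) := by
  calc ‖MvPolynomial.eval x.1 p‖
      = weightedAbs d Q p x * Real.exp (d * Q x) := by
        rw [weightedAbs, mul_assoc, ← Real.exp_add]; simp
    _ ≤ weightedAbs d Q p z * Real.exp (d * Q x) := by gcongr
    _ = ‖MvPolynomial.eval z.1 p‖ * Real.exp ((Q x - Q z) * d) := by
        rw [weightedAbs, mul_assoc, ← Real.exp_add]; ring_nf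
    _ ≤ ‖MvPolynomial.eval z.1 p‖ * Real.exp (e * d) := by gcongr

lemma exists_ball_exp_mul_weightedAbs_le (hc : IsCompact H) (hconv : Convex ℝ H)
    (hint : (interior H).Nonempty) {T : ℝ}
    (hT : ∀ z₀ : H, ∃ r₀ > 0, ∀ r : ℝ, 0 < r → r < r₀ →
      ENNReal.ofReal (r ^ T) ≤ ν (Metric.ball z₀ r))
    {Q : H → ℝ} (hQ : Continuous Q) {e : ℝ} (he : 0 < e) :
    ∃ r₀ > 0, ∀ (d : ℕ) (p : MvPolynomial (Fin n) ℂ), p.totalDegree ≤ d →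
      ∀ z : H, (∀ x, weightedAbs d Q p x ≤ weightedAbs d Q p z) → ∃ w : H,
        ENNReal.ofReal ((r₀ * Real.exp (-(3 * e * d))) ^ T) ≤
          ν (Metric.ball w (r₀ * Real.exp (-(3 * e * d)))) ∧
        ∀ x ∈ Metric.ball w (r₀ * Real.exp (-(3 * e * d))),
          Real.exp (-(2 * e * d)) / 2 * weightedAbs d Q p z ≤ weightedAbs d Q p x := by
  have : CompactSpace H := isCompact_iff_compactSpace.1 hc
  obtain ⟨δ, hδ, hQδ⟩ := Metric.uniformContinuous_iff.1
    (CompactSpace.uniformContinuous_of_continuous hQ) e he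
  obtain ⟨r₀, hr₀, hball⟩ := exists_ball_half_le_norm hc hconv hint hT hδ he
  refine ⟨r₀, hr₀, fun d p hp z hmax => ?_⟩
  have hQz {x : H} (hx : dist x z < δ) : Q x - Q z ≤ e := (le_abs_self _).trans (hQδ hx).le
  obtain ⟨w, hwδ, hνw, hhalf⟩ := hball d _ (differentiable_eval p) (lineDegreeLE_eval hp) z
    fun x hx => norm_eval_le_of_weightedAbs_le (hmax x) (hQz hx)
  refine ⟨w, hνw, fun x hx => ?_⟩
  calc Real.exp (-(2 * e * d)) / 2 * weightedAbs d Q p z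
      = Real.exp (-(e * d)) * ‖MvPolynomial.eval z.1 p‖ / 2 *
          Real.exp (-(e * d) + -d * Q z) := by
        rw [weightedAbs, Real.exp_add, show -(2 * e * d) = -(e * d) + -(e * d) by ring,
          Real.exp_add]
        ring
    _ ≤ weightedAbs d Q p x := by
        refine mul_le_mul (hhalf x hx) (Real.exp_le_exp.2 ?_) (by positivity) (norm_nonneg _)
        nlinarith [hQz (hwδ hx), (Nat.cast_nonneg d : (0 : ℝ) ≤ d)]

/-- A Bernstein–Markov property of `(H, ν)` with respect to all continuous weights: up to a factor
of subexponential growth, the weighted sup-norm of a polynomial on `H` is at most its weighted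
`L²(ν)`-norm. -/
def StrongBernsteinMarkov (H : Set (Pt n)) (ν : Measure H) : Prop :=
  ∀ Q : H → ℝ, Continuous Q → ∀ ε > 0, ∃ C > 0, ∀ (d : ℕ) (p : MvPolynomial (Fin n) ℂ),
    p.totalDegree ≤ d → ∀ z : H,
      weightedAbs d Q p z ^ 2 ≤ C * Real.exp (ε * d) * ∫ x, weightedAbs d Q p x ^ 2 ∂ν

lemma DensityCond.strongBernsteinMarkov [IsFiniteMeasure ν] (hdens : DensityCond H ν)
    (hc : IsCompact H) (hconv : Convex ℝ H) (hint : (interior H).Nonempty) :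
    StrongBernsteinMarkov H ν := by
  intro Q hQ ε hε
  obtain ⟨T, hT0, hT⟩ := hdens
  have : CompactSpace H := isCompact_iff_compactSpace.1 hc
  set e := ε / (4 + 3 * T) with he
  obtain ⟨r₀, hr₀, hball⟩ :=
    exists_ball_exp_mul_weightedAbs_le hc hconv hint hT hQ (by positivity : 0 < e)
  refine ⟨4 / r₀ ^ T, by positivity, fun d p hp z => ?_⟩
  have hcont := continuous_weightedAbs d hQ p
  obtain ⟨zs, -, hzs⟩ := isCompact_univ.exists_isMaxOn ⟨z, Set.mem_univ z⟩ hcont.continuousOn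
  have hmax (x : H) : weightedAbs d Q p x ≤ weightedAbs d Q p zs := hzs (Set.mem_univ x)
  obtain ⟨w, hνw, hlower⟩ := hball d p hp zs hmax
  set r := r₀ * Real.exp (-(3 * e * d)) with hr
  set a := (Real.exp (-(2 * e * d)) / 2 * weightedAbs d Q p zs) ^ 2 with ha
  have hlevel : Metric.ball w r ⊆ {x : H | a ≤ weightedAbs d Q p x ^ 2} := fun x hx =>
    pow_le_pow_left₀ (mul_nonneg (by positivity) (weightedAbs_nonneg ..)) (hlower x hx) 2
  have hmass : r ^ T ≤ ν.real {x : H | a ≤ weightedAbs d Q p x ^ 2} :=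
    (ENNReal.ofReal_le_iff_le_toReal (measure_ne_top _ _)).1 (hνw.trans (measure_mono hlevel))
  have hchebyshev : a * r ^ T ≤ ∫ x, weightedAbs d Q p x ^ 2 ∂ν :=
    (mul_le_mul_of_nonneg_left hmass (by positivity)).trans
      (mul_meas_ge_le_integral_of_nonneg (ae_of_all _ fun x => sq_nonneg _)
        ((hcont.pow 2).integrable_of_hasCompactSupport (HasCompactSupport.of_compactSpace _)) a)
  have hexp : Real.exp (ε * d) * Real.exp (-(2 * e * d)) ^ 2 * Real.exp (-(3 * e * d)) ^ T = 1 := by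
    rw [← Real.exp_mul, ← Real.exp_nat_mul, ← Real.exp_add, ← Real.exp_add, Real.exp_eq_one_iff,
      (by rw [he]; field_simp : ε = e * (4 + 3 * T))]
    push_cast
    ring
  calc weightedAbs d Q p z ^ 2
      ≤ weightedAbs d Q p zs ^ 2 := pow_le_pow_left₀ (weightedAbs_nonneg ..) (hmax z) 2
    _ = weightedAbs d Q p zs ^ 2 * (Real.exp (ε * d) * Real.exp (-(2 * e * d)) ^ 2 *
          Real.exp (-(3 * e * d)) ^ T) := by rw [hexp, mul_one]
    _ = 4 / r₀ ^ T * Real.exp (ε * d) * (a * r ^ T) := by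
        rw [ha, hr, Real.mul_rpow hr₀.le (Real.exp_pos _).le]
        field_simp
        ring
    _ ≤ 4 / r₀ ^ T * Real.exp (ε * d) * ∫ x, weightedAbs d Q p x ^ 2 ∂ν := by gcongr

end BernsteinMarkov

/-! ### Gram determinants -/

section Gram

open Matrix ComplexOrder

lemma det_re_le_exp_trace_re_sub_card {ι : Type*} [Fintype ι] [DecidableEq ι]
    {M : Matrix ι ι ℂ} (hM : M.PosSemidef) :
    M.det.re ≤ Real.exp (M.trace.re - Fintype.card ι) := by
  have hdet : M.det.re = ∏ i, hM.1.eigenvalues i := by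
    rw [hM.1.det_eq_prod_eigenvalues]
    exact_mod_cast Complex.ofReal_re _
  have htrace : M.trace.re = ∑ i, hM.1.eigenvalues i := by
    rw [hM.1.trace_eq_sum_eigenvalues]
    exact_mod_cast Complex.ofReal_re _
  calc M.det.re = ∏ i, hM.1.eigenvalues i := hdet
    _ ≤ ∏ i, Real.exp (hM.1.eigenvalues i - 1) :=
        Finset.prod_le_prod (fun i _ => hM.eigenvalues_nonneg i) fun i _ => by
          linarith [Real.add_one_le_exp (hM.1.eigenvalues i - 1)]
    _ = Real.exp (M.trace.re - Fintype.card ι) := by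
        rw [← Real.exp_sum, Finset.sum_sub_distrib, htrace]
        simp

lemma inv_sqrt_mul_mul_inv_sqrt {z : ℂ} (hz : 0 < z) :
    (((√z.re)⁻¹ : ℝ) : ℂ) * (z * (((√z.re)⁻¹ : ℝ) : ℂ)) = 1 := by
  obtain ⟨hre, him⟩ := Complex.lt_def.1 hz
  have hz' : z = (z.re : ℂ) := Complex.ext rfl him.symm
  have hsqrt : (√z.re)⁻¹ * (z.re * (√z.re)⁻¹) = 1 := by
    have := Real.sqrt_pos.2 hre
    field_simp
    exact (Real.sq_sqrt hre.le).symm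
  rw [hz', Complex.ofReal_re]
  exact_mod_cast hsqrt

lemma exists_lowerTriangular_mul_mul_conjTranspose_eq_one {s : ℕ}
    {G : Matrix (Fin s) (Fin s) ℂ} (hG : G.PosDef) :
    ∃ C : Matrix (Fin s) (Fin s) ℂ, (∀ i j, i < j → C i j = 0) ∧ C * G * Cᴴ = 1 := by
  set L := LDL.lowerInv hG
  have hLDL : diagonal (LDL.diagEntries hG) = L * G * Lᴴ := LDL.diag_eq_lowerInv_conj hG
  have hpos : ∀ i, 0 < LDL.diagEntries hG i := by
    rw [← Matrix.posDef_diagonal_iff, hLDL]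
    exact hG.mul_mul_conjTranspose_same
      (Matrix.vecMul_injective_of_isUnit (isUnit_of_invertible (LDL.lowerInv hG)))
  set D : Matrix (Fin s) (Fin s) ℂ :=
    diagonal fun i => (((√(LDL.diagEntries hG i).re)⁻¹ : ℝ) : ℂ)
  have hD : Dᴴ = D := by
    rw [diagonal_conjTranspose]
    exact congrArg diagonal (funext fun i => Complex.conj_ofReal _)
  refine ⟨D * L, fun i j hij => ?_, ?_⟩
  · rw [diagonal_mul, show L i j = 0 from LDL.lowerInv_triangular hG hij, mul_zero]
  · calc D * L * G * (D * L)ᴴ = D * (L * G * Lᴴ * D) := by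
          rw [conjTranspose_mul, hD]
          simp only [Matrix.mul_assoc]
      _ = 1 := by
          rw [← hLDL, diagonal_mul_diagonal, diagonal_mul_diagonal, ← diagonal_one]
          exact congrArg diagonal (funext fun i => inv_sqrt_mul_mul_inv_sqrt (hpos i))

variable {X : Type*} [MeasurableSpace X] (ν : Measure X) {ι κ : Type*} {e : ι → X → ℂ} {ρ : X → ℝ}

/-- The Gram matrix of the family of functions `e` in `L²(ρ ν)`. -/
def gramMatrix (e : ι → X → ℂ) (ρ : X → ℝ) : Matrix ι ι ℂ :=
  Matrix.of fun i k => ∫ x, e i x * starRingEnd ℂ (e k x) * ρ x ∂ν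

lemma gramMatrix_isHermitian : (gramMatrix ν e ρ).IsHermitian := by
  ext i j
  simp only [gramMatrix, conjTranspose_apply, of_apply, Complex.star_def]
  rw [← integral_conj]
  congr 1 with x
  simp only [map_mul, Complex.conj_conj, Complex.conj_ofReal]
  ring

lemma gramMatrix_apply_self (i : ι) :
    gramMatrix ν e ρ i i = ((∫ x, ‖e i x‖ ^ 2 * ρ x ∂ν : ℝ) : ℂ) := by
  rw [← integral_complex_ofReal]
  simp only [gramMatrix, of_apply, Complex.mul_conj', Complex.ofReal_mul, Complex.ofReal_pow]

/-- The integral of `|det (eᵢ(xⱼ))|²` against the product of the measures `ρ(xⱼ) dν(xⱼ)`. -/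
def detIntegral [Fintype ι] [DecidableEq ι] (e : ι → X → ℂ) (ρ : X → ℝ) : ℝ :=
  ∫ x : ι → X, ‖(Matrix.of fun i j => e i (x j)).det‖ ^ 2 * ∏ j, ρ (x j)
    ∂(Measure.pi fun _ => ν)

lemma normSq_det_mul_prod {X ι : Type*} [Fintype ι] [DecidableEq ι] (e : ι → X → ℂ) (ρ : X → ℝ)
    (x : ι → X) :
    ((‖(Matrix.of fun i j => e i (x j)).det‖ ^ 2 * ∏ j, ρ (x j) : ℝ) : ℂ) =
      ∑ τ : Equiv.Perm ι, ∑ σ : Equiv.Perm ι, ((τ.sign : ℤ) : ℂ) * (((σ.sign : ℤ) : ℂ) *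
        ∏ j, (e (σ j) (x j) * starRingEnd ℂ (e (τ j) (x j)) * ρ (x j))) := by
  push_cast
  rw [← Complex.mul_conj', det_apply', map_sum, mul_comm (Finset.sum _ _), Finset.sum_mul_sum,
    Finset.sum_mul]
  refine Finset.sum_congr rfl fun τ _ => ?_
  rw [Finset.sum_mul]
  refine Finset.sum_congr rfl fun σ _ => ?_
  simp only [map_mul, map_prod, Finset.prod_mul_distrib, of_apply, map_intCast]
  ring

lemma sum_sign_mul_integral_eq_det_gramMatrix [SigmaFinite ν] [Fintype ι] [DecidableEq ι]
    (τ : Equiv.Perm ι) :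
    ∑ σ : Equiv.Perm ι, ((τ.sign : ℤ) : ℂ) * (((σ.sign : ℤ) : ℂ) * ∫ x : ι → X,
        ∏ j, (e (σ j) (x j) * starRingEnd ℂ (e (τ j) (x j)) * ρ (x j))
          ∂(Measure.pi fun _ => ν)) =
      (gramMatrix ν e ρ).det := by
  have hprod (σ : Equiv.Perm ι) : ∫ x : ι → X,
      ∏ j, (e (σ j) (x j) * starRingEnd ℂ (e (τ j) (x j)) * ρ (x j)) ∂(Measure.pi fun _ => ν) =
        ∏ j, (gramMatrix ν e ρ).submatrix id τ (σ j) j :=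
    integral_fintype_prod_eq_prod
      (f := fun j x => e (σ j) x * starRingEnd ℂ (e (τ j) x) * (ρ x : ℂ))
  have hsign : (τ.sign : ℤ) * (τ.sign : ℤ) = 1 := by
    rw [← Units.val_mul, Int.units_mul_self, Units.val_one]
  simp_rw [hprod]
  rw [← Finset.mul_sum, ← det_apply', det_permute', ← mul_assoc, ← Int.cast_mul, hsign,
    Int.cast_one, one_mul]

lemma detIntegral_linearCombination [Fintype ι] [DecidableEq ι] (C : Matrix ι ι ℂ) :
    detIntegral ν (fun i x => ∑ k, C i k * e k x) ρ = ‖C.det‖ ^ 2 * detIntegral ν e ρ := by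
  have hdet (x : ι → X) : (Matrix.of fun i j => ∑ k, C i k * e k (x j)).det =
      C.det * (Matrix.of fun i j => e i (x j)).det := by
    rw [← det_mul]
    rfl
  simp only [detIntegral, hdet, norm_mul, mul_pow, mul_assoc, integral_const_mul]

variable [TopologicalSpace X] [CompactSpace X] [BorelSpace X] [IsFiniteMeasure ν]

lemma integrable_of_continuous {F : Type*} [NormedAddCommGroup F] {f : X → F}
    (hf : Continuous f) : Integrable f ν :=
  hf.integrable_of_hasCompactSupport (HasCompactSupport.of_compactSpace f)

lemma integrable_mul_conj_mul (he : ∀ i, Continuous (e i)) (hρ : Continuous ρ)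
    (i k : ι) : Integrable (fun x => e i x * starRingEnd ℂ (e k x) * (ρ x : ℂ)) ν :=
  integrable_of_continuous ν (((he i).mul (Complex.continuous_conj.comp (he k))).mul
    (Complex.continuous_ofReal.comp hρ))

variable [Fintype ι]

lemma gramMatrix_linearCombination (he : ∀ i, Continuous (e i)) (hρ : Continuous ρ)
    (C : Matrix κ ι ℂ) :
    gramMatrix ν (fun i x => ∑ k, C i k * e k x) ρ = C * gramMatrix ν e ρ * Cᴴ := by
  ext i j
  have hexpand (x : X) :
      (∑ k, C i k * e k x) * starRingEnd ℂ (∑ l, C j l * e l x) * (ρ x : ℂ) =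
        ∑ l, ∑ k, C i k * (e k x * starRingEnd ℂ (e l x) * (ρ x : ℂ)) * star (C j l) := by
    simp only [map_sum, map_mul, Finset.sum_mul, Finset.mul_sum, Complex.star_def]
    exact Finset.sum_congr rfl fun l _ => Finset.sum_congr rfl fun k _ => by ring
  have hint (l k : ι) : Integrable
      (fun x => C i k * (e k x * starRingEnd ℂ (e l x) * (ρ x : ℂ)) * star (C j l)) ν :=
    ((integrable_mul_conj_mul ν he hρ k l).const_mul _).mul_const _
  simp only [gramMatrix, mul_apply, conjTranspose_apply, of_apply, hexpand]
  simp only [Finset.sum_mul]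
  rw [integral_finsetSum _ fun l _ => integrable_finsetSum _ fun k _ => hint l k]
  simp only [integral_finsetSum _ fun k _ => hint _ k, integral_mul_const, integral_const_mul]

lemma star_dotProduct_gramMatrix_mulVec (he : ∀ i, Continuous (e i)) (hρ : Continuous ρ)
    (y : ι → ℂ) :
    star y ⬝ᵥ gramMatrix ν e ρ *ᵥ y =
      ((∫ x, ‖∑ k, star (y k) * e k x‖ ^ 2 * ρ x ∂ν : ℝ) : ℂ) := by
  have h := gramMatrix_linearCombination ν he hρ (replicateRow Unit (star y))
  have h' := congrFun₂ h () ()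
  rw [gramMatrix_apply_self] at h'
  simp only [replicateRow_apply, Pi.star_apply] at h'
  rw [h', Matrix.mul_assoc]
  simp [Matrix.mul_apply, dotProduct, mulVec]

lemma gramMatrix_posSemidef {ι : Type*} [Finite ι] {e : ι → X → ℂ} (he : ∀ i, Continuous (e i))
    (hρ : Continuous ρ) (hρ0 : ∀ x, 0 ≤ ρ x) : (gramMatrix ν e ρ).PosSemidef := by
  have := Fintype.ofFinite ι
  refine .of_dotProduct_mulVec_nonneg (gramMatrix_isHermitian ν) fun y => ?_
  rw [star_dotProduct_gramMatrix_mulVec ν he hρ, Complex.zero_le_real]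
  exact integral_nonneg fun x => mul_nonneg (by positivity) (hρ0 x)

lemma gramMatrix_posDef (he : ∀ i, Continuous (e i)) (hρ : Continuous ρ)
    (hpos : ∀ y : ι → ℂ, y ≠ 0 → 0 < ∫ x, ‖∑ k, y k * e k x‖ ^ 2 * ρ x ∂ν) :
    (gramMatrix ν e ρ).PosDef := by
  refine .of_dotProduct_mulVec_pos (gramMatrix_isHermitian ν) fun y hy => ?_
  rw [star_dotProduct_gramMatrix_mulVec ν he hρ, Complex.zero_lt_real]
  exact hpos (star y) (by simpa using hy)

lemma trace_gramMatrix (he : ∀ i, Continuous (e i)) (hρ : Continuous ρ) :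
    (gramMatrix ν e ρ).trace = ((∫ x, ∑ i, ‖e i x‖ ^ 2 * ρ x ∂ν : ℝ) : ℂ) := by
  have hint (i : ι) : Integrable (fun x => ‖e i x‖ ^ 2 * ρ x) ν :=
    integrable_of_continuous ν (((he i).norm.pow 2).mul hρ)
  rw [integral_finsetSum _ fun i _ => hint i, Complex.ofReal_sum]
  exact Finset.sum_congr rfl fun i _ => gramMatrix_apply_self ν i

variable [DecidableEq ι]

/-- Andréief's identity. -/
lemma detIntegral_eq (he : ∀ i, Continuous (e i)) (hρ : Continuous ρ) :
    (detIntegral ν e ρ : ℂ) = (Fintype.card ι).factorial * (gramMatrix ν e ρ).det := by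
  have hint (τ σ : Equiv.Perm ι) : Integrable (fun x : ι → X => ((τ.sign : ℤ) : ℂ) *
      (((σ.sign : ℤ) : ℂ) * ∏ j, (e (σ j) (x j) * starRingEnd ℂ (e (τ j) (x j)) * (ρ (x j) : ℂ))))
      (Measure.pi fun _ => ν) :=
    ((Integrable.fintype_prod fun j =>
      integrable_mul_conj_mul ν he hρ (σ j) (τ j)).const_mul _).const_mul _
  rw [detIntegral, ← integral_complex_ofReal]
  simp_rw [normSq_det_mul_prod]
  rw [integral_finsetSum _ fun τ _ => integrable_finsetSum _ fun σ _ => hint τ σ]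
  simp_rw [integral_finsetSum _ fun σ _ => hint _ σ, integral_const_mul,
    sum_sign_mul_integral_eq_det_gramMatrix]
  simp [Fintype.card_perm]

lemma detIntegral_eq_re (he : ∀ i, Continuous (e i)) (hρ : Continuous ρ) :
    detIntegral ν e ρ = (Fintype.card ι).factorial * (gramMatrix ν e ρ).det.re := by
  rw [← Complex.ofReal_re (detIntegral ν e ρ), detIntegral_eq ν he hρ, ← Complex.ofReal_natCast,
    Complex.re_ofReal_mul]

lemma detIntegral_pos (he : ∀ i, Continuous (e i)) (hρ : Continuous ρ)
    (hG : (gramMatrix ν e ρ).PosDef) : 0 < detIntegral ν e ρ := by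
  rw [detIntegral_eq_re ν he hρ]
  exact mul_pos (by positivity) (Complex.lt_def.1 hG.det_pos).1

lemma detIntegral_le_of_gramMatrix_eq_one (he : ∀ i, Continuous (e i)) (hρ : Continuous ρ)
    (h1 : gramMatrix ν e ρ = 1) {ρ' : X → ℝ} (hρ' : Continuous ρ') (hρ'0 : ∀ x, 0 ≤ ρ' x) :
    detIntegral ν e ρ' ≤ detIntegral ν e ρ *
      Real.exp ((∫ x, ∑ i, ‖e i x‖ ^ 2 * ρ' x ∂ν) - Fintype.card ι) := by
  have hle := det_re_le_exp_trace_re_sub_card (gramMatrix_posSemidef ν he hρ' hρ'0)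
  rw [trace_gramMatrix ν he hρ', Complex.ofReal_re] at hle
  rw [detIntegral_eq_re ν he hρ', detIntegral_eq_re ν he hρ, h1, det_one, Complex.one_re, mul_one]
  gcongr

/-- Here `B` is the Christoffel (Bergman) function of the span of `e` in `L²(ρ ν)`. -/
lemma exists_detIntegral_mul_exp_le {s : ℕ} {e : Fin s → X → ℂ} (he : ∀ i, Continuous (e i))
    (hρ : Continuous ρ) (hρ0 : ∀ x, 0 ≤ ρ x) (hG : (gramMatrix ν e ρ).PosDef) :
    ∃ B : X → ℝ, Continuous B ∧ (∀ x, 0 ≤ B x) ∧ ∫ x, B x ∂ν = s ∧ ∀ v : X → ℝ, Continuous v →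
      detIntegral ν e (fun x => ρ x * Real.exp (v x)) ≤
        detIntegral ν e ρ * Real.exp (∫ x, (Real.exp (v x) - 1) * B x ∂ν) := by
  obtain ⟨C, -, hC⟩ := exists_lowerTriangular_mul_mul_conjTranspose_eq_one hG
  set φ : Fin s → X → ℂ := fun i x => ∑ k, C i k * e k x
  have hφ (i : Fin s) : Continuous (φ i) := by fun_prop
  have hφ1 : gramMatrix ν φ ρ = 1 := by rw [gramMatrix_linearCombination ν he hρ, hC]
  have hC0 : 0 < ‖C.det‖ ^ 2 := by
    refine pow_pos (norm_pos_iff.2 fun h => ?_) 2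
    simpa [h] using congrArg det hC
  have hB : Continuous fun x => ∑ i, ‖φ i x‖ ^ 2 * ρ x := by fun_prop
  have hBs : ∫ x, ∑ i, ‖φ i x‖ ^ 2 * ρ x ∂ν = s := by
    have htrace := trace_gramMatrix ν hφ hρ
    rw [hφ1, trace_one, Fintype.card_fin] at htrace
    exact_mod_cast htrace.symm
  refine ⟨_, hB, fun x => Finset.sum_nonneg fun i _ => mul_nonneg (by positivity) (hρ0 x), hBs,
    fun v hv => le_of_mul_le_mul_left ?_ hC0⟩
  have hintegral : ∫ x, (Real.exp (v x) - 1) * ∑ i, ‖φ i x‖ ^ 2 * ρ x ∂ν =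
      (∫ x, ∑ i, ‖φ i x‖ ^ 2 * (ρ x * Real.exp (v x)) ∂ν) - s := by
    rw [← hBs, ← integral_sub (integrable_of_continuous ν (by fun_prop))
      (integrable_of_continuous ν hB)]
    congr 1 with x
    rw [sub_mul, one_mul, Finset.mul_sum]
    congr 2 with i
    ring
  rw [← mul_assoc, ← detIntegral_linearCombination, ← detIntegral_linearCombination, hintegral]
  simpa using detIntegral_le_of_gramMatrix_eq_one ν hφ hρ hφ1 (by fun_prop)
    fun x => mul_nonneg (hρ0 x) (Real.exp_pos (v x)).le

end Gram

/-! ### Weighted Vandermonde determinants -/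

section MonicPolynomials

variable {n d : ℕ}

/-- A multi-index as the exponent of a monomial of `MvPolynomial (Fin n) ℂ`. -/
def exponent (α : Fin n → ℕ) : Fin n →₀ ℕ := Finsupp.equivFunOnFinite.symm α

lemma exponent_injective : Function.Injective (exponent (n := n)) :=
  Finsupp.equivFunOnFinite.symm.injective

lemma degree_exponent (α : Fin n → ℕ) : (exponent α).degree = ∑ i, α i :=
  Finsupp.degree_eq_sum (exponent α)

lemma eval_monomial_exponent (α : Fin n → ℕ) (c : ℂ) (x : Pt n) :
    MvPolynomial.eval x.1 (MvPolynomial.monomial (exponent α) c) = c * ∏ k, x k ^ α k := by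
  rw [MvPolynomial.eval_monomial, Finsupp.prod_fintype _ _ fun _ => pow_zero _]
  rfl

/-- `p = z^α + (terms below α)` for the degree-lexicographic order. -/
def MonicAt (α : Fin n → ℕ) (p : MvPolynomial (Fin n) ℂ) : Prop :=
  MonomialOrder.degLex.degree p = exponent α ∧ MonomialOrder.degLex.Monic p

lemma monicAt_monomial (α : Fin n → ℕ) :
    MonicAt α (MvPolynomial.monomial (exponent α) 1) := by
  classical
  refine ⟨?_, MonomialOrder.monic_monomial_one⟩
  rw [MonomialOrder.degree_monomial, if_neg one_ne_zero]

lemma MonicAt.mul {α β : Fin n → ℕ} {p q : MvPolynomial (Fin n) ℂ} (hp : MonicAt α p)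
    (hq : MonicAt β q) : MonicAt (α + β) (p * q) := by
  refine ⟨?_, hp.2.mul hq.2⟩
  rw [MonomialOrder.degree_mul hp.2.ne_zero hq.2.ne_zero, hp.1, hq.1]
  exact Finsupp.ext fun _ => rfl

lemma MonicAt.pow {α : Fin n → ℕ} {p : MvPolynomial (Fin n) ℂ} (hp : MonicAt α p) (m : ℕ) :
    MonicAt (m • α) (p ^ m) := by
  refine ⟨?_, hp.2.pow⟩
  rw [MonomialOrder.degree_pow, hp.1]
  exact Finsupp.ext fun _ => rfl

lemma monicAt_of_coeff {α : Fin n → ℕ} {p : MvPolynomial (Fin n) ℂ}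
    (h1 : p.coeff (exponent α) = 1)
    (hle : ∀ m ∈ p.support,
      MonomialOrder.degLex.toSyn m ≤ MonomialOrder.degLex.toSyn (exponent α)) :
    MonicAt α p := by
  have hdeg : MonomialOrder.degLex.degree p = exponent α :=
    MonomialOrder.degLex.toSyn.injective <| le_antisymm (MonomialOrder.degree_le_iff.2 hle)
      (MonomialOrder.le_degree (by rw [MvPolynomial.mem_support_iff, h1]; exact one_ne_zero))
  refine ⟨hdeg, ?_⟩
  rw [MonomialOrder.Monic, MonomialOrder.leadingCoeff, hdeg, h1]

lemma MonicAt.totalDegree_le {α : Fin n → ℕ} {p : MvPolynomial (Fin n) ℂ} (hp : MonicAt α p) :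
    p.totalDegree ≤ ∑ i, α i := by
  rw [MvPolynomial.totalDegree]
  refine Finset.sup_le fun m hm => ?_
  have h : m.degree ≤ (MonomialOrder.degLex.degree p).degree := Finsupp.DegLex.monotone_degree
    (MonomialOrder.degLex_le_iff.1 (MonomialOrder.le_degree hm))
  rwa [hp.1, degree_exponent] at h

/-- The enumeration lists the multi-indices in increasing degree-lexicographic order. -/
def DegLexSorted (E : Fin (sdim n d) → Fin n → ℕ) : Prop :=
  StrictMono fun i => MonomialOrder.degLex.toSyn (exponent (E i))

variable {E : Fin (sdim n d) → Fin n → ℕ}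

lemma IsEnum.sum_le (hE : IsEnum n d E) (i : Fin (sdim n d)) : ∑ l, E i l ≤ d :=
  (hE.2 _).2 ⟨i, rfl⟩

lemma IsEnum.exists_perm_degLexSorted (hE : IsEnum n d E) :
    ∃ σ : Equiv.Perm (Fin (sdim n d)), IsEnum n d (E ∘ σ) ∧ DegLexSorted (E ∘ σ) := by
  set f := fun i => MonomialOrder.degLex.toSyn (exponent (E i))
  have hf : Function.Injective f :=
    MonomialOrder.degLex.toSyn.injective.comp (exponent_injective.comp hE.1)
  refine ⟨Tuple.sort f, ⟨hE.1.comp (Equiv.injective _), fun α => ?_⟩,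
    (Tuple.monotone_sort f).strictMono_of_injective (hf.comp (Equiv.injective _))⟩
  rw [hE.2 α, (Equiv.surjective _).range_comp]

lemma norm_VDM_comp_perm (E : Fin (sdim n d) → Fin n → ℕ) (σ : Equiv.Perm (Fin (sdim n d)))
    (a : Fin (sdim n d) → Pt n) : ‖VDM n d (E ∘ σ) a‖ = ‖VDM n d E a‖ := by
  have h : VDM n d (E ∘ σ) a = σ.sign * VDM n d E a :=
    Matrix.det_permute σ (Matrix.of fun i j => ∏ k, a j k ^ E i k)
  rw [h, norm_mul]
  rcases Int.units_eq_one_or σ.sign with hσ | hσ <;> simp [hσ]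

/-- The polynomial with coefficients `y` along the enumeration `E`. -/
def polyOfCoeff (E : Fin (sdim n d) → Fin n → ℕ) (y : Fin (sdim n d) → ℂ) :
    MvPolynomial (Fin n) ℂ :=
  ∑ k, MvPolynomial.monomial (exponent (E k)) (y k)

lemma eval_polyOfCoeff (E : Fin (sdim n d) → Fin n → ℕ) (y : Fin (sdim n d) → ℂ) (x : Pt n) :
    MvPolynomial.eval x.1 (polyOfCoeff E y) = ∑ k, y k * ∏ l, x l ^ E k l := by
  simp only [polyOfCoeff, map_sum, eval_monomial_exponent]

lemma IsEnum.totalDegree_polyOfCoeff_le (hE : IsEnum n d E) (y : Fin (sdim n d) → ℂ) :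
    (polyOfCoeff E y).totalDegree ≤ d :=
  MvPolynomial.totalDegree_finsetSum_le fun k _ =>
    (MvPolynomial.totalDegree_monomial_le _ _).trans
      ((degree_exponent (E k)).trans_le (hE.sum_le k))

lemma IsEnum.coeff_polyOfCoeff (hE : IsEnum n d E) (y : Fin (sdim n d) → ℂ)
    (k : Fin (sdim n d)) : (polyOfCoeff E y).coeff (exponent (E k)) = y k := by
  classical
  have hinj (i : Fin (sdim n d)) : exponent (E i) = exponent (E k) ↔ i = k :=
    (exponent_injective.comp hE.1).eq_iff
  simp only [polyOfCoeff, MvPolynomial.coeff_sum, MvPolynomial.coeff_monomial, hinj,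
    Finset.sum_ite_eq', Finset.mem_univ, if_true]

lemma IsEnum.polyOfCoeff_coeff (hE : IsEnum n d E) {p : MvPolynomial (Fin n) ℂ}
    (hp : p.totalDegree ≤ d) : polyOfCoeff E (fun k => p.coeff (exponent (E k))) = p := by
  classical
  ext m
  by_cases hm : ∃ k, exponent (E k) = m
  · obtain ⟨k, rfl⟩ := hm
    rw [hE.coeff_polyOfCoeff]
  · rw [polyOfCoeff, MvPolynomial.coeff_sum, Finset.sum_eq_zero fun k _ => ?_]
    · refine (MvPolynomial.notMem_support_iff.1 fun hmem => hm ?_).symm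
      obtain ⟨k, hk⟩ := (hE.2 m).1 <| (Finsupp.degree_eq_sum m).symm.trans_le
        ((MvPolynomial.le_totalDegree hmem).trans hp)
      exact ⟨k, by rw [hk]; exact Finsupp.ext fun _ => rfl⟩
    · rw [MvPolynomial.coeff_monomial, if_neg fun h => hm ⟨k, h⟩]

lemma IsEnum.monicAt_polyOfCoeff (hE : IsEnum n d E) (hs : DegLexSorted E)
    {y : Fin (sdim n d) → ℂ} {i : Fin (sdim n d)} (hi : y i = 1) (hy : ∀ k, i < k → y k = 0) :
    MonicAt (E i) (polyOfCoeff E y) := by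
  classical
  refine monicAt_of_coeff (by rw [hE.coeff_polyOfCoeff, hi]) fun m hm => ?_
  obtain ⟨k, -, hk⟩ := Finset.mem_biUnion.1 (MvPolynomial.support_sum hm)
  rw [MvPolynomial.support_monomial] at hk
  split_ifs at hk with hk0
  · simp at hk
  · rw [Finset.mem_singleton.1 hk]
    exact hs.monotone (not_lt.1 fun hik => hk0 (hy k hik))

lemma IsEnum.VDM_eq_det_eval (hE : IsEnum n d E) (hs : DegLexSorted E)
    {p : Fin (sdim n d) → MvPolynomial (Fin n) ℂ} (hp : ∀ i, MonicAt (E i) (p i))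
    (a : Fin (sdim n d) → Pt n) :
    VDM n d E a = (Matrix.of fun i j => MvPolynomial.eval (a j).1 (p i)).det := by
  set C : Matrix (Fin (sdim n d)) (Fin (sdim n d)) ℂ :=
    Matrix.of fun i k => (p i).coeff (exponent (E k))
  have hmul : (Matrix.of fun i j => MvPolynomial.eval (a j).1 (p i)) =
      C * Matrix.of fun i j => ∏ k, a j k ^ E i k := by
    ext i j
    rw [Matrix.of_apply, ← hE.polyOfCoeff_coeff ((hp i).totalDegree_le.trans (hE.sum_le i)),
      eval_polyOfCoeff, Matrix.mul_apply]
    rfl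
  have hdiag (i : Fin (sdim n d)) : C i i = 1 := by
    have h := (hp i).2.coeff_degree
    rwa [(hp i).1] at h
  have hlower : C.IsLowerTriangular := fun i j hij => by
    apply MonomialOrder.coeff_eq_zero_of_lt (m := MonomialOrder.degLex)
    rw [(hp i).1]
    exact hs hij
  rw [hmul, Matrix.det_mul, Matrix.det_of_isLowerTriangular C hlower,
    Finset.prod_eq_one fun i _ => hdiag i, one_mul, VDM]

end MonicPolynomials

section WeightedVandermonde

variable {n : ℕ} {H : Set (Pt n)} {d : ℕ} {E : Fin (sdim n d) → Fin n → ℕ} {Q : H → ℝ}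

/-- The real number `|VDM_d^Q(a)|`, of which `absVDMQ` is the extended nonnegative version. -/
def weightedVDM (d : ℕ) (E : Fin (sdim n d) → Fin n → ℕ) (Q : H → ℝ) (a : Fin (sdim n d) → H) :
    ℝ :=
  ‖VDM n d E fun j => (a j : Pt n)‖ * ∏ j, Real.exp (-(d : ℝ) * Q (a j))

lemma weightedVDM_nonneg (a : Fin (sdim n d) → H) : 0 ≤ weightedVDM d E Q a := by
  unfold weightedVDM
  positivity

lemma continuous_weightedVDM (d : ℕ) (E : Fin (sdim n d) → Fin n → ℕ) (hQ : Continuous Q) :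
    Continuous (weightedVDM d E Q) := by
  unfold weightedVDM VDM
  refine Continuous.mul (Continuous.norm (Continuous.matrix_det ?_)) (by fun_prop)
  refine continuous_matrix fun i j => ?_
  simp only [Matrix.of_apply]
  fun_prop

/-- The partition function `∫ |VDM_d^Q|² dν^{⊗s}`. -/
def partitionFunction (ν : Measure H) (d : ℕ) (E : Fin (sdim n d) → Fin n → ℕ) (Q : H → ℝ) : ℝ :=
  ∫ a, weightedVDM d E Q a ^ 2 ∂(Measure.pi fun _ => ν)

/-- The monomials listed by `E`, as functions on `H`. -/
def monomialFun (H : Set (Pt n)) (E : Fin (sdim n d) → Fin n → ℕ) (i : Fin (sdim n d)) (x : H) :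
    ℂ :=
  ∏ k, (x : Pt n) k ^ E i k

/-- The weight `w^{2d} = e^{-2dQ}`. -/
def sqWeight (d : ℕ) (Q : H → ℝ) (x : H) : ℝ := Real.exp (-(d : ℝ) * Q x) ^ 2

lemma continuous_monomialFun (E : Fin (sdim n d) → Fin n → ℕ) (i : Fin (sdim n d)) :
    Continuous (monomialFun H E i) := by
  unfold monomialFun
  fun_prop

lemma continuous_sqWeight (d : ℕ) (hQ : Continuous Q) : Continuous (sqWeight d Q) := by
  unfold sqWeight
  fun_prop

lemma partitionFunction_eq_detIntegral (ν : Measure H) (d : ℕ)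
    (E : Fin (sdim n d) → Fin n → ℕ) (Q : H → ℝ) :
    partitionFunction ν d E Q = detIntegral ν (monomialFun H E) (sqWeight d Q) := by
  simp only [partitionFunction, weightedVDM, mul_pow, ← Finset.prod_pow]
  rfl

lemma partitionFunction_comp_perm (ν : Measure H) (d : ℕ) (E : Fin (sdim n d) → Fin n → ℕ)
    (Q : H → ℝ) (σ : Equiv.Perm (Fin (sdim n d))) :
    partitionFunction ν d (E ∘ σ) Q = partitionFunction ν d E Q := by
  simp only [partitionFunction, weightedVDM, norm_VDM_comp_perm]

lemma weightedAbs_polyOfCoeff_sq (y : Fin (sdim n d) → ℂ) (x : H) :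
    weightedAbs d Q (polyOfCoeff E y) x ^ 2 =
      ‖∑ k, y k * monomialFun H E k x‖ ^ 2 * sqWeight d Q x := by
  rw [weightedAbs, eval_polyOfCoeff, mul_pow]
  rfl

end WeightedVandermonde

section ChebyshevBound

open scoped ComplexOrder

variable {n : ℕ} {H : Set (Pt n)} {d : ℕ} {E : Fin (sdim n d) → Fin n → ℕ} {Q : H → ℝ}
  {h : (Fin n → ℕ) → ℝ}

/-- The numbers `h α` bound the logarithms of the weighted Chebyshev constants of degree `d`: for
each `α` with `|α| ≤ d`, some `p = z^α + (lower terms)` satisfies `|p| w^d ≤ e^{h α}` on `H`. -/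
def ChebyshevBound (d : ℕ) (Q : H → ℝ) (h : (Fin n → ℕ) → ℝ) : Prop :=
  ∀ α : Fin n → ℕ, ∑ l, α l ≤ d → ∃ p, MonicAt α p ∧ ∀ x, weightedAbs d Q p x ≤ Real.exp (h α)

lemma norm_det_le_factorial_mul_prod {ι R : Type*} [Fintype ι] [DecidableEq ι] [NormedField R]
    {A : Matrix ι ι R} {M : ι → ℝ} (hM : ∀ i j, ‖A i j‖ ≤ M i) :
    ‖A.det‖ ≤ (Fintype.card ι).factorial * ∏ i, M i := by
  have hterm (σ : Equiv.Perm ι) : ‖((σ.sign : ℤ) : R) * ∏ i, A (σ i) i‖ ≤ ∏ i, M i := by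
    have hsign : ‖((σ.sign : ℤ) : R)‖ = 1 := by
      rcases Int.units_eq_one_or σ.sign with hσ | hσ <;> simp [hσ]
    rw [norm_mul, hsign, one_mul, norm_prod, ← Equiv.prod_comp σ M]
    exact Finset.prod_le_prod (fun i _ => norm_nonneg _) fun i _ => hM _ _
  calc ‖A.det‖ ≤ ∑ σ : Equiv.Perm ι, ‖((σ.sign : ℤ) : R) * ∏ i, A (σ i) i‖ := by
        rw [Matrix.det_apply']
        exact norm_sum_le _ _
    _ ≤ ∑ _σ : Equiv.Perm ι, ∏ i, M i := Finset.sum_le_sum fun σ _ => hterm σ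
    _ = (Fintype.card ι).factorial * ∏ i, M i := by
        rw [Finset.sum_const, Finset.card_univ, Fintype.card_perm, nsmul_eq_mul]

lemma weightedVDM_eq_norm_det (hE : IsEnum n d E) (hs : DegLexSorted E)
    {p : Fin (sdim n d) → MvPolynomial (Fin n) ℂ} (hp : ∀ i, MonicAt (E i) (p i))
    (a : Fin (sdim n d) → H) :
    weightedVDM d E Q a = ‖(Matrix.of fun i j => ((Real.exp (-(d : ℝ) * Q (a j)) : ℝ) : ℂ) *
      MvPolynomial.eval (a j).1 (p i)).det‖ := by
  have hdet := Matrix.det_mul_row (fun j => ((Real.exp (-(d : ℝ) * Q (a j)) : ℝ) : ℂ))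
    (Matrix.of fun i j => MvPolynomial.eval (a j).1 (p i))
  simp only [Matrix.of_apply] at hdet
  rw [hdet, ← hE.VDM_eq_det_eval hs hp, norm_mul, norm_prod, mul_comm]
  simp only [Complex.norm_real, Real.norm_of_nonneg (Real.exp_pos _).le]
  rfl

lemma weightedVDM_le (hE : IsEnum n d E) (hh : ChebyshevBound d Q h) (a : Fin (sdim n d) → H) :
    weightedVDM d E Q a ≤ (sdim n d).factorial * Real.exp (∑ i, h (E i)) := by
  obtain ⟨σ, hσ, hs⟩ := hE.exists_perm_degLexSorted
  choose p hp hpQ using fun i => hh ((E ∘ σ) i) (hσ.sum_le i)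
  have hentry (i j : Fin (sdim n d)) :
      ‖((Real.exp (-(d : ℝ) * Q (a j)) : ℝ) : ℂ) * MvPolynomial.eval (a j).1 (p i)‖ ≤
        Real.exp (h (E (σ i))) := by
    rw [norm_mul, Complex.norm_real, Real.norm_of_nonneg (Real.exp_pos _).le, mul_comm]
    exact hpQ i (a j)
  calc weightedVDM d E Q a = weightedVDM d (E ∘ σ) Q a := by
        simp only [weightedVDM, norm_VDM_comp_perm]
    _ = ‖(Matrix.of fun i j => ((Real.exp (-(d : ℝ) * Q (a j)) : ℝ) : ℂ) *
          MvPolynomial.eval (a j).1 (p i)).det‖ := weightedVDM_eq_norm_det hσ hs hp a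
    _ ≤ (Fintype.card (Fin (sdim n d))).factorial * ∏ i, Real.exp (h (E (σ i))) :=
        norm_det_le_factorial_mul_prod hentry
    _ = (sdim n d).factorial * Real.exp (∑ i, h (E i)) := by
        rw [Fintype.card_fin, Equiv.prod_comp σ fun i => Real.exp (h (E i)), Real.exp_sum]

variable {ν : Measure H}

/-- No nonzero polynomial vanishes identically on `H`. -/
def ZariskiDense (H : Set (Pt n)) : Prop :=
  ∀ p : MvPolynomial (Fin n) ℂ, p ≠ 0 → ∃ x ∈ H, MvPolynomial.eval x.1 p ≠ 0

variable [CompactSpace H] [IsFiniteMeasure ν]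

lemma StrongBernsteinMarkov.gramMatrix_posDef (hBM : StrongBernsteinMarkov H ν)
    (hH : ZariskiDense H) (hQ : Continuous Q) (hE : IsEnum n d E) :
    (gramMatrix ν (monomialFun H E) (sqWeight d Q)).PosDef := by
  refine _root_.gramMatrix_posDef ν (continuous_monomialFun E) (continuous_sqWeight d hQ)
    fun y hy => ?_
  have hp : polyOfCoeff E y ≠ 0 := fun h0 => hy <| funext fun k => by
    rw [← hE.coeff_polyOfCoeff y k, h0, MvPolynomial.coeff_zero, Pi.zero_apply]
  obtain ⟨x, hx, hpx⟩ := hH _ hp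
  obtain ⟨C, hC, hCp⟩ := hBM Q hQ 1 one_pos
  have hsq : 0 < weightedAbs d Q (polyOfCoeff E y) ⟨x, hx⟩ ^ 2 :=
    pow_pos (mul_pos (norm_pos_iff.2 hpx) (Real.exp_pos _)) 2
  simp only [← weightedAbs_polyOfCoeff_sq]
  exact pos_of_mul_pos_right (hsq.trans_le (hCp d _ (hE.totalDegree_polyOfCoeff_le y) ⟨x, hx⟩))
    (by positivity)

lemma StrongBernsteinMarkov.partitionFunction_pos (hBM : StrongBernsteinMarkov H ν)
    (hH : ZariskiDense H) (hQ : Continuous Q) (hE : IsEnum n d E) :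
    0 < partitionFunction ν d E Q := by
  rw [partitionFunction_eq_detIntegral]
  exact detIntegral_pos ν (continuous_monomialFun E) (continuous_sqWeight d hQ)
    (hBM.gramMatrix_posDef hH hQ hE)

lemma exists_orthonormal_triangular (hQ : Continuous Q)
    (hG : (gramMatrix ν (monomialFun H E) (sqWeight d Q)).PosDef) :
    ∃ L : Matrix (Fin (sdim n d)) (Fin (sdim n d)) ℂ, (∀ i k, i < k → L i k = 0) ∧
      (∀ i, L i i ≠ 0) ∧ (∀ i, ∫ x, weightedAbs d Q (polyOfCoeff E (L i)) x ^ 2 ∂ν = 1) ∧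
      0 ≤ 2 * ∑ i, Real.log ‖L i i‖ + Real.log (partitionFunction ν d E Q) := by
  have he := continuous_monomialFun (H := H) E
  have hρ := continuous_sqWeight d hQ
  obtain ⟨L, hL, hLG⟩ := exists_lowerTriangular_mul_mul_conjTranspose_eq_one hG
  have hφ := gramMatrix_linearCombination ν he hρ L
  rw [hLG] at hφ
  have hdet0 : L.det ≠ 0 := fun h0 => by
    simpa [Matrix.det_mul, h0] using congrArg Matrix.det hLG
  rw [Matrix.det_of_isLowerTriangular L fun i k hik => hL i k hik] at hdet0
  have hdiag (i : Fin (sdim n d)) : L i i ≠ 0 :=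
    Finset.prod_ne_zero_iff.1 hdet0 i (Finset.mem_univ i)
  refine ⟨L, hL, hdiag, fun i => ?_, ?_⟩
  · have hi := congrFun (congrFun hφ i) i
    rw [gramMatrix_apply_self, Matrix.one_apply_eq, Complex.ofReal_eq_one] at hi
    simpa only [weightedAbs_polyOfCoeff_sq] using hi
  · have hZ : ‖L.det‖ ^ 2 * partitionFunction ν d E Q = (sdim n d).factorial := by
      rw [partitionFunction_eq_detIntegral, ← detIntegral_linearCombination,
        detIntegral_eq_re ν (fun i => by fun_prop) hρ, hφ, Matrix.det_one, Complex.one_re, mul_one,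
        Fintype.card_fin]
    have hZ0 : partitionFunction ν d E Q ≠ 0 := fun h0 => by
      rw [h0, mul_zero] at hZ
      exact Nat.factorial_ne_zero _ (by exact_mod_cast hZ.symm)
    have hlog := Real.log_nonneg (hZ.symm ▸ Nat.one_le_cast.2 (Nat.factorial_pos (sdim n d)))
    rw [Matrix.det_of_isLowerTriangular L fun i k hik => hL i k hik, norm_prod,
      Real.log_mul (by simpa [Finset.prod_eq_zero_iff] using hdiag) hZ0, Real.log_pow,
      Real.log_prod fun i _ => norm_ne_zero_iff.2 (hdiag i)] at hlog
    exact_mod_cast hlog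

lemma exists_chebyshevBound_of_degLexSorted (hE : IsEnum n d E) (hs : DegLexSorted E)
    (hQ : Continuous Q) (hG : (gramMatrix ν (monomialFun H E) (sqWeight d Q)).PosDef) {lam : ℝ}
    (hlam : 0 < lam) (hBM : ∀ p : MvPolynomial (Fin n) ℂ, p.totalDegree ≤ d → ∀ z : H,
      weightedAbs d Q p z ^ 2 ≤ lam * ∫ x, weightedAbs d Q p x ^ 2 ∂ν) :
    ∃ h, ChebyshevBound d Q h ∧
      2 * ∑ i, h (E i) ≤ sdim n d * Real.log lam + Real.log (partitionFunction ν d E Q) := by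
  obtain ⟨L, hL, hdiag, hL1, hlog⟩ := exists_orthonormal_triangular hQ hG
  set h : (Fin n → ℕ) → ℝ :=
    Function.extend E (fun i => Real.log lam / 2 - Real.log ‖L i i‖) 0
  have hh (i : Fin (sdim n d)) : h (E i) = Real.log lam / 2 - Real.log ‖L i i‖ :=
    hE.1.extend_apply _ _ i
  refine ⟨h, fun α hα => ?_, ?_⟩
  · obtain ⟨i, rfl⟩ := (hE.2 α).1 hα
    refine ⟨polyOfCoeff E fun k => L i k / L i i, hE.monicAt_polyOfCoeff hs (div_self (hdiag i))
      fun k hik => by rw [hL i k hik, zero_div], fun x => ?_⟩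
    have hscale : weightedAbs d Q (polyOfCoeff E fun k => L i k / L i i) x =
        weightedAbs d Q (polyOfCoeff E (L i)) x / ‖L i i‖ := by
      simp only [weightedAbs, eval_polyOfCoeff, div_mul_eq_mul_div, ← Finset.sum_div, norm_div]
    have hsq : weightedAbs d Q (polyOfCoeff E (L i)) x ^ 2 ≤ Real.exp (Real.log lam / 2) ^ 2 := by
      rw [← Real.exp_nat_mul, Nat.cast_two, mul_div_cancel₀ _ two_ne_zero, Real.exp_log hlam]
      exact (hBM _ (hE.totalDegree_polyOfCoeff_le (L i)) x).trans_eq (by rw [hL1, mul_one])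
    rw [hscale, hh, Real.exp_sub, Real.exp_log (norm_pos_iff.2 (hdiag i))]
    gcongr
    exact le_of_sq_le_sq hsq (Real.exp_pos _).le
  · simp only [hh, Finset.sum_sub_distrib, Finset.sum_const, Finset.card_univ, Fintype.card_fin,
      nsmul_eq_mul]
    linarith

lemma StrongBernsteinMarkov.exists_chebyshevBound (hBM : StrongBernsteinMarkov H ν)
    (hH : ZariskiDense H) (hQ : Continuous Q) {ε : ℝ} (hε : 0 < ε) :
    ∃ c : ℝ, ∀ (d : ℕ) (E : Fin (sdim n d) → Fin n → ℕ), IsEnum n d E →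
      ∃ h, ChebyshevBound d Q h ∧
        2 * ∑ i, h (E i) ≤ sdim n d * (c + ε * d) + Real.log (partitionFunction ν d E Q) := by
  obtain ⟨C, hC, hCp⟩ := hBM Q hQ ε hε
  refine ⟨Real.log C, fun d E hE => ?_⟩
  obtain ⟨σ, hσ, hs⟩ := hE.exists_perm_degLexSorted
  obtain ⟨h, hh, hsum⟩ := exists_chebyshevBound_of_degLexSorted hσ hs hQ
    (hBM.gramMatrix_posDef hH hQ hσ) (mul_pos hC (Real.exp_pos _)) (hCp d)
  refine ⟨h, hh, ?_⟩
  rwa [partitionFunction_comp_perm, Real.log_mul hC.ne' (Real.exp_pos _).ne', Real.log_exp,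
    show ∑ i, h ((E ∘ σ) i) = ∑ i, h (E i) from Equiv.sum_comp σ fun i => h (E i)] at hsum

end ChebyshevBound

section Subadditivity

variable {n : ℕ} {H : Set (Pt n)} {Q : H → ℝ} {k : ℝ} {d : ℕ}

lemma weightedAbs_mul (d e : ℕ) (Q : H → ℝ) (p q : MvPolynomial (Fin n) ℂ) (x : H) :
    weightedAbs (d + e) Q (p * q) x = weightedAbs d Q p x * weightedAbs e Q q x := by
  simp only [weightedAbs, map_mul, norm_mul]
  rw [mul_mul_mul_comm, ← Real.exp_add]
  push_cast
  ring_nf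

lemma weightedAbs_pow (m d : ℕ) (Q : H → ℝ) (p : MvPolynomial (Fin n) ℂ) (x : H) :
    weightedAbs (m * d) Q (p ^ m) x = weightedAbs d Q p x ^ m := by
  simp only [weightedAbs, map_pow, norm_pow, mul_pow, ← Real.exp_nat_mul]
  push_cast
  ring_nf

/-- `k ≥ 0` bounds `|Q|` and the logarithms of the moduli of the coordinates on `H`. -/
structure LogBound (Q : H → ℝ) (k : ℝ) : Prop where
  nonneg : 0 ≤ k
  abs_le : ∀ x, |Q x| ≤ k
  norm_apply_le : ∀ (x : H) (l : Fin n), ‖(x : Pt n) l‖ ≤ Real.exp k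

lemma exists_logBound (hc : IsCompact H) (hQ : Continuous Q) (k₀ : ℝ) :
    ∃ k, LogBound Q k ∧ k₀ ≤ k := by
  have : CompactSpace H := isCompact_iff_compactSpace.1 hc
  obtain ⟨R, hR⟩ := hc.isBounded.exists_norm_le
  obtain ⟨q, hq⟩ := isCompact_univ.exists_bound_of_continuousOn hQ.continuousOn
  refine ⟨max (max 0 k₀) (max R q), ⟨by simp, fun x => ?_, fun x l => ?_⟩, by simp⟩
  · exact (hq x (Set.mem_univ x)).trans (by simp)
  · calc ‖(x : Pt n) l‖ ≤ R := (PiLp.norm_apply_le _ _).trans (hR x x.2)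
      _ ≤ max (max 0 k₀) (max R q) := by simp
      _ ≤ Real.exp (max (max 0 k₀) (max R q)) :=
          (le_add_of_nonneg_right zero_le_one).trans (Real.add_one_le_exp _)

lemma weightedAbs_monomial_le (hk : LogBound Q k) {α : Fin n → ℕ}
    (hα : ∑ l, α l ≤ d) (x : H) :
    weightedAbs d Q (MvPolynomial.monomial (exponent α) 1) x ≤ Real.exp (2 * k * d) := by
  have hmon : ‖∏ l, (x : Pt n) l ^ α l‖ ≤ Real.exp (k * d) := by
    calc ‖∏ l, (x : Pt n) l ^ α l‖ = ∏ l, ‖(x : Pt n) l‖ ^ α l := by simp only [norm_prod, norm_pow]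
      _ ≤ ∏ l, Real.exp k ^ α l := by
          gcongr with l
          exact hk.norm_apply_le x l
      _ ≤ Real.exp k ^ d := by
          rw [Finset.prod_pow_eq_pow_sum]
          exact pow_le_pow_right₀ (Real.one_le_exp hk.nonneg) hα
      _ = Real.exp (k * d) := by rw [← Real.exp_nat_mul, mul_comm]
  have hweight : -(d : ℝ) * Q x ≤ k * d := by
    nlinarith [neg_le_of_abs_le (hk.abs_le x), d.cast_nonneg (α := ℝ)]
  rw [weightedAbs, eval_monomial_exponent, one_mul, mul_assoc, two_mul, Real.exp_add]
  gcongr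

lemma chebyshevBound_const (hk : LogBound Q k) (d : ℕ) :
    ChebyshevBound d Q fun _ => 2 * k * d :=
  fun α hα => ⟨_, monicAt_monomial α, weightedAbs_monomial_le hk hα⟩

variable {d₀ m : ℕ}

lemma ChebyshevBound.div {h : (Fin n → ℕ) → ℝ} (hh : ChebyshevBound d₀ Q h) (hk : LogBound Q k)
    (hm : 0 < m) (hd : m * (d₀ + n) ≤ d) :
    ChebyshevBound d Q fun α => 2 * k * d +
      if ∑ l, α l / m ≤ d₀ then m * h (fun l => α l / m) - 2 * k * (m * d₀) else 0 := by
  intro α hα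
  dsimp only
  -- If `α = m β + r` with `0 ≤ r < m`, the polynomial `p_β ^ m z^r` is a competitor for `α`.
  split_ifs with hdiv
  · obtain ⟨p, hp, hpx⟩ := hh _ hdiv
    refine ⟨p ^ m * MvPolynomial.monomial (exponent fun l => α l % m) 1, ?_, fun x => ?_⟩
    · convert (hp.pow m).mul (monicAt_monomial fun l => α l % m) using 1
      exact funext fun l => (Nat.div_add_mod (α l) m).symm
    · obtain ⟨r, rfl⟩ :=
        Nat.exists_eq_add_of_le ((Nat.mul_le_mul_left m (d₀.le_add_right n)).trans hd)
      have hr : ∑ l, α l % m ≤ r := by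
        calc ∑ l, α l % m ≤ ∑ _l : Fin n, m := Finset.sum_le_sum fun l _ => (Nat.mod_lt _ hm).le
          _ = m * n := by simp [mul_comm]
          _ ≤ r := by rw [mul_add] at hd; omega
      rw [weightedAbs_mul, weightedAbs_pow]
      calc weightedAbs d₀ Q p x ^ m * weightedAbs r Q (MvPolynomial.monomial _ 1) x
          ≤ Real.exp (h fun l => α l / m) ^ m * Real.exp (2 * k * r) :=
            mul_le_mul (pow_le_pow_left₀ (weightedAbs_nonneg _ _ _ _) (hpx x) m)
              (weightedAbs_monomial_le hk hr x) (weightedAbs_nonneg _ _ _ _) (by positivity)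
        _ = _ := by
            rw [← Real.exp_nat_mul, ← Real.exp_add]
            push_cast
            ring_nf
  · exact ⟨_, monicAt_monomial α, by simpa using weightedAbs_monomial_le hk hα⟩

variable {E₀ : Fin (sdim n d₀) → Fin n → ℕ} {E : Fin (sdim n d) → Fin n → ℕ}

lemma IsEnum.exists_mul_add (hE : IsEnum n d E) (hE₀ : IsEnum n d₀ E₀) (hd : m * (d₀ + n) ≤ d)
    (j : Fin (sdim n d₀)) (r : Fin n → Fin m) : ∃ i, E i = fun l => m * E₀ j l + r l := by
  refine (hE.2 _).1 ?_
  have hr : ∑ l, (r l : ℕ) ≤ n * m := by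
    simpa using Finset.sum_le_sum fun l (_ : l ∈ Finset.univ) => (r l).2.le
  rw [Finset.sum_add_distrib, ← Finset.mul_sum]
  nlinarith [hE₀.sum_le j]

lemma IsEnum.sum_ite_div (hE : IsEnum n d E) (hE₀ : IsEnum n d₀ E₀) (hm : 0 < m)
    (hd : m * (d₀ + n) ≤ d) (h : (Fin n → ℕ) → ℝ) :
    ∑ i, (if ∑ l, E i l / m ≤ d₀ then h (fun l => E i l / m) else 0) =
      (m : ℝ) ^ n * ∑ j, h (E₀ j) := by
  choose f hf using hE.exists_mul_add hE₀ hd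
  have hdiv (j : Fin (sdim n d₀)) (r : Fin n → Fin m) : (fun l => E (f j r) l / m) = E₀ j := by
    simp only [hf, Nat.mul_add_div hm, Nat.div_eq_of_lt (Fin.is_lt _), add_zero]
  have hmod (j : Fin (sdim n d₀)) (r : Fin n → Fin m) (l : Fin n) : E (f j r) l % m = r l := by
    simp only [hf, Nat.mul_add_mod, Nat.mod_eq_of_lt (Fin.is_lt _)]
  have hinj : Function.Injective fun q : Fin (sdim n d₀) × (Fin n → Fin m) => f q.1 q.2 := by
    rintro ⟨j, r⟩ ⟨j', r'⟩ (hjj : f j r = f j' r')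
    refine Prod.ext (hE₀.1 ?_) (funext fun l => Fin.ext ?_)
    · rw [← hdiv j r, ← hdiv j' r', hjj]
    · rw [← hmod j r, ← hmod j' r', hjj]
  rw [← Fintype.sum_of_injective _ hinj (fun q => h (E₀ q.1)), Fintype.sum_prod_type]
  · simp [Finset.mul_sum]
  · intro i hi
    refine if_neg fun hle => hi ?_
    obtain ⟨j, hj⟩ := (hE₀.2 _).1 hle
    refine ⟨(j, fun l => ⟨E i l % m, Nat.mod_lt _ hm⟩), hE.1 ?_⟩
    rw [hf, hj]
    exact funext fun l => Nat.div_add_mod _ _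
  · rintro ⟨j, r⟩
    have hle : ∑ l, E (f j r) l / m ≤ d₀ :=
      (congrArg (fun β : Fin n → ℕ => ∑ l, β l) (hdiv j r)).trans_le (hE₀.sum_le j)
    rw [if_pos hle, hdiv]

lemma weightedVDM_le_of_chebyshevBound_div {h : (Fin n → ℕ) → ℝ} (hh : ChebyshevBound d₀ Q h)
    (hk : LogBound Q k) (hm : 0 < m) (hd : m * (d₀ + n) ≤ d) (hE₀ : IsEnum n d₀ E₀)
    (hE : IsEnum n d E) (a : Fin (sdim n d) → H) :
    weightedVDM d E Q a ≤ (sdim n d).factorial * Real.exp ((m : ℝ) ^ (n + 1) * ∑ j, h (E₀ j) +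
      2 * k * (d * sdim n d - (m : ℝ) ^ (n + 1) * (d₀ * sdim n d₀))) := by
  refine (weightedVDM_le hE (hh.div hk hm hd) a).trans_eq ?_
  have hsum := hE.sum_ite_div hE₀ hm hd fun β => m * h β - 2 * k * (m * d₀)
  rw [Finset.sum_add_distrib, hsum]
  simp only [Finset.sum_sub_distrib, ← Finset.mul_sum, Finset.sum_const,
    Finset.card_univ, Fintype.card_fin, nsmul_eq_mul]
  ring_nf

end Subadditivity

section DegreeAsymptotics

lemma sdim_le (n d : ℕ) : (sdim n d : ℝ) ≤ ((d : ℝ) + n) ^ n / n.factorial := by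
  exact_mod_cast Nat.choose_le_pow_div (α := ℝ) n (d + n)

lemma le_sdim (n d : ℕ) : (d : ℝ) ^ n / n.factorial ≤ sdim n d := by
  refine le_trans ?_ (Nat.pow_le_choose (α := ℝ) n (d + n))
  rw [Nat.add_right_comm, Nat.add_sub_cancel]
  gcongr
  exact_mod_cast d.le_succ

lemma mul_sdim_pos (n : ℕ) {d : ℕ} (hd : 0 < d) : (0 : ℝ) < d * sdim n d :=
  mul_pos (Nat.cast_pos.2 hd) (Nat.cast_pos.2 (sdim_pos n d))

lemma eventually_sdim_le_exp (n : ℕ) {ε : ℝ} (hε : 0 < ε) :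
    ∀ᶠ d : ℕ in atTop, (sdim n d : ℝ) ≤ Real.exp (ε * d) := by
  have hpow := (isLittleO_pow_exp_pos_mul_atTop n hε).bound (Real.exp_pos (-(ε * n)))
  have hshift : Tendsto (fun d : ℕ => (d : ℝ) + n) atTop atTop :=
    tendsto_atTop_add_const_right _ _ tendsto_natCast_atTop_atTop
  filter_upwards [hshift.eventually hpow] with d hd
  rw [Real.norm_of_nonneg (by positivity), Real.norm_of_nonneg (Real.exp_pos _).le,
    ← Real.exp_add] at hd
  calc (sdim n d : ℝ) ≤ ((d : ℝ) + n) ^ n / n.factorial := sdim_le n d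
    _ ≤ ((d : ℝ) + n) ^ n :=
        div_le_self (by positivity) (Nat.one_le_cast.2 n.factorial_pos)
    _ ≤ Real.exp (-(ε * n) + ε * (d + n)) := hd
    _ = Real.exp (ε * d) := by ring_nf

lemma eventually_factorial_sdim_le_exp (n : ℕ) {ε : ℝ} (hε : 0 < ε) :
    ∀ᶠ d : ℕ in atTop, ((sdim n d).factorial : ℝ) ≤ Real.exp (ε * (d * sdim n d)) := by
  filter_upwards [eventually_sdim_le_exp n hε] with d hd
  calc ((sdim n d).factorial : ℝ) ≤ (sdim n d : ℝ) ^ sdim n d := by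
        exact_mod_cast Nat.factorial_le_pow _
    _ ≤ Real.exp (ε * d) ^ sdim n d := by gcongr
    _ = Real.exp (ε * (d * sdim n d)) := by
        rw [← Real.exp_nat_mul]
        ring_nf

lemma mul_sdim_le_div_pow_mul_mul_sdim (n : ℕ) {d₀ d : ℕ} (hd₀ : 0 < d₀) (hd : d₀ + n ≤ d) :
    ((d₀ : ℝ) / (d₀ + n) * (d / (d + n) - (d₀ + n) / (d + n))) ^ (n + 1) * (d * sdim n d) ≤
      ((d / (d₀ + n) : ℕ) : ℝ) ^ (n + 1) * (d₀ * sdim n d₀) := by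
  have hd₀' : (0 : ℝ) < d₀ := Nat.cast_pos.2 hd₀
  have hd' : (d₀ : ℝ) + n ≤ d := by exact_mod_cast hd
  have hdpos : (0 : ℝ) < d := by linarith [(Nat.cast_nonneg n : (0 : ℝ) ≤ n)]
  set m := d / (d₀ + n)
  have hm : (d : ℝ) - (d₀ + n) ≤ m * (d₀ + n) := by
    have hlt : d < m * (d₀ + n) + (d₀ + n) := Nat.lt_div_mul_add (by omega)
    have hlt' : (d : ℝ) < m * (d₀ + n) + (d₀ + n) := by exact_mod_cast hlt
    linarith
  have hbase : (d₀ : ℝ) / (d₀ + n) * (d / (d + n) - (d₀ + n) / (d + n)) ≤ m * d₀ / (d + n) := by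
    rw [← sub_div, div_mul_div_comm, div_le_div_iff₀ (by positivity) (by positivity)]
    calc (d₀ : ℝ) * (d - (d₀ + n)) * (d + n) ≤ d₀ * (m * (d₀ + n)) * (d + n) := by gcongr
      _ = m * d₀ * ((d₀ + n) * (d + n)) := by ring
  have hbase0 : 0 ≤ (d₀ : ℝ) / (d₀ + n) * (d / (d + n) - (d₀ + n) / (d + n)) := by
    rw [← sub_div]
    have := sub_nonneg.2 hd'
    positivity
  calc _ ≤ (m * d₀ / ((d : ℝ) + n)) ^ (n + 1) * ((d + n) * (((d : ℝ) + n) ^ n / n.factorial)) := by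
        gcongr
        · exact le_add_of_nonneg_right n.cast_nonneg
        · exact sdim_le n d
    _ = (m : ℝ) ^ (n + 1) * (d₀ * ((d₀ : ℝ) ^ n / n.factorial)) := by
        rw [div_pow, mul_pow]
        field_simp
        ring
    _ ≤ _ := by
        gcongr
        exact le_sdim n d₀

lemma eventually_mul_sdim_le_div_pow_mul (n : ℕ) {δ : ℝ} (hδ : 0 < δ) :
    ∀ᶠ d₀ : ℕ in atTop, ∀ᶠ d : ℕ in atTop, (1 - δ) * (d * sdim n d) ≤
      ((d / (d₀ + n) : ℕ) : ℝ) ^ (n + 1) * (d₀ * sdim n d₀) := by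
  have hratio : Tendsto (fun d : ℕ => (d : ℝ) / (d + n)) atTop (𝓝 1) :=
    tendsto_natCast_div_add_atTop (n : ℝ)
  have hd₀lim : Tendsto (fun d₀ : ℕ => ((d₀ : ℝ) / (d₀ + n)) ^ (n + 1)) atTop (𝓝 1) := by
    simpa using hratio.pow (n + 1)
  filter_upwards [hd₀lim.eventually (lt_mem_nhds (sub_lt_self 1 hδ)), eventually_gt_atTop 0]
    with d₀ hd₀ hd₀pos
  have hdlim : Tendsto
      (fun d : ℕ => ((d₀ : ℝ) / (d₀ + n) * (d / (d + n) - (d₀ + n) / (d + n))) ^ (n + 1))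
      atTop (𝓝 (((d₀ : ℝ) / (d₀ + n)) ^ (n + 1))) := by
    have hzero : Tendsto (fun d : ℕ => ((d₀ : ℝ) + n) / (d + n)) atTop (𝓝 0) :=
      tendsto_const_nhds.div_atTop
        (tendsto_atTop_add_const_right _ _ tendsto_natCast_atTop_atTop)
    simpa using ((hratio.sub hzero).const_mul ((d₀ : ℝ) / (d₀ + n))).pow (n + 1)
  filter_upwards [hdlim.eventually (lt_mem_nhds hd₀), eventually_ge_atTop (d₀ + n)] with d hd hdn
  exact (mul_le_mul_of_nonneg_right hd.le (by positivity)).trans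
    (mul_sdim_le_div_pow_mul_mul_sdim n hd₀pos hdn)

end DegreeAsymptotics

section PartitionFunctionAsymptotics

variable {n : ℕ} {E : ∀ d, Fin (sdim n d) → Fin n → ℕ} {H : Set (Pt n)} {Q : H → ℝ}

lemma frequently_lt_weightedVDM {c : ℝ}
    (hc : ENNReal.ofReal (Real.exp c) < deltaBar n E H Q) :
    ∃ᶠ d in atTop, ∃ a, Real.exp (c * (d * sdim n d)) < weightedVDM d (E d) Q a := by
  have hfreq := (frequently_lt_of_lt_limsup (by isBoundedDefault) hc).and_eventually
    (eventually_gt_atTop 0)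
  refine hfreq.mono fun d ⟨hd, hd0⟩ => ?_
  rw [one_div, ENNReal.lt_rpow_inv_iff (mul_sdim_pos n hd0),
    ENNReal.ofReal_rpow_of_pos (Real.exp_pos _), lt_iSup_iff] at hd
  obtain ⟨a, ha⟩ := hd
  rw [absVDMQ, ENNReal.ofReal_lt_ofReal_iff_of_nonneg (by positivity), ← Real.exp_mul] at ha
  exact ⟨a, ha⟩

lemma zariskiDense_of_lt_deltaBar (hE : ∀ d, IsEnum n d (E d)) {c : ℝ}
    (hc : ENNReal.ofReal (Real.exp c) < deltaBar n E H Q) : ZariskiDense H := by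
  intro p hp
  obtain ⟨d, ⟨a, ha⟩, hd⟩ :=
    ((frequently_lt_weightedVDM hc).and_eventually (eventually_ge_atTop p.totalDegree)).exists
  by_contra! hzero
  set y : Fin (sdim n d) → ℂ := fun i => p.coeff (exponent (E d i))
  have hpy : polyOfCoeff (E d) y = p := (hE d).polyOfCoeff_coeff hd
  have hdet : VDM n d (E d) (fun j => (a j : Pt n)) ≠ 0 := fun h0 => by
    rw [weightedVDM, h0, norm_zero, zero_mul] at ha
    exact lt_asymm ha (Real.exp_pos _)
  have hy : y = 0 := by
    refine Matrix.eq_zero_of_vecMul_eq_zero hdet (funext fun j => ?_)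
    have hj := hzero (a j) (a j).2
    rwa [← hpy, eval_polyOfCoeff] at hj
  rw [hy] at hpy
  exact hp (hpy.symm.trans (by simp [polyOfCoeff]))

lemma eventually_lt_sum_of_chebyshevBound (hE : ∀ d, IsEnum n d (E d)) {k c ε : ℝ}
    (hk : LogBound Q k) (hck : c ≤ k) (hε : 0 < ε)
    (hc : ENNReal.ofReal (Real.exp c) < deltaBar n E H Q) :
    ∀ᶠ d in atTop, ∀ h, ChebyshevBound d Q h →
      (c - 2 * ε) * (d * sdim n d) < ∑ j, h (E d j) := by
  have hD : 0 < 2 * k - c + 2 * ε := by linarith [hk.nonneg]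
  set D := 2 * k - c + 2 * ε with hDdef
  filter_upwards [eventually_mul_sdim_le_div_pow_mul n (div_pos hε hD), eventually_gt_atTop 0]
    with d₀ hratio hd₀ h hh
  obtain ⟨d, ⟨a, ha⟩, hratio, hfact, hd, hdn⟩ := ((frequently_lt_weightedVDM hc).and_eventually
    (hratio.and ((eventually_factorial_sdim_le_exp n hε).and ((eventually_gt_atTop 0).and
      (eventually_ge_atTop (d₀ + n)))))).exists
  have hVDM := weightedVDM_le_of_chebyshevBound_div hh hk (Nat.div_pos hdn (by omega))
    (Nat.div_mul_le_self d (d₀ + n)) (hE d₀) (hE d) a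
  have hN := mul_sdim_pos n hd
  set N := (d : ℝ) * sdim n d
  set N₀ := (d₀ : ℝ) * sdim n d₀
  set u := ((d / (d₀ + n) : ℕ) : ℝ) ^ (n + 1)
  set L := ∑ j, h (E d₀ j)
  have hlog : c * N < ε * N + (u * L + 2 * k * (N - u * N₀)) := by
    rw [← Real.exp_lt_exp, Real.exp_add (ε * N)]
    exact ha.trans_le (hVDM.trans (by gcongr))
  have hDN : D * (N - u * N₀) ≤ ε * N := by
    calc D * (N - u * N₀) ≤ D * (ε / D * N) := by
          gcongr
          linarith
      _ = ε * N := by field_simp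
  by_contra! hL
  have huL : u * L ≤ u * ((c - 2 * ε) * N₀) := by gcongr
  rw [hDdef] at hDN
  linarith

variable {ν : Measure H} [IsFiniteMeasure ν]

lemma StrongBernsteinMarkov.eventually_le_log_partitionFunction (hBM : StrongBernsteinMarkov H ν)
    (hH : IsCompact H) (hE : ∀ d, IsEnum n d (E d)) (hQ : Continuous Q) {c ε : ℝ} (hε : 0 < ε)
    (hc : ENNReal.ofReal (Real.exp c) < deltaBar n E H Q) :
    ∀ᶠ d in atTop,
      (c - 3 * ε) * (2 * (d * sdim n d)) ≤ Real.log (partitionFunction ν d (E d) Q) := by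
  have : CompactSpace H := isCompact_iff_compactSpace.1 hH
  obtain ⟨k, hk, hck⟩ := exists_logBound hH hQ c
  obtain ⟨C, hC⟩ := hBM.exists_chebyshevBound (zariskiDense_of_lt_deltaBar hE hc) hQ hε
  have hCd : ∀ᶠ d : ℕ in atTop, C ≤ ε * d :=
    (tendsto_natCast_atTop_atTop.const_mul_atTop hε).eventually_ge_atTop C
  filter_upwards [eventually_lt_sum_of_chebyshevBound hE hk hck hε hc, hCd] with d hd hCd
  obtain ⟨h, hh, hsum⟩ := hC d (E d) (hE d)
  have hsC : sdim n d * (C + ε * d) ≤ 2 * ε * (d * sdim n d) := by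
    calc (sdim n d : ℝ) * (C + ε * d) ≤ sdim n d * (ε * d + ε * d) := by gcongr
      _ = 2 * ε * (d * sdim n d) := by ring
  linarith [hd h hh]

lemma exists_partitionFunction_le (hH : IsCompact H) (hν : ν Set.univ ≤ 1) (hQ : Continuous Q) :
    ∃ K : ℝ, ∀ (d : ℕ) (E : Fin (sdim n d) → Fin n → ℕ), IsEnum n d E →
      partitionFunction ν d E Q ≤ ((sdim n d).factorial * Real.exp (K * (d * sdim n d))) ^ 2 := by
  obtain ⟨k, hk, -⟩ := exists_logBound hH hQ 0
  refine ⟨2 * k, fun d E hE => ?_⟩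
  have hbound (a : Fin (sdim n d) → H) :
      weightedVDM d E Q a ≤ (sdim n d).factorial * Real.exp (2 * k * (d * sdim n d)) := by
    refine (weightedVDM_le hE (chebyshevBound_const hk d) a).trans_eq ?_
    rw [Finset.sum_const, Finset.card_univ, Fintype.card_fin, nsmul_eq_mul]
    ring_nf
  set B := (sdim n d).factorial * Real.exp (2 * k * (d * sdim n d))
  have hmass : (Measure.pi fun _ : Fin (sdim n d) => ν).real Set.univ ≤ 1 := by
    rw [Measure.real, Measure.pi_univ]
    exact ENNReal.toReal_mono one_ne_top (Finset.prod_le_one (fun _ _ => zero_le) fun _ _ => hν)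
  calc partitionFunction ν d E Q ≤ ∫ _, B ^ 2 ∂(Measure.pi fun _ : Fin (sdim n d) => ν) :=
        integral_mono_of_nonneg (.of_forall fun a => sq_nonneg _) (integrable_const _)
          (.of_forall fun a => pow_le_pow_left₀ (weightedVDM_nonneg a) (hbound a) 2)
    _ ≤ B ^ 2 := by
        rw [integral_const, smul_eq_mul]
        exact mul_le_of_le_one_left (sq_nonneg B) hmass

end PartitionFunctionAsymptotics

/-! ### Concentration of linear statistics -/

section Concentration

open ProbabilityTheory

lemma exp_sub_one_le_add_sq {x : ℝ} (hx : |x| ≤ 1) : Real.exp x - 1 ≤ x + x ^ 2 := by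
  linarith [(abs_le.1 (Real.abs_exp_sub_one_sub_id_le hx)).2]

variable {Ω ι : Type*} [MeasurableSpace Ω] {P : Measure Ω} [IsFiniteMeasure P]

lemma measureReal_le_abs_sub_le {X : Ω → ℝ} {m v u : ℝ} (hv : 0 < v) (hu : 0 ≤ u)
    (hint : ∀ θ, Integrable (fun ω => Real.exp (θ * X ω)) P)
    (hmgf : ∀ θ, |θ| ≤ u / (2 * v) →
      mgf X P θ ≤ P.real Set.univ * Real.exp (θ * m + v * θ ^ 2)) :
    P.real {ω | u ≤ |X ω - m|} ≤ 2 * (P.real Set.univ * Real.exp (-(u ^ 2 / (4 * v)))) := by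
  set θ := u / (2 * v) with hθ
  have hθ0 : 0 ≤ θ := by positivity
  have hsub : {ω | u ≤ |X ω - m|} ⊆ {ω | m + u ≤ X ω} ∪ {ω | X ω ≤ m - u} := fun ω hω => by
    rcases le_abs.1 (Set.mem_ofPred_eq ▸ hω) with h | h
    · exact Or.inl (show m + u ≤ X ω by linarith)
    · exact Or.inr (show X ω ≤ m - u by linarith)
  have hupper : P.real {ω | m + u ≤ X ω} ≤ P.real Set.univ * Real.exp (-(u ^ 2 / (4 * v))) := by
    calc _ ≤ Real.exp (-θ * (m + u)) * mgf X P θ := measure_ge_le_exp_mul_mgf _ hθ0 (hint θ)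
      _ ≤ Real.exp (-θ * (m + u)) * (P.real Set.univ * Real.exp (θ * m + v * θ ^ 2)) := by
          gcongr
          exact hmgf θ (abs_of_nonneg hθ0).le
      _ = _ := by
          rw [mul_left_comm, ← Real.exp_add, hθ]
          congr 2
          field_simp
          ring
  have hlower : P.real {ω | X ω ≤ m - u} ≤ P.real Set.univ * Real.exp (-(u ^ 2 / (4 * v))) := by
    calc _ ≤ Real.exp (-(-θ) * (m - u)) * mgf X P (-θ) :=
          measure_le_le_exp_mul_mgf _ (neg_nonpos.2 hθ0) (hint (-θ))
      _ ≤ Real.exp (-(-θ) * (m - u)) *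
            (P.real Set.univ * Real.exp (-θ * m + v * (-θ) ^ 2)) := by
          gcongr
          exact hmgf (-θ) (by rw [abs_neg, abs_of_nonneg hθ0])
      _ = _ := by
          rw [mul_left_comm, ← Real.exp_add, hθ]
          congr 2
          field_simp
          ring
  calc _ ≤ _ := measureReal_mono hsub
    _ ≤ _ := measureReal_union_le _ _
    _ ≤ _ := by linarith

lemma half_measureReal_univ_le [Fintype ι] {X : ι → Ω → ℝ} {m : ι → ℝ} {v u : ℝ} (hv : 0 < v)
    (hu : 0 ≤ u) (hint : ∀ i θ, Integrable (fun ω => Real.exp (θ * X i ω)) P)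
    (hmgf : ∀ i θ, |θ| ≤ u / (2 * v) →
      mgf (X i) P θ ≤ P.real Set.univ * Real.exp (θ * m i + v * θ ^ 2))
    (hsmall : 4 * Fintype.card ι * Real.exp (-(u ^ 2 / (4 * v))) ≤ 1) :
    P.real Set.univ / 2 ≤ P.real {ω | ∀ i, |X i ω - m i| < u} := by
  set U := {ω | ∀ i, |X i ω - m i| < u} with hU
  have hcompl : Uᶜ ⊆ ⋃ i, {ω | u ≤ |X i ω - m i|} := fun ω hω => by
    rw [hU, Set.mem_compl_iff, Set.mem_ofPred_eq] at hω
    push Not at hω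
    exact Set.mem_iUnion.2 hω
  have hUc : P.real Uᶜ ≤ P.real Set.univ / 2 := by
    calc P.real Uᶜ ≤ ∑ i, P.real {ω | u ≤ |X i ω - m i|} :=
          (measureReal_mono hcompl).trans (measureReal_iUnion_fintype_le _)
      _ ≤ ∑ _i : ι, 2 * (P.real Set.univ * Real.exp (-(u ^ 2 / (4 * v)))) :=
          Finset.sum_le_sum fun i _ => measureReal_le_abs_sub_le hv hu (hint i) (hmgf i)
      _ = P.real Set.univ * (4 * Fintype.card ι * Real.exp (-(u ^ 2 / (4 * v)))) / 2 := by
          rw [Finset.sum_const, Finset.card_univ, nsmul_eq_mul]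
          ring
      _ ≤ P.real Set.univ * 1 / 2 := by gcongr
      _ = P.real Set.univ / 2 := by rw [mul_one]
  have hunion := measureReal_union_le (μ := P) U Uᶜ
  rw [Set.union_compl_self] at hunion
  linarith

end Concentration

section VandermondeMeasure

open ProbabilityTheory

variable {n : ℕ} {H : Set (Pt n)} {d : ℕ} {E : Fin (sdim n d) → Fin n → ℕ} {Q : H → ℝ}

/-- The unnormalised law `|VDM_d^Q|² ν^{⊗s}` on tuples of points of `H`. -/
def vandermondeMeasure (ν : Measure H) (d : ℕ) (E : Fin (sdim n d) → Fin n → ℕ) (Q : H → ℝ) :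
    Measure (Fin (sdim n d) → H) :=
  (Measure.pi fun _ => ν).withDensity fun a => absVDMQ n d E H Q a ^ 2

lemma weightedVDM_eq_mul_exp (d : ℕ) (E : Fin (sdim n d) → Fin n → ℕ) (Q Q' : H → ℝ)
    (a : Fin (sdim n d) → H) : weightedVDM d E Q' a =
      weightedVDM d E Q a * Real.exp (d * ∑ j, (Q (a j) - Q' (a j))) := by
  rw [weightedVDM, weightedVDM, mul_assoc, ← Real.exp_sum, ← Real.exp_sum, ← Real.exp_add,
    Finset.mul_sum, ← Finset.sum_add_distrib]
  congr 2
  refine Finset.sum_congr rfl fun j _ => ?_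
  ring

lemma weightedVDM_sq_eq_mul_exp (d : ℕ) (E : Fin (sdim n d) → Fin n → ℕ) (Q Q' : H → ℝ)
    (a : Fin (sdim n d) → H) : weightedVDM d E Q' a ^ 2 =
      weightedVDM d E Q a ^ 2 * Real.exp (2 * d * ∑ j, (Q (a j) - Q' (a j))) := by
  rw [weightedVDM_eq_mul_exp d E Q Q' a, mul_pow, ← Real.exp_nat_mul, Nat.cast_ofNat, ← mul_assoc]

lemma absVDMQ_sq (a : Fin (sdim n d) → H) :
    absVDMQ n d E H Q a ^ 2 = ENNReal.ofReal (weightedVDM d E Q a ^ 2) :=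
  (ENNReal.ofReal_pow (weightedVDM_nonneg a) 2).symm

lemma continuous_absVDMQ (hQ : Continuous Q) : Continuous (absVDMQ n d E H Q) :=
  ENNReal.continuous_ofReal.comp (continuous_weightedVDM d E hQ)

variable {ν : Measure H}

lemma integral_vandermondeMeasure (hQ : Continuous Q) (g : (Fin (sdim n d) → H) → ℝ) :
    ∫ a, g a ∂vandermondeMeasure ν d E Q =
      ∫ a, weightedVDM d E Q a ^ 2 * g a ∂(Measure.pi fun _ => ν) := by
  rw [vandermondeMeasure, integral_withDensity_eq_integral_toReal_smul
    ((continuous_absVDMQ hQ).measurable.pow_const 2) (.of_forall fun a => by simp [absVDMQ_sq])]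
  simp only [absVDMQ_sq, ENNReal.toReal_ofReal (sq_nonneg _), smul_eq_mul]

lemma vandermondeMeasure_real_univ (hQ : Continuous Q) :
    (vandermondeMeasure ν d E Q).real Set.univ = partitionFunction ν d E Q := by
  simpa [partitionFunction] using integral_vandermondeMeasure (ν := ν) (E := E) hQ fun _ => (1 : ℝ)

lemma mgf_vandermondeMeasure (hQ : Continuous Q) (f : H → ℝ) (τ : ℝ) :
    mgf (fun a => ∑ j, f (a j)) (vandermondeMeasure ν d E Q) (-(2 * d * τ)) =
      partitionFunction ν d E (fun x => Q x + τ * f x) := by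
  rw [mgf, integral_vandermondeMeasure hQ, partitionFunction]
  congr 1 with a
  rw [weightedVDM_sq_eq_mul_exp d E Q fun x => Q x + τ * f x]
  simp only [sub_add_cancel_left, Finset.sum_neg_distrib, ← Finset.mul_sum]
  congr 2
  ring

lemma mgf_vandermondeMeasure_eq_detIntegral (hQ : Continuous Q) (f : H → ℝ) (θ : ℝ) :
    mgf (fun a => ∑ j, f (a j)) (vandermondeMeasure ν d E Q) θ =
      detIntegral ν (monomialFun H E) (fun x => sqWeight d Q x * Real.exp (θ * f x)) := by
  rw [mgf, integral_vandermondeMeasure hQ, detIntegral]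
  congr 1 with a
  rw [Finset.prod_mul_distrib, ← mul_assoc, ← Real.exp_sum, ← Finset.mul_sum, weightedVDM, mul_pow,
    ← Finset.prod_pow]
  rfl

/-- `b f` is a mean of the linear statistic `∑ j, f (a j) / s` under `|VDM_d^Q|² ν^{⊗s}`, in the
sense of a second-order bound on the moment generating function near `0`. -/
def LinearStatMean (ν : Measure H) (d : ℕ) (E : Fin (sdim n d) → Fin n → ℕ) (Q : H → ℝ)
    (b : (H → ℝ) → ℝ) : Prop :=
  ∀ (f : H → ℝ) (K θ : ℝ), Continuous f → (∀ x, |f x| ≤ K) → |θ| * K ≤ 1 →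
    mgf (fun a => ∑ j, f (a j)) (vandermondeMeasure ν d E Q) θ ≤
      partitionFunction ν d E Q * Real.exp (sdim n d * (θ * b f + θ ^ 2 * K ^ 2))

variable [CompactSpace H] [IsFiniteMeasure ν]

lemma isFiniteMeasure_vandermondeMeasure (d : ℕ)
    (E : Fin (sdim n d) → Fin n → ℕ) (hQ : Continuous Q) :
    IsFiniteMeasure (vandermondeMeasure ν d E Q) := by
  simp only [vandermondeMeasure, absVDMQ_sq]
  exact isFiniteMeasure_withDensity_ofReal
    (integrable_of_continuous _ ((continuous_weightedVDM d E hQ).pow 2)).2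

lemma StrongBernsteinMarkov.exists_linearStatMean (hBM : StrongBernsteinMarkov H ν)
    (hH : ZariskiDense H) (hE : IsEnum n d E) (hQ : Continuous Q) :
    ∃ b, LinearStatMean ν d E Q b := by
  obtain ⟨B, hB, hB0, hBs, hBv⟩ := exists_detIntegral_mul_exp_le ν (continuous_monomialFun E)
    (continuous_sqWeight d hQ) (fun x => sq_nonneg _) (hBM.gramMatrix_posDef hH hQ hE)
  have hs : (0 : ℝ) < sdim n d := Nat.cast_pos.2 (sdim_pos n d)
  refine ⟨fun f => (∫ x, f x * B x ∂ν) / sdim n d, fun f K θ hf hfK hθ => ?_⟩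
  rw [mgf_vandermondeMeasure_eq_detIntegral hQ, partitionFunction_eq_detIntegral]
  refine (hBv (fun x => θ * f x) (by fun_prop)).trans ?_
  have hpos := hBM.partitionFunction_pos hH hQ hE
  rw [partitionFunction_eq_detIntegral] at hpos
  gcongr
  have hpoint (x : H) : (Real.exp (θ * f x) - 1) * B x ≤
      θ * (f x * B x) + θ ^ 2 * K ^ 2 * B x := by
    have hθf : |θ * f x| ≤ |θ| * K := by
      rw [abs_mul]
      exact mul_le_mul_of_nonneg_left (hfK x) (abs_nonneg θ)
    have hsq : (θ * f x) ^ 2 ≤ θ ^ 2 * K ^ 2 := by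
      rw [← sq_abs, ← sq_abs θ, ← mul_pow]
      gcongr
    calc _ ≤ (θ * f x + θ ^ 2 * K ^ 2) * B x := by
          refine mul_le_mul_of_nonneg_right ?_ (hB0 x)
          linarith [exp_sub_one_le_add_sq (hθf.trans hθ)]
      _ = _ := by ring
  calc ∫ x, (Real.exp (θ * f x) - 1) * B x ∂ν
      ≤ ∫ x, (θ * (f x * B x) + θ ^ 2 * K ^ 2 * B x) ∂ν :=
        integral_mono (integrable_of_continuous ν (by fun_prop))
          (integrable_of_continuous ν (by fun_prop)) hpoint
    _ = θ * ∫ x, f x * B x ∂ν + θ ^ 2 * K ^ 2 * sdim n d := by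
        rw [integral_add (integrable_of_continuous ν (by fun_prop))
          (integrable_of_continuous ν (by fun_prop)), integral_const_mul, integral_const_mul, hBs]
    _ = _ := by field_simp

lemma LinearStatMean.half_partitionFunction_le {ι : Type*} [Fintype ι] {b : (H → ℝ) → ℝ}
    (hb : LinearStatMean ν d E Q b) (hQ : Continuous Q) {f : ι → H → ℝ}
    (hf : ∀ i, Continuous (f i)) {K ε : ℝ} (hK : 0 < K) (hfK : ∀ i x, |f i x| ≤ K) (hε : 0 ≤ ε)
    (hεK : ε ≤ 2 * K)
    (hsmall : 4 * Fintype.card ι * Real.exp (-(sdim n d * (ε ^ 2 / (4 * K ^ 2)))) ≤ 1) :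
    partitionFunction ν d E Q / 2 ≤ (vandermondeMeasure ν d E Q).real
      {a | ∀ i, |∑ j, f i (a j) - sdim n d * b (f i)| < sdim n d * ε} := by
  have : IsFiniteMeasure (vandermondeMeasure ν d E Q) :=
    isFiniteMeasure_vandermondeMeasure d E hQ
  have hs : (0 : ℝ) < sdim n d := Nat.cast_pos.2 (sdim_pos n d)
  have hexp (i : ι) (θ : ℝ) : Continuous fun a : Fin (sdim n d) → H =>
      Real.exp (θ * ∑ j, f i (a j)) := by
    have := hf i
    fun_prop
  rw [← vandermondeMeasure_real_univ hQ]
  refine half_measureReal_univ_le (v := sdim n d * K ^ 2) (by positivity) (by positivity)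
    (fun i θ => integrable_of_continuous _ (hexp i θ)) (fun i θ hθ => ?_) ?_
  · rw [vandermondeMeasure_real_univ hQ]
    refine (hb (f i) K θ (hf i) (hfK i) ?_).trans_eq (by ring_nf)
    calc |θ| * K ≤ sdim n d * ε / (2 * (sdim n d * K ^ 2)) * K := by gcongr
      _ = ε / (2 * K) := by field_simp
      _ ≤ 1 := (div_le_one (by positivity)).2 hεK
  · convert hsmall using 4
    field_simp

end VandermondeMeasure

/-! ### The free energy -/

section PenalizedMinimum

lemma eq_zero_of_forall_nonneg_add_sq {x M r : ℝ} (hr : 0 < r)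
    (h : ∀ τ : ℝ, |τ| ≤ r → 0 ≤ τ * x + M * τ ^ 2) : x = 0 := by
  have hmin : IsLocalMin (fun τ : ℝ => τ * x + M * τ ^ 2) 0 := by
    filter_upwards [Metric.closedBall_mem_nhds (0 : ℝ) hr] with τ hτ
    simpa using h τ (by simpa using hτ)
  have hderiv : HasDerivAt (fun τ : ℝ => τ * x + M * τ ^ 2) x 0 := by
    simpa using
      ((hasDerivAt_id' (0 : ℝ)).mul_const x).fun_add ((hasDerivAt_pow 2 (0 : ℝ)).const_mul M)
  exact hmin.hasDerivAt_eq_zero hderiv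

variable {ι : Type*} [Fintype ι]

lemma sum_add_single_sq [DecidableEq ι] (t : ι → ℝ) (i : ι) (τ : ℝ) :
    ∑ l, (t + Pi.single i τ : ι → ℝ) l ^ 2 = ∑ l, t l ^ 2 + (2 * τ * t i + τ ^ 2) := by
  have hterm (l : ι) : (t + Pi.single i τ : ι → ℝ) l ^ 2 =
      t l ^ 2 + if l = i then 2 * τ * t i + τ ^ 2 else 0 := by
    rcases eq_or_ne l i with rfl | hl
    · simp only [Pi.add_apply, Pi.single_eq_same, if_true]
      ring
    · simp [hl]
  simp only [hterm, Finset.sum_add_distrib, Finset.sum_ite_eq', Finset.mem_univ, if_true]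

lemma add_single_mem_closedBall [DecidableEq ι] {t : ι → ℝ} {R : ℝ}
    (ht : t ∈ Metric.closedBall 0 R) {i : ι} {τ : ℝ} (hτ : |τ| ≤ R - |t i|) :
    t + Pi.single i τ ∈ Metric.closedBall 0 R := by
  rw [mem_closedBall_zero_iff] at ht ⊢
  refine (pi_norm_le_iff_of_nonneg ((norm_nonneg t).trans ht)).2 fun l => ?_
  rcases eq_or_ne l i with rfl | hl
  · rw [Pi.add_apply, Pi.single_eq_same, Real.norm_eq_abs]
    linarith [abs_add_le (t l) τ]
  · simpa [hl] using (norm_le_pi_norm t l).trans ht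

lemma exists_criticalPoint_add_sq [DecidableEq ι] {φ : (ι → ℝ) → ℝ} (hφ : Continuous φ)
    {R η Γ : ℝ} (hR : 0 ≤ R) (hη : 0 < η) (hΓ : Γ < η * R ^ 2)
    (hbox : ∀ t ∈ Metric.closedBall 0 R, φ 0 - Γ ≤ φ t) :
    ∃ t ∈ Metric.closedBall (0 : ι → ℝ) R, (∀ i, η * t i ^ 2 ≤ Γ) ∧ ∀ i (β M r : ℝ), 0 < r →
      (∀ τ, |τ| ≤ r → φ (t + Pi.single i τ) ≤ φ t + τ * β + M * τ ^ 2) → β = -(2 * η * t i) := by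
  obtain ⟨t, ht, hmin⟩ := (isCompact_closedBall (0 : ι → ℝ) R).exists_isMinOn
    ⟨0, Metric.mem_closedBall_self hR⟩
    (show Continuous fun t => φ t + η * ∑ i, t i ^ 2 by fun_prop).continuousOn
  have hti (i : ι) : η * t i ^ 2 ≤ Γ := by
    have h0 : φ t + η * ∑ i, t i ^ 2 ≤ φ 0 := by
      simpa using hmin (Metric.mem_closedBall_self hR)
    have hi := Finset.single_le_sum (f := fun i => t i ^ 2) (fun i _ => sq_nonneg _)
      (Finset.mem_univ i)
    linarith [hbox t ht, mul_le_mul_of_nonneg_left hi hη.le]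
  refine ⟨t, ht, hti, fun i β M r hr hquad => ?_⟩
  have htR : |t i| < R :=
    abs_lt_of_sq_lt_sq (lt_of_mul_lt_mul_left ((hti i).trans_lt hΓ) hη.le) hR
  have hzero : β + 2 * η * t i = 0 :=
    eq_zero_of_forall_nonneg_add_sq (M := M + η) (lt_min hr (sub_pos.2 htR)) fun τ hτ => by
      have hle : φ t + η * ∑ l, t l ^ 2 ≤
          φ (t + Pi.single i τ) + η * ∑ l, (t + Pi.single i τ : ι → ℝ) l ^ 2 :=
        hmin (add_single_mem_closedBall ht (hτ.trans (min_le_right _ _)))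
      rw [sum_add_single_sq] at hle
      linarith [hquad τ (hτ.trans (min_le_left _ _))]
  linarith

end PenalizedMinimum

lemma eventually_forall_mem_sub_le {α : Type*} [PseudoMetricSpace α] {g : ℕ → α → ℝ} {L κ : ℝ}
    (hL : 0 ≤ L) (hlip : ∀ᶠ d in atTop, ∀ t t', g d t ≤ g d t' + L * dist t t')
    (hκ : ∀ t, ∀ ε > 0, ∀ᶠ d in atTop, κ - ε ≤ g d t) {S : Set α} (hS : IsCompact S) {ε : ℝ}
    (hε : 0 < ε) : ∀ᶠ d in atTop, ∀ t ∈ S, κ - ε ≤ g d t := by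
  set r := ε / (2 * (L + 1)) with hr
  have hr0 : 0 < r := by positivity
  have hLr : L * r ≤ ε / 2 := by
    calc L * r ≤ (L + 1) * r := by gcongr; linarith
      _ = ε / 2 := by rw [hr]; field_simp
  obtain ⟨T, -, hT⟩ :=
    hS.elim_nhds_subcover (fun t => Metric.ball t r) fun t _ => Metric.ball_mem_nhds t hr0
  have hnet : ∀ᶠ d in atTop, ∀ t ∈ T, κ - ε / 2 ≤ g d t :=
    (eventually_all_finset T).2 fun t _ => hκ t _ (half_pos hε)
  filter_upwards [hnet, hlip] with d hnet hlip t ht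
  obtain ⟨t₀, ht₀, hdist⟩ := Set.mem_iUnion₂.1 (hT ht)
  have hLdist : L * dist t₀ t ≤ L * r := by
    rw [dist_comm]
    exact mul_le_mul_of_nonneg_left (Metric.mem_ball.1 hdist).le hL
  linarith [hnet t₀ ht₀, hlip t₀ t]

section Perturbation

variable {X ι : Type*} [Fintype ι] {Q : X → ℝ} {f : ι → X → ℝ}

/-- The weight `Q` perturbed in the directions `f i` by the amounts `t i`. -/
def perturb (Q : X → ℝ) (f : ι → X → ℝ) (t : ι → ℝ) (x : X) : ℝ := Q x + ∑ i, t i * f i x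

lemma perturb_zero : perturb Q f 0 = Q := by
  ext x
  simp [perturb]

lemma perturb_add_single [DecidableEq ι] (t : ι → ℝ) (i : ι) (τ : ℝ) (x : X) :
    perturb Q f (t + Pi.single i τ) x = perturb Q f t x + τ * f i x := by
  simp [perturb, add_mul, Finset.sum_add_distrib, Pi.single_apply, add_assoc]

lemma continuous_perturb [TopologicalSpace X] (hQ : Continuous Q) (hf : ∀ i, Continuous (f i))
    (t : ι → ℝ) : Continuous (perturb Q f t) := by
  unfold perturb
  fun_prop

lemma abs_perturb_sub_perturb_le {K : ℝ} (hfK : ∀ i x, |f i x| ≤ K) (t t' : ι → ℝ) (x : X) :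
    |perturb Q f t x - perturb Q f t' x| ≤ Fintype.card ι * K * dist t t' := by
  calc |perturb Q f t x - perturb Q f t' x| = |∑ i, (t i - t' i) * f i x| := by
        simp only [perturb, add_sub_add_left_eq_sub, sub_mul, Finset.sum_sub_distrib]
    _ ≤ ∑ i, |(t i - t' i) * f i x| := Finset.abs_sum_le_sum_abs _ _
    _ ≤ ∑ _i : ι, dist t t' * K := by
        gcongr with i
        rw [abs_mul]
        exact mul_le_mul (dist_le_pi_dist t t' i) (hfK i x) (abs_nonneg _) dist_nonneg
    _ = Fintype.card ι * K * dist t t' := by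
        rw [Finset.sum_const, Finset.card_univ, nsmul_eq_mul]
        ring

variable [TopologicalSpace X] [CompactSpace X]

lemma exists_pos_forall_abs_le {ι : Type*} [Finite ι] {f : ι → X → ℝ}
    (hf : ∀ i, Continuous (f i)) : ∃ K > 0, ∀ i x, |f i x| ≤ K := by
  have := Fintype.ofFinite ι
  have hF : Continuous fun x i => f i x := continuous_pi hf
  obtain ⟨C, hC⟩ := isCompact_univ.exists_bound_of_continuousOn hF.continuousOn
  refine ⟨|C| + 1, by positivity, fun i x => ?_⟩
  calc |f i x| ≤ ‖fun i => f i x‖ := norm_le_pi_norm (fun i => f i x) i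
    _ ≤ |C| + 1 := by linarith [hC x (Set.mem_univ x), le_abs_self C]

lemma integral_perturb [MeasurableSpace X] [BorelSpace X] (μ : Measure X) [IsFiniteMeasure μ]
    (hQ : Continuous Q) (hf : ∀ i, Continuous (f i)) (t : ι → ℝ) :
    ∫ x, perturb Q f t x ∂μ = ∫ x, Q x ∂μ + ∑ i, t i * ∫ x, f i x ∂μ := by
  unfold perturb
  rw [integral_add (integrable_of_continuous μ hQ) (integrable_of_continuous μ (by fun_prop)),
    integral_finsetSum _ fun i _ => integrable_of_continuous μ (by fun_prop)]
  simp only [integral_const_mul]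

end Perturbation

section FreeEnergy

variable {n : ℕ} {H : Set (Pt n)}

/-- The free energy `log Z / (2 d s)` of the unnormalised law `|VDM_d^Q|² ν^{⊗s}`. -/
def freeEnergy (ν : Measure H) (d : ℕ) (E : Fin (sdim n d) → Fin n → ℕ) (Q : H → ℝ) : ℝ :=
  Real.log (partitionFunction ν d E Q) / (2 * (d * sdim n d))

/-- The functional of `Q` whose infimum is, as `d → ∞`, the exponential rate of `Jd` at `μ` for the
zero weight; it is the Legendre dual of the rate as a function of `μ`. -/
def dualEnergy (ν μ : Measure H) (d : ℕ) (E : Fin (sdim n d) → Fin n → ℕ) (Q : H → ℝ) : ℝ :=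
  freeEnergy ν d E Q + ∫ x, Q x ∂μ

variable {d : ℕ} {E : Fin (sdim n d) → Fin n → ℕ} {Q Q' : H → ℝ} {ν μ : Measure H}

lemma freeEnergy_le_add_of_le_mul_exp (hd : 0 < d) (hpos : 0 < partitionFunction ν d E Q)
    (hpos' : 0 < partitionFunction ν d E Q') {c : ℝ}
    (h : partitionFunction ν d E Q' ≤
      partitionFunction ν d E Q * Real.exp (2 * (d * sdim n d) * c)) :
    freeEnergy ν d E Q' ≤ freeEnergy ν d E Q + c := by
  have hds := mul_sdim_pos n hd
  have hlog := Real.log_le_log hpos' h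
  rw [Real.log_mul hpos.ne' (Real.exp_ne_zero _), Real.log_exp] at hlog
  rw [freeEnergy, freeEnergy, div_add' _ _ _ (by positivity)]
  gcongr
  linarith

lemma exp_le_partitionFunction (hd : 0 < d) (hpos : 0 < partitionFunction ν d E Q) {x : ℝ}
    (hx : x ≤ dualEnergy ν μ d E Q) :
    Real.exp (2 * (d * sdim n d) * (x - ∫ z, Q z ∂μ)) ≤ partitionFunction ν d E Q := by
  rw [← Real.le_log_iff_exp_le hpos, ← le_div_iff₀' (by linarith [mul_sdim_pos n hd])]
  exact sub_le_iff_le_add.2 hx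

lemma LinearStatMean.dualEnergy_add_mul_le {b : (H → ℝ) → ℝ} (hb : LinearStatMean ν d E Q b)
    (hd : 0 < d) (hQ : Continuous Q) {f : H → ℝ} (hf : Continuous f) {K τ : ℝ}
    (hfK : ∀ x, |f x| ≤ K) (hτ : 2 * d * |τ| * K ≤ 1) (hpos : 0 < partitionFunction ν d E Q)
    (hpos' : 0 < partitionFunction ν d E fun x => Q x + τ * f x)
    (hQμ : Integrable Q μ) (hfμ : Integrable f μ) :
    dualEnergy ν μ d E (fun x => Q x + τ * f x) ≤
      dualEnergy ν μ d E Q + τ * (∫ x, f x ∂μ - b f) + 2 * d * K ^ 2 * τ ^ 2 := by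
  have hmgf := hb f K (-(2 * d * τ)) hf hfK (by simpa [abs_mul] using hτ)
  rw [mgf_vandermondeMeasure hQ] at hmgf
  have hfree := freeEnergy_le_add_of_le_mul_exp (c := -(τ * b f) + 2 * d * K ^ 2 * τ ^ 2) hd hpos
    hpos' (hmgf.trans_eq (by ring_nf))
  rw [dualEnergy, dualEnergy, integral_add hQμ (hfμ.const_mul τ), integral_const_mul]
  linarith

variable [CompactSpace H] [IsFiniteMeasure ν]

lemma partitionFunction_le_mul_exp (hQ : Continuous Q) (hQ' : Continuous Q') {η : ℝ}
    (h : ∀ x, Q x - Q' x ≤ η) : partitionFunction ν d E Q' ≤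
      partitionFunction ν d E Q * Real.exp (2 * (d * sdim n d) * η) := by
  rw [partitionFunction, partitionFunction, ← integral_mul_const]
  refine integral_mono (integrable_of_continuous _ ((continuous_weightedVDM d E hQ').pow 2))
    (integrable_of_continuous _ (((continuous_weightedVDM d E hQ).pow 2).mul_const _)) fun a => ?_
  have hsum : ∑ j, (Q (a j) - Q' (a j)) ≤ sdim n d * η := by
    simpa using Finset.sum_le_card_nsmul Finset.univ _ η fun j _ => h (a j)
  calc weightedVDM d E Q' a ^ 2
      = weightedVDM d E Q a ^ 2 * Real.exp (2 * d * ∑ j, (Q (a j) - Q' (a j))) :=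
        weightedVDM_sq_eq_mul_exp d E Q Q' a
    _ ≤ weightedVDM d E Q a ^ 2 * Real.exp (2 * d * (sdim n d * η)) := by gcongr
    _ = _ := by ring_nf

variable [IsProbabilityMeasure μ]

lemma StrongBernsteinMarkov.dualEnergy_le_add (hBM : StrongBernsteinMarkov H ν)
    (hH : ZariskiDense H) (hE : IsEnum n d E) (hd : 0 < d) (hQ : Continuous Q)
    (hQ' : Continuous Q') {η : ℝ} (h : ∀ x, |Q x - Q' x| ≤ η) :
    dualEnergy ν μ d E Q' ≤ dualEnergy ν μ d E Q + 2 * η := by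
  have hfree : freeEnergy ν d E Q' ≤ freeEnergy ν d E Q + η :=
    freeEnergy_le_add_of_le_mul_exp hd (hBM.partitionFunction_pos hH hQ hE)
      (hBM.partitionFunction_pos hH hQ' hE)
      (partitionFunction_le_mul_exp hQ hQ' fun x => (abs_le.1 (h x)).2)
  have hint : ∫ x, Q' x ∂μ ≤ ∫ x, (Q x + η) ∂μ :=
    integral_mono (integrable_of_continuous μ hQ') (integrable_of_continuous μ (by fun_prop))
      fun x => by linarith [(abs_le.1 (h x)).1]
  rw [integral_add (integrable_of_continuous μ hQ) (integrable_const η), integral_const,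
    probReal_univ, one_smul] at hint
  rw [dualEnergy, dualEnergy]
  linarith

variable {ι : Type*} [Fintype ι] {f : ι → H → ℝ} {K : ℝ}

lemma StrongBernsteinMarkov.dualEnergy_perturb_le_add (hBM : StrongBernsteinMarkov H ν)
    (hH : ZariskiDense H) (hE : IsEnum n d E) (hd : 0 < d) (hQ : Continuous Q)
    (hf : ∀ i, Continuous (f i)) (hfK : ∀ i x, |f i x| ≤ K) (t t' : ι → ℝ) :
    dualEnergy ν μ d E (perturb Q f t) ≤
      dualEnergy ν μ d E (perturb Q f t') + 2 * (Fintype.card ι * K) * dist t t' := by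
  rw [mul_assoc, dist_comm]
  exact hBM.dualEnergy_le_add hH hE hd (continuous_perturb hQ hf t') (continuous_perturb hQ hf t)
    (abs_perturb_sub_perturb_le hfK t' t)

/-- Minimising a penalised dual energy over the perturbations turns the first-order condition into
an (almost) matching of the means of the `f i` with their `μ`-integrals. -/
lemma StrongBernsteinMarkov.exists_perturb_linearStatMean (hBM : StrongBernsteinMarkov H ν)
    (hH : ZariskiDense H) (hE : IsEnum n d E) (hd : 0 < d) (hQ : Continuous Q)
    (hf : ∀ i, Continuous (f i)) (hK : 0 < K) (hfK : ∀ i x, |f i x| ≤ K) {R η Γ : ℝ} (hR : 0 ≤ R)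
    (hη : 0 < η) (hΓ : Γ < η * R ^ 2)
    (hbox : ∀ t ∈ Metric.closedBall 0 R,
      dualEnergy ν μ d E Q - Γ ≤ dualEnergy ν μ d E (perturb Q f t)) :
    ∃ t ∈ Metric.closedBall (0 : ι → ℝ) R, ∃ b, LinearStatMean ν d E (perturb Q f t) b ∧
      ∀ i, b (f i) - ∫ x, f i x ∂μ = 2 * η * t i ∧ η * t i ^ 2 ≤ Γ := by
  classical
  have hcont : Continuous fun t => dualEnergy ν μ d E (perturb Q f t) :=
    (LipschitzWith.of_le_add_mul ⟨2 * (Fintype.card ι * K), by positivity⟩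
      (hBM.dualEnergy_perturb_le_add hH hE hd hQ hf hfK)).continuous
  obtain ⟨t, ht, htΓ, hcrit⟩ := exists_criticalPoint_add_sq hcont hR hη hΓ
    (by simpa only [perturb_zero] using hbox)
  have hQt := continuous_perturb hQ hf t
  obtain ⟨b, hb⟩ := hBM.exists_linearStatMean hH hE hQt
  refine ⟨t, ht, b, hb, fun i => ⟨?_, htΓ i⟩⟩
  have hdK : (0 : ℝ) < 2 * d * K := by positivity
  linarith [hcrit i (∫ x, f i x ∂μ - b (f i)) (2 * d * K ^ 2) (1 / (2 * d * K)) (by positivity)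
    fun τ hτ => by
      rw [show perturb Q f (t + Pi.single i τ) = fun x => perturb Q f t x + τ * f i x from
        funext (perturb_add_single t i τ)]
      refine hb.dualEnergy_add_mul_le hd hQt (hf i) (hfK i) ?_ (hBM.partitionFunction_pos hH hQt hE)
        (hBM.partitionFunction_pos hH (by fun_prop) hE) (integrable_of_continuous μ hQt)
        (integrable_of_continuous μ (hf i))
      rw [le_div_iff₀ hdK] at hτ
      linarith]

end FreeEnergy

section FreeEnergyAsymptotics

variable {n : ℕ} {E : ∀ d, Fin (sdim n d) → Fin n → ℕ} {H : Set (Pt n)} {Q : H → ℝ}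
  {ν μ : Measure H} [IsFiniteMeasure ν]

lemma StrongBernsteinMarkov.eventually_le_dualEnergy (hBM : StrongBernsteinMarkov H ν)
    (hc : IsCompact H) (hE : ∀ d, IsEnum n d (E d)) (hQ : Continuous Q) {κ ε : ℝ} (hε : 0 < ε)
    (hκ : ENNReal.ofReal (Real.exp (κ - ∫ x, Q x ∂μ)) < deltaBar n E H Q) :
    ∀ᶠ d in atTop, κ - ε ≤ dualEnergy ν μ d (E d) Q := by
  have hε3 : 0 < ε / 3 := by positivity
  filter_upwards [hBM.eventually_le_log_partitionFunction hc hE hQ hε3 hκ,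
    eventually_gt_atTop 0] with d hlog hd
  rw [← le_div_iff₀ (by linarith [mul_sdim_pos n hd])] at hlog
  rw [dualEnergy, freeEnergy]
  linarith

lemma StrongBernsteinMarkov.exists_eventually_freeEnergy_le (hBM : StrongBernsteinMarkov H ν)
    (hc : IsCompact H) (hH : ZariskiDense H) (hE : ∀ d, IsEnum n d (E d)) (hν : ν Set.univ ≤ 1)
    (hQ : Continuous Q) : ∃ C, ∀ᶠ d in atTop, freeEnergy ν d (E d) Q ≤ C := by
  have : CompactSpace H := isCompact_iff_compactSpace.1 hc
  obtain ⟨K, hK⟩ := exists_partitionFunction_le hc hν hQ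
  refine ⟨1 + K, ?_⟩
  filter_upwards [eventually_factorial_sdim_le_exp n one_pos, eventually_gt_atTop 0] with d hfac hd
  rw [freeEnergy, div_le_iff₀ (by linarith [mul_sdim_pos n hd]),
    Real.log_le_iff_le_exp (hBM.partitionFunction_pos hH hQ (hE d))]
  calc partitionFunction ν d (E d) Q
      ≤ ((sdim n d).factorial * Real.exp (K * (d * sdim n d))) ^ 2 := hK d (E d) (hE d)
    _ ≤ (Real.exp (1 * (d * sdim n d)) * Real.exp (K * (d * sdim n d))) ^ 2 := by gcongr
    _ = Real.exp ((1 + K) * (2 * (d * sdim n d))) := by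
        rw [← Real.exp_add, ← Real.exp_nat_mul]
        push_cast
        ring_nf

variable [IsProbabilityMeasure μ] {ι : Type*} [Fintype ι] {f : ι → H → ℝ}

lemma StrongBernsteinMarkov.eventually_exists_perturb_linearStatMean
    (hBM : StrongBernsteinMarkov H ν) (hc : IsCompact H) (hH : ZariskiDense H)
    (hE : ∀ d, IsEnum n d (E d)) (hν : ν Set.univ ≤ 1) {κ : ℝ}
    (hκ : ∀ Q' : H → ℝ, Continuous Q' → ∀ ε > 0, ∀ᶠ d in atTop, κ - ε ≤ dualEnergy ν μ d (E d) Q')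
    (hQ : Continuous Q) (hf : ∀ i, Continuous (f i)) {δ ε : ℝ} (hδ : 0 < δ) (hε : 0 < ε) :
    ∃ R ≥ 0, ∀ᶠ d in atTop, ∃ t ∈ Metric.closedBall (0 : ι → ℝ) R,
      κ - ε ≤ dualEnergy ν μ d (E d) (perturb Q f t) ∧
      ∃ b, LinearStatMean ν d (E d) (perturb Q f t) b ∧
        ∀ i, 0 ≤ t i * (b (f i) - ∫ x, f i x ∂μ) ∧ |b (f i) - ∫ x, f i x ∂μ| ≤ δ := by
  have : CompactSpace H := isCompact_iff_compactSpace.1 hc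
  obtain ⟨K, hK, hfK⟩ := exists_pos_forall_abs_le hf
  obtain ⟨C, hC⟩ := hBM.exists_eventually_freeEnergy_le hc hH hE hν hQ
  set Γ := |C + ∫ x, Q x ∂μ - (κ - ε)|
  have hΓ0 : 0 ≤ Γ := abs_nonneg _
  set η := δ ^ 2 / (4 * (Γ + 1)) with hη
  have hη0 : 0 < η := by positivity
  set R := Γ / η + 1 with hR
  have hR1 : 1 ≤ R := by linarith [div_nonneg hΓ0 hη0.le]
  have hΓR : Γ < η * R ^ 2 := by
    calc Γ < η * R := by rw [hR]; field_simp; linarith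
      _ ≤ η * R ^ 2 := by gcongr; exact le_self_pow₀ hR1 two_ne_zero
  have hball := eventually_forall_mem_sub_le (L := 2 * (Fintype.card ι * K))
    (g := fun d t => dualEnergy ν μ d (E d) (perturb Q f t)) (by positivity)
    ((eventually_gt_atTop 0).mono fun d hd =>
      hBM.dualEnergy_perturb_le_add hH (hE d) hd hQ hf hfK)
    (fun t => hκ _ (continuous_perturb hQ hf t)) (isCompact_closedBall 0 R) hε
  refine ⟨R, by linarith, ?_⟩
  filter_upwards [hball, hC, eventually_gt_atTop 0] with d hball hC hd
  obtain ⟨t, ht, b, hb, hbt⟩ := hBM.exists_perturb_linearStatMean hH (hE d) hd hQ hf hK hfK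
    (by linarith) hη0 hΓR fun t ht => by
      have := le_abs_self (C + ∫ x, Q x ∂μ - (κ - ε))
      linarith [hball t ht, show dualEnergy ν μ d (E d) Q ≤ C + ∫ x, Q x ∂μ by
        rw [dualEnergy]; gcongr]
  refine ⟨t, ht, hball t ht, b, hb, fun i => ?_⟩
  obtain ⟨hbi, htΓ⟩ := hbt i
  rw [hbi]
  refine ⟨by linarith [mul_nonneg hη0.le (sq_nonneg (t i))], abs_le_of_sq_le_sq ?_ hδ.le⟩
  calc (2 * η * t i) ^ 2 = 4 * η * (η * t i ^ 2) := by ring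
    _ ≤ 4 * η * (Γ + 1) := by gcongr; linarith
    _ = δ ^ 2 := by rw [hη]; field_simp

end FreeEnergyAsymptotics

section EmpiricalMeasures

lemma integral_empPM {X : Type*} [MeasurableSpace X] [MeasurableSingletonClass X] {s : ℕ}
    (hs : s ≠ 0) (a : Fin s → X) (f : X → ℝ) :
    ∫ x, f x ∂(empPM hs a : Measure X) = (∑ j, f (a j)) / s := by
  change ∫ x, f x ∂((s : ℝ≥0∞)⁻¹ • ∑ j, Measure.dirac (a j)) = _
  rw [integral_smul_measure, integral_finsetSum_measure fun j _ => integrable_dirac (by simp)]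
  simp [div_eq_inv_mul]

lemma exists_finset_forall_abs_integral_sub_lt {X : Type*} [TopologicalSpace X]
    [MeasurableSpace X] [OpensMeasurableSpace X] {μ : ProbabilityMeasure X}
    {G : Set (ProbabilityMeasure X)} (hG : G ∈ 𝓝 μ) :
    ∃ (I : Finset (BoundedContinuousFunction X ℝ)), ∃ ε > 0, ∀ σ : ProbabilityMeasure X,
      (∀ f ∈ I, |∫ x, f x ∂(σ : Measure X) - ∫ x, f x ∂(μ : Measure X)| < ε) → σ ∈ G := by
  have hle : Tendsto id (⨅ f : BoundedContinuousFunction X ℝ,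
      comap (fun σ : ProbabilityMeasure X => ∫ x, f x ∂(σ : Measure X))
        (𝓝 (∫ x, f x ∂(μ : Measure X)))) (𝓝 μ) :=
    ProbabilityMeasure.tendsto_iff_forall_integral_tendsto.2 fun f =>
      tendsto_iff_comap.2 (iInf_le _ f)
  obtain ⟨⟨I, e⟩, ⟨hI, he⟩, hsub⟩ := (HasBasis.iInf' fun f : BoundedContinuousFunction X ℝ =>
    (Metric.nhds_basis_ball (x := ∫ x, f x ∂(μ : Measure X))).comap
      fun σ : ProbabilityMeasure X => ∫ x, f x ∂(σ : Measure X)).mem_iff.1 (hle hG)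
  obtain ⟨ε, hε, hεe⟩ : ∃ ε > 0, ∀ f ∈ I, ε ≤ e f := by
    rcases I.eq_empty_or_nonempty with rfl | hne
    · exact ⟨1, one_pos, by simp⟩
    · obtain ⟨f, hf, hmin⟩ := Set.exists_min_image I e hI hne
      exact ⟨e f, he f hf, hmin⟩
  exact ⟨hI.toFinset, ε, hε, fun σ hσ => hsub (Set.mem_iInter₂.2 fun f hf =>
    (hσ f (hI.mem_toFinset.2 hf)).trans_le (hεe f hf))⟩

variable {n : ℕ}

lemma tendsto_sdim_atTop (hn : n ≠ 0) : Tendsto (fun d => (sdim n d : ℝ)) atTop atTop :=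
  tendsto_atTop_mono (le_sdim n)
    (((tendsto_pow_atTop hn).comp tendsto_natCast_atTop_atTop).atTop_div_const (by positivity))

lemma mem_Gtilde_of_forall_abs_sum_sub_lt {H : Set (Pt n)} {μ : Measure H} {d : ℕ}
    {G : Set (ProbabilityMeasure H)} {I : Finset (BoundedContinuousFunction H ℝ)} {ε : ℝ}
    (hG : ∀ σ : ProbabilityMeasure H,
      (∀ f ∈ I, |∫ x, f x ∂(σ : Measure H) - ∫ x, f x ∂μ| < ε) → σ ∈ G)
    {b : I → ℝ} (hb : ∀ f : I, |b f - ∫ x, f.1 x ∂μ| ≤ ε / 2) {a : Fin (sdim n d) → H}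
    (ha : ∀ f : I, |∑ j, f.1 (a j) - sdim n d * b f| < sdim n d * (ε / 2)) :
    a ∈ Gtilde d H G := by
  have hs : (0 : ℝ) < sdim n d := Nat.cast_pos.2 (sdim_pos n d)
  refine hG _ fun f hf => ?_
  have hmean : |(∑ j, f (a j)) / sdim n d - b ⟨f, hf⟩| < ε / 2 := by
    rw [div_sub' hs.ne', abs_div, abs_of_pos hs, div_lt_iff₀' hs]
    exact ha ⟨f, hf⟩
  rw [integral_empPM]
  calc _ ≤ _ := abs_sub_le _ (b ⟨f, hf⟩) _
    _ < ε / 2 + ε / 2 := add_lt_add_of_lt_of_le hmean (hb ⟨f, hf⟩)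
    _ = ε := add_halves ε

end EmpiricalMeasures

section LowerBound

variable {n : ℕ} {H : Set (Pt n)} {d : ℕ} {E : Fin (sdim n d) → Fin n → ℕ} {Q Q' : H → ℝ}
  {ι : Type*} [Fintype ι] {f : ι → H → ℝ}

lemma le_sum_perturb_sub {b c t : ι → ℝ} {R δ : ℝ} (htR : t ∈ Metric.closedBall 0 R)
    (hb : ∀ i, 0 ≤ t i * (b i - c i)) {a : Fin (sdim n d) → H}
    (ha : ∀ i, |∑ j, f i (a j) - sdim n d * b i| ≤ sdim n d * δ) :
    sdim n d * (∑ i, t i * c i - Fintype.card ι * R * δ) ≤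
      ∑ j, (perturb Q f t (a j) - Q (a j)) := by
  have hsum : ∑ j, (perturb Q f t (a j) - Q (a j)) = ∑ i, t i * ∑ j, f i (a j) := by
    simp only [perturb, add_sub_cancel_left, Finset.mul_sum]
    exact Finset.sum_comm
  have hterm (i : ι) : sdim n d * (t i * c i - R * δ) ≤ t i * ∑ j, f i (a j) := by
    have hti : |t i| ≤ R := (norm_le_pi_norm t i).trans (mem_closedBall_zero_iff.1 htR)
    have hdev : |t i * (∑ j, f i (a j) - sdim n d * b i)| ≤ R * (sdim n d * δ) := by
      rw [abs_mul]
      exact mul_le_mul hti (ha i) (abs_nonneg _) ((abs_nonneg _).trans hti)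
    linarith [(abs_le.1 hdev).1, mul_nonneg (Nat.cast_nonneg (α := ℝ) (sdim n d)) (hb i)]
  calc _ = ∑ i, sdim n d * (t i * c i - R * δ) := by
        rw [← Finset.mul_sum, Finset.sum_sub_distrib, Finset.sum_const, Finset.card_univ,
          nsmul_eq_mul, mul_assoc]
    _ ≤ ∑ i, t i * ∑ j, f i (a j) := Finset.sum_le_sum fun i _ => hterm i
    _ = _ := hsum.symm

variable {ν μ : Measure H} [CompactSpace H] [IsFiniteMeasure ν]

lemma vandermondeMeasure_real_mul_exp_le (hQ : Continuous Q) (hQ' : Continuous Q') {M : ℝ}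
    {U : Set (Fin (sdim n d) → H)} (hU : ∀ a ∈ U, M ≤ ∑ j, (Q (a j) - Q' (a j))) :
    (vandermondeMeasure ν d E Q).real U * Real.exp (2 * d * M) ≤
      (vandermondeMeasure ν d E Q').real U := by
  have : IsFiniteMeasure (vandermondeMeasure ν d E Q') :=
    isFiniteMeasure_vandermondeMeasure d E hQ'
  rw [Measure.real, ← ENNReal.toReal_ofReal (Real.exp_nonneg (2 * d * M)), ← ENNReal.toReal_mul]
  refine ENNReal.toReal_mono (measure_ne_top _ U) ?_
  rw [vandermondeMeasure, vandermondeMeasure, withDensity_apply', withDensity_apply',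
    ← lintegral_mul_const _ ((continuous_absVDMQ hQ).measurable.pow_const 2)]
  refine setLIntegral_mono ((continuous_absVDMQ hQ').measurable.pow_const 2) fun a ha => ?_
  rw [absVDMQ_sq, absVDMQ_sq, ← ENNReal.ofReal_mul (sq_nonneg _),
    weightedVDM_sq_eq_mul_exp d E Q Q' a]
  gcongr
  exact hU a ha

variable [IsProbabilityMeasure μ]

lemma LinearStatMean.exp_le_vandermondeMeasure_real {t : ι → ℝ} {b : (H → ℝ) → ℝ}
    (hb : LinearStatMean ν d E (perturb Q f t) b) (hd : 0 < d)
    (hpos : 0 < partitionFunction ν d E (perturb Q f t)) (hQ : Continuous Q)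
    (hf : ∀ i, Continuous (f i)) {K R δ ε κ : ℝ} (hK : 0 < K) (hfK : ∀ i x, |f i x| ≤ K)
    (htR : t ∈ Metric.closedBall 0 R) (hκ : κ - ε ≤ dualEnergy ν μ d E (perturb Q f t))
    (hbt : ∀ i, 0 ≤ t i * (b (f i) - ∫ x, f i x ∂μ)) (hδ : 0 ≤ δ) (hδK : δ ≤ 2 * K)
    (hδε : Fintype.card ι * R * δ ≤ ε) (htwo : 2 ≤ Real.exp (2 * (d * sdim n d) * ε))
    (hsmall : 4 * Fintype.card ι * Real.exp (-(sdim n d * (δ ^ 2 / (4 * K ^ 2)))) ≤ 1) :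
    Real.exp (2 * (d * sdim n d) * (κ - ∫ z, Q z ∂μ - 3 * ε)) ≤ (vandermondeMeasure ν d E Q).real
      {a | ∀ i, |∑ j, f i (a j) - sdim n d * b (f i)| < sdim n d * δ} := by
  have hQt := continuous_perturb hQ hf t
  set T := ∑ i, t i * ∫ x, f i x ∂μ with hT
  have hZ := exp_le_partitionFunction hd hpos hκ
  have hhalf := hb.half_partitionFunction_le hQt hf hK hfK hδ hδK hsmall
  have hM : ∀ a ∈ {a : Fin (sdim n d) → H |
      ∀ i, |∑ j, f i (a j) - sdim n d * b (f i)| < sdim n d * δ},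
      sdim n d * (T - ε) ≤ ∑ j, (perturb Q f t (a j) - Q (a j)) := fun a ha =>
    le_trans (by gcongr) (le_sum_perturb_sub htR hbt fun i => (ha i).le)
  refine le_trans ?_ (vandermondeMeasure_real_mul_exp_le hQt hQ hM)
  rw [integral_perturb μ hQ hf t, ← hT] at hZ
  calc Real.exp (2 * (d * sdim n d) * (κ - ∫ z, Q z ∂μ - 3 * ε))
      = Real.exp (2 * (d * sdim n d) * (κ - ε - (∫ z, Q z ∂μ + T))) /
          Real.exp (2 * (d * sdim n d) * ε) * Real.exp (2 * d * (sdim n d * (T - ε))) := by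
        rw [← Real.exp_sub, ← Real.exp_add]
        ring_nf
    _ ≤ partitionFunction ν d E (perturb Q f t) / 2 *
          Real.exp (2 * d * (sdim n d * (T - ε))) := by gcongr
    _ ≤ _ := by gcongr

end LowerBound

lemma StrongBernsteinMarkov.eventually_exp_le_vandermondeMeasure_real {n : ℕ}
    {E : ∀ d, Fin (sdim n d) → Fin n → ℕ} {H : Set (Pt n)} {Q : H → ℝ} {ν : Measure H}
    [IsFiniteMeasure ν] {μ : ProbabilityMeasure H} (hBM : StrongBernsteinMarkov H ν) (hn : n ≠ 0)
    (hc : IsCompact H) (hH : ZariskiDense H) (hE : ∀ d, IsEnum n d (E d)) (hν : ν Set.univ ≤ 1)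
    {κ : ℝ} (hκ : ∀ Q' : H → ℝ, Continuous Q' → ∀ ε > 0,
      ∀ᶠ d in atTop, κ - ε ≤ dualEnergy ν μ d (E d) Q')
    (hQ : Continuous Q) {G : Set (ProbabilityMeasure H)} (hG : G ∈ 𝓝 μ) {ε : ℝ} (hε : 0 < ε) :
    ∀ᶠ d in atTop, Real.exp (2 * (d * sdim n d) * (κ - ∫ z, Q z ∂(μ : Measure H) - 3 * ε)) ≤
      (vandermondeMeasure ν d (E d) Q).real (Gtilde d H G) := by
  have : CompactSpace H := isCompact_iff_compactSpace.1 hc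
  obtain ⟨I, ε₀, hε₀, hI⟩ := exists_finset_forall_abs_integral_sub_lt hG
  have hf (i : I) : Continuous i.1 := i.1.continuous
  obtain ⟨K, hK, hfK⟩ := exists_pos_forall_abs_le hf
  obtain ⟨R, hR, hmean⟩ := hBM.eventually_exists_perturb_linearStatMean (f := fun i : I => ⇑i.1)
    hc hH hE hν hκ hQ hf (half_pos hε₀) hε
  set δ := min (2 * K) (min (ε₀ / 2) (ε / (Fintype.card I * R + 1)))
  have hδ : 0 < δ := by positivity
  have hδε : Fintype.card I * R * δ ≤ ε := by
    have hle : δ ≤ ε / (Fintype.card I * R + 1) := (min_le_right _ _).trans (min_le_right _ _)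
    rw [le_div_iff₀ (by positivity)] at hle
    linarith
  have hsmall : ∀ᶠ d in atTop,
      4 * Fintype.card I * Real.exp (-(sdim n d * (δ ^ 2 / (4 * K ^ 2)))) ≤ 1 := by
    have hlim := (Real.tendsto_exp_neg_atTop_nhds_zero.comp
      ((tendsto_sdim_atTop hn).atTop_mul_const (show 0 < δ ^ 2 / (4 * K ^ 2) by positivity))
      ).const_mul (4 * Fintype.card I : ℝ)
    rw [mul_zero] at hlim
    exact hlim.eventually_le_const one_pos
  have htwo : ∀ᶠ d : ℕ in atTop, 2 ≤ Real.exp (2 * (d * sdim n d) * ε) :=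
    (Real.tendsto_exp_atTop.comp (((tendsto_natCast_atTop_atTop.atTop_mul_atTop₀
      (tendsto_sdim_atTop hn)).const_mul_atTop two_pos).atTop_mul_const hε)).eventually_ge_atTop 2
  filter_upwards [hmean, hsmall, htwo, eventually_gt_atTop 0] with d hmean hsmall htwo hd
  have : IsFiniteMeasure (vandermondeMeasure ν d (E d) Q) :=
    isFiniteMeasure_vandermondeMeasure d (E d) hQ
  obtain ⟨t, htR, hκt, b, hb, hbt⟩ := hmean
  have hpos := hBM.partitionFunction_pos hH (continuous_perturb hQ hf t) (hE d)
  refine (hb.exp_le_vandermondeMeasure_real hd hpos hQ hf hK hfK htR hκt (fun i => (hbt i).1) hδ.le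
    (min_le_left _ _) hδε htwo hsmall).trans (measureReal_mono fun a ha => ?_)
  refine mem_Gtilde_of_forall_abs_sum_sub_lt hI (fun i => (hbt i).2) fun i => (ha i).trans_le ?_
  gcongr
  exact (min_le_right _ _).trans (min_le_left _ _)

/-! ### Upper and lower rates -/

section Rates

variable {n : ℕ} {H : Set (Pt n)} {ν : Measure H} {Q Q' : H → ℝ}

lemma ofReal_exp_mul_rpow_one_div {N : ℝ} (hN : N ≠ 0) (c : ℝ) :
    ENNReal.ofReal (Real.exp (N * c)) ^ (1 / N) = ENNReal.ofReal (Real.exp c) := by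
  rw [ENNReal.ofReal_rpow_of_pos (Real.exp_pos _), ← Real.exp_mul]
  congr 2
  field_simp

section FixedDegree

variable {d : ℕ} {E : Fin (sdim n d) → Fin n → ℕ} {G : Set (ProbabilityMeasure H)}

lemma Jd_le_Wd (hd : 0 < d) (hν : ν Set.univ ≤ 1) : Jd n d E H ν Q G ≤ Wd n d E H Q G := by
  have : IsFiniteMeasure ν := ⟨hν.trans_lt one_lt_top⟩
  have hds := mul_sdim_pos n hd
  have hpoint : ∀ a ∈ Gtilde d H G,
      absVDMQ n d E H Q a ^ 2 ≤ Wd n d E H Q G ^ (2 * d * sdim n d : ℝ) := fun a ha => by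
    have hle : absVDMQ n d E H Q a ^ (1 / (d * sdim n d) : ℝ) ≤ Wd n d E H Q G :=
      le_iSup₂_of_le a ha le_rfl
    rw [one_div, ENNReal.rpow_inv_le_iff hds] at hle
    calc _ ≤ (Wd n d E H Q G ^ (d * sdim n d : ℝ)) ^ 2 := by gcongr
      _ = _ := by rw [← ENNReal.rpow_two, ← ENNReal.rpow_mul]; ring_nf
  have hmass : (Measure.pi fun _ : Fin (sdim n d) => ν) (Gtilde d H G) ≤ 1 := by
    refine (measure_mono (Set.subset_univ _)).trans ?_
    rw [Measure.pi_univ]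
    exact Finset.prod_le_one (fun _ _ => zero_le) fun _ _ => hν
  rw [Jd, one_div, ENNReal.rpow_inv_le_iff (by linarith)]
  calc _ ≤ ∫⁻ _ in Gtilde d H G, Wd n d E H Q G ^ (2 * d * sdim n d : ℝ)
          ∂(Measure.pi fun _ => ν) := setLIntegral_mono measurable_const hpoint
    _ ≤ _ := by
        rw [setLIntegral_const]
        exact mul_le_of_le_one_right zero_le hmass

lemma Wd_le_exp_mul (hd : 0 < d) {c : ℝ}
    (hG : ∀ σ ∈ G, ∫ x, (Q' x - Q x) ∂(σ : Measure H) ≤ c) :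
    Wd n d E H Q G ≤ ENNReal.ofReal (Real.exp c) *
      (⨆ a : Fin (sdim n d) → H, absVDMQ n d E H Q' a) ^ (1 / (d * sdim n d) : ℝ) := by
  have hds := mul_sdim_pos n hd
  refine iSup₂_le fun a ha => ?_
  have hmean := hG _ ha
  rw [integral_empPM, div_le_iff₀ (Nat.cast_pos.2 (sdim_pos n d))] at hmean
  have hle : absVDMQ n d E H Q a ≤
      ENNReal.ofReal (Real.exp (d * sdim n d * c)) * absVDMQ n d E H Q' a := by
    calc absVDMQ n d E H Q a
        = ENNReal.ofReal (weightedVDM d E Q' a * Real.exp (d * ∑ j, (Q' (a j) - Q (a j)))) :=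
          congrArg ENNReal.ofReal (weightedVDM_eq_mul_exp d E Q' Q a)
      _ ≤ ENNReal.ofReal (weightedVDM d E Q' a * Real.exp (d * (c * sdim n d))) := by
          have := weightedVDM_nonneg (E := E) (Q := Q') a
          gcongr
      _ = _ := by
          rw [mul_comm, ENNReal.ofReal_mul (Real.exp_nonneg _), mul_comm c, mul_assoc]
          rfl
  calc _ ≤ (ENNReal.ofReal (Real.exp (d * sdim n d * c)) *
        ⨆ a : Fin (sdim n d) → H, absVDMQ n d E H Q' a) ^ (1 / (d * sdim n d) : ℝ) := by
        gcongr
        exact hle.trans (by gcongr; exact le_iSup (absVDMQ n d E H Q') a)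
    _ = _ := by
        rw [ENNReal.mul_rpow_of_nonneg _ _ (by positivity), ofReal_exp_mul_rpow_one_div hds.ne']

lemma ofReal_exp_le_Jd [IsFiniteMeasure ν] (hd : 0 < d) {c : ℝ}
    (h : Real.exp (2 * (d * sdim n d) * c) ≤ (vandermondeMeasure ν d E Q).real (Gtilde d H G)) :
    ENNReal.ofReal (Real.exp c) ≤ Jd n d E H ν Q G := by
  have hds : (0 : ℝ) < 2 * d * sdim n d := by linarith [mul_sdim_pos n hd]
  rw [← ofReal_exp_mul_rpow_one_div hds.ne', mul_assoc 2 (d : ℝ), Jd, mul_assoc 2 (d : ℝ),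
    ← withDensity_apply' _ (Gtilde d H G)]
  exact ENNReal.rpow_le_rpow ((ENNReal.ofReal_le_ofReal h).trans ENNReal.ofReal_toReal_le)
    (by positivity)

end FixedDegree

variable {E : ∀ d, Fin (sdim n d) → Fin n → ℕ} {μ : ProbabilityMeasure H}

lemma JQ_le_WQ (hν : ν Set.univ ≤ 1) : JQ n E H ν Q μ ≤ WQ n E H Q μ :=
  iInf₂_mono fun _ _ => limsup_le_limsup ((eventually_gt_atTop 0).mono fun _ hd => Jd_le_Wd hd hν)

lemma WQ_le_exp_mul_deltaBar [CompactSpace H] (hQ : Continuous Q) (hQ' : Continuous Q') :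
    WQ n E H Q μ ≤ ENNReal.ofReal (Real.exp (∫ x, (Q' x - Q x) ∂(μ : Measure H))) *
      deltaBar n E H Q' := by
  have hgt : ∀ c > ∫ x, (Q' x - Q x) ∂(μ : Measure H),
      WQ n E H Q μ ≤ ENNReal.ofReal (Real.exp c) * deltaBar n E H Q' := fun c hc => by
    have hopen : IsOpen {σ : ProbabilityMeasure H | ∫ x, (Q' x - Q x) ∂(σ : Measure H) < c} :=
      isOpen_lt (ProbabilityMeasure.continuous_integral_boundedContinuousFunction
        (.mkOfCompact ⟨fun x => Q' x - Q x, by fun_prop⟩)) continuous_const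
    refine (iInf₂_le _ ⟨hopen, hc⟩).trans ?_
    rw [deltaBar, ← ENNReal.limsup_const_mul_of_ne_top ENNReal.ofReal_ne_top]
    exact limsup_le_limsup ((eventually_gt_atTop 0).mono fun d hd =>
      Wd_le_exp_mul hd fun σ hσ => le_of_lt hσ)
  have hlim : Tendsto (fun c => ENNReal.ofReal (Real.exp c) * deltaBar n E H Q')
      (𝓝[>] ∫ x, (Q' x - Q x) ∂(μ : Measure H))
      (𝓝 (ENNReal.ofReal (Real.exp (∫ x, (Q' x - Q x) ∂(μ : Measure H))) * deltaBar n E H Q')) :=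
    ENNReal.Tendsto.mul_const (ENNReal.tendsto_ofReal
      ((Real.continuous_exp.tendsto _).mono_left nhdsWithin_le_nhds))
      (.inl (ENNReal.ofReal_pos.2 (Real.exp_pos _)).ne')
  exact ge_of_tendsto hlim (eventually_nhdsWithin_of_forall hgt)

lemma WQ_le_iInf_mul [CompactSpace H] (hQ : Continuous Q) : WQ n E H Q μ ≤
    (⨅ (Qt : H → ℝ) (_ : Continuous Qt),
      deltaBar n E H Qt * ENNReal.ofReal (Real.exp (∫ z, Qt z ∂(μ : Measure H)))) *
    ENNReal.ofReal (Real.exp (-∫ z, Q z ∂(μ : Measure H))) := by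
  have hpos : ENNReal.ofReal (Real.exp (-∫ z, Q z ∂(μ : Measure H))) ≠ 0 :=
    (ENNReal.ofReal_pos.2 (Real.exp_pos _)).ne'
  rw [← ENNReal.div_le_iff hpos ENNReal.ofReal_ne_top]
  refine le_iInf₂ fun Qt hQt => ?_
  rw [ENNReal.div_le_iff hpos ENNReal.ofReal_ne_top, mul_assoc,
    ← ENNReal.ofReal_mul (Real.exp_nonneg _), ← Real.exp_add, ← sub_eq_add_neg,
    ← integral_sub (integrable_of_continuous _ hQt) (integrable_of_continuous _ hQ), mul_comm]
  exact WQ_le_exp_mul_deltaBar hQ hQt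

lemma StrongBernsteinMarkov.ofReal_exp_le_JQ (hBM : StrongBernsteinMarkov H ν) (hn : n ≠ 0)
    (hc : IsCompact H) (hE : ∀ d, IsEnum n d (E d)) (hν : ν Set.univ ≤ 1) (hQ : Continuous Q)
    {κ : ℝ} (hκ : ∀ Qt : H → ℝ, Continuous Qt →
      ENNReal.ofReal (Real.exp (κ - ∫ z, Qt z ∂(μ : Measure H))) < deltaBar n E H Qt) :
    ENNReal.ofReal (Real.exp (κ - ∫ z, Q z ∂(μ : Measure H))) ≤ JQ n E H ν Q μ := by
  have : IsFiniteMeasure ν := ⟨hν.trans_lt one_lt_top⟩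
  have hlt : ∀ ε > 0,
      ENNReal.ofReal (Real.exp (κ - ∫ z, Q z ∂(μ : Measure H) - 3 * ε)) ≤ JQ n E H ν Q μ :=
    fun ε hε => le_iInf₂ fun G hG => by
      have hlow := hBM.eventually_exp_le_vandermondeMeasure_real hn hc
        (zariskiDense_of_lt_deltaBar hE (hκ Q hQ)) hE hν
        (fun Qt hQt ε hε => hBM.eventually_le_dualEnergy hc hE hQt hε (hκ Qt hQt)) hQ
        (hG.1.mem_nhds hG.2) hε
      refine le_limsup_of_frequently_le (Eventually.frequently ?_)
      filter_upwards [hlow, eventually_gt_atTop 0] with d hlow hd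
      exact ofReal_exp_le_Jd hd hlow
  have hlim : Tendsto
      (fun ε => ENNReal.ofReal (Real.exp (κ - ∫ z, Q z ∂(μ : Measure H) - 3 * ε))) (𝓝[>] 0)
      (𝓝 (ENNReal.ofReal (Real.exp (κ - ∫ z, Q z ∂(μ : Measure H))))) := by
    refine (Continuous.tendsto' ?_ 0 _ (by simp)).mono_left nhdsWithin_le_nhds
    exact ENNReal.continuous_ofReal.comp (by fun_prop)
  exact le_of_tendsto hlim (eventually_nhdsWithin_of_forall hlt)

lemma StrongBernsteinMarkov.iInf_mul_le_JQ (hBM : StrongBernsteinMarkov H ν) (hn : n ≠ 0)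
    (hc : IsCompact H) (hE : ∀ d, IsEnum n d (E d)) (hν : ν Set.univ ≤ 1) (hQ : Continuous Q) :
    (⨅ (Qt : H → ℝ) (_ : Continuous Qt),
      deltaBar n E H Qt * ENNReal.ofReal (Real.exp (∫ z, Qt z ∂(μ : Measure H)))) *
    ENNReal.ofReal (Real.exp (-∫ z, Q z ∂(μ : Measure H))) ≤ JQ n E H ν Q μ := by
  have hpos : ENNReal.ofReal (Real.exp (-∫ z, Q z ∂(μ : Measure H))) ≠ 0 :=
    (ENNReal.ofReal_pos.2 (Real.exp_pos _)).ne'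
  rw [← ENNReal.le_div_iff_mul_le (.inl hpos) (.inl ENNReal.ofReal_ne_top)]
  refine le_of_forall_lt_imp_le_of_dense fun x hx => ?_
  rw [ENNReal.le_div_iff_mul_le (.inl hpos) (.inl ENNReal.ofReal_ne_top)]
  rcases eq_or_ne x 0 with rfl | hx0
  · simp
  obtain ⟨κ, rfl⟩ : ∃ κ, ENNReal.ofReal (Real.exp κ) = x :=
    ⟨Real.log x.toReal, by
      rw [Real.exp_log (ENNReal.toReal_pos hx0 hx.ne_top), ENNReal.ofReal_toReal hx.ne_top]⟩
  rw [← ENNReal.ofReal_mul (Real.exp_nonneg _), ← Real.exp_add, ← sub_eq_add_neg]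
  refine hBM.ofReal_exp_le_JQ hn hc hE hν hQ fun Qt hQt => ?_
  rw [sub_eq_add_neg, Real.exp_add, ENNReal.ofReal_mul (Real.exp_nonneg _), Real.exp_neg,
    ENNReal.ofReal_inv_of_pos (Real.exp_pos _), ← div_eq_mul_inv]
  exact ENNReal.div_lt_of_lt_mul (hx.trans_le (iInf₂_le Qt hQt))

end Rates

theorem JQ_eq_WQ_eq_inf_weighted_transfinite_general
    (n : ℕ) (hn : 1 ≤ n)
    (E : ∀ d, Fin (sdim n d) → (Fin n → ℕ)) (hE : ∀ d, IsEnum n d (E d))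
    (H : Set (Pt n)) (hHcomp : IsCompact H)
    (ν : Measure H) (hν : ν Set.univ ≤ 1) (hBM : StrongBernsteinMarkov H ν)
    (Q : H → ℝ) (hQ : Continuous Q)
    (μ : ProbabilityMeasure H) :
    JQ n E H ν Q μ = WQ n E H Q μ ∧
    WQ n E H Q μ =
      (⨅ (Qt : H → ℝ) (_ : Continuous Qt),
        deltaBar n E H Qt * ENNReal.ofReal (Real.exp (∫ z, Qt z ∂(μ : Measure H)))) *
      ENNReal.ofReal (Real.exp (-∫ z, Q z ∂(μ : Measure H))) := by
  have : CompactSpace H := isCompact_iff_compactSpace.1 hHcomp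
  have hJW : JQ n E H ν Q μ ≤ WQ n E H Q μ := JQ_le_WQ hν
  have hupper := WQ_le_iInf_mul (E := E) (μ := μ) hQ
  have hlower := hBM.iInf_mul_le_JQ (μ := μ) (Nat.one_le_iff_ne_zero.1 hn) hHcomp hE hν hQ
  exact ⟨hJW.antisymm (hupper.trans hlower), hupper.antisymm (hlower.trans hJW)⟩

/-- **Corollary (weighted main result).** Let `H ⊂ ℂⁿ` be a compact convex set with nonempty
interior and suppose `(H, ν)` satisfies the density condition. Then for every continuous
`Q : H → ℝ` (with `w = e^{-Q}`) and every `μ ∈ 𝓜(H)`,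
`J^Q(μ) = W^Q(μ) = (inf { δ̄^{e^{-Q̃}}(H) · exp(∫_H Q̃ dμ) : Q̃ : H → ℝ continuous }) · exp(-∫_H Q dμ)`. -/
theorem JQ_eq_WQ_eq_inf_weighted_transfinite
    (n : ℕ) (hn : 1 ≤ n)
    (E : ∀ d, Fin (sdim n d) → (Fin n → ℕ)) (hE : ∀ d, IsEnum n d (E d))
    (H : Set (Pt n)) (hHcomp : IsCompact H) (hHconv : Convex ℝ H)
    (hHint : (interior H).Nonempty)
    (ν : Measure H) (hν : ν Set.univ ≤ 1) (hdens : DensityCond H ν)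
    (Q : H → ℝ) (hQ : Continuous Q)
    (μ : ProbabilityMeasure H) :
    JQ n E H ν Q μ = WQ n E H Q μ ∧
    WQ n E H Q μ =
      (⨅ (Qt : H → ℝ) (_ : Continuous Qt),
        deltaBar n E H Qt * ENNReal.ofReal (Real.exp (∫ z, Qt z ∂(μ : Measure H)))) *
      ENNReal.ofReal (Real.exp (-∫ z, Q z ∂(μ : Measure H))) := by
  have : IsFiniteMeasure ν := ⟨hν.trans_lt one_lt_top⟩
  exact JQ_eq_WQ_eq_inf_weighted_transfinite_general n hn E hE H hHcomp ν hν
    (hdens.strongBernsteinMarkov hHcomp hHconv hHint) Q hQ μ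

end
end

section
/- Let Q : H → ℝ be continuous and w = e^{−Q}. Then for every μ ∈ 𝓜(H): J(μ) = J^Q(μ) · exp(∫_H Q dμ) and W(μ) = W^Q(μ) · exp(∫_H Q dμ). -/
open MeasureTheory Filter Topology ENNReal

noncomputable section

/-! The weight `e^{-dQ}` enters `|VDM_d^Q(a)|` only through the empirical measure `ρ` of `a`:
`∏_j e^{-d Q(a_j)} = e^{-d s ∫ Q dρ}`. So changing `Q` to `Q + f` multiplies the normalized
integrand by exactly `e^{-∫ f dρ}`, and over tuples with `ρ` in a small neighborhood of `μ` this
factor is as close as we like to `e^{-∫ f dμ}`, because `ρ ↦ ∫ f dρ` is continuous. It therefore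
comes out of both functionals in the limit of shrinking neighborhoods. -/

lemma eq_mul_of_le_mul_of_le_mul_inv {a b c : ℝ≥0∞} (hc_zero : c ≠ 0) (hc_top : c ≠ ∞)
    (hab : a ≤ b * c) (hba : b ≤ a * c⁻¹) : a = b * c :=
  hab.antisymm <| (ENNReal.le_div_iff_mul_le (.inl hc_zero) (.inl hc_top)).1 hba

section LocalLimsup

variable {ι X : Type*} [TopologicalSpace X]

/-- The infimum over the open neighborhoods `G` of `x` of the upper limits along `l` of the
families `F G : ι → β`; `J^Q(μ)` and `W^Q(μ)` are both of this form. -/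
def localLimsup {β : Type*} [CompleteLattice β] (l : Filter ι) (F : Set X → ι → β) (x : X) : β :=
  ⨅ G ∈ {G : Set X | IsOpen G ∧ x ∈ G}, limsup (F G) l

lemma localLimsup_le_mul {l : Filter ι} {F₁ F₂ : Set X → ι → ℝ≥0∞} {T : X → ℝ≥0∞} {x : X}
    (hT : UpperSemicontinuousAt T x) (hT_zero : T x ≠ 0) (hT_top : T x ≠ ∞)
    (hmono : ∀ d, Monotone (F₂ · d))
    (hle : ∀ᶠ d in l, ∀ G c, (∀ y ∈ G, T y ≤ c) → F₁ G d ≤ F₂ G d * c) :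
    localLimsup l F₁ x ≤ localLimsup l F₂ x * T x := by
  refine ENNReal.le_mul_of_forall_lt (.inr hT_top) (.inr hT_zero) fun a ha b hb ↦ ?_
  obtain ⟨G, ⟨hG, hxG⟩, hGa⟩ : ∃ G, (IsOpen G ∧ x ∈ G) ∧ limsup (F₂ G) l < a := by
    simpa [localLimsup, iInf_lt_iff] using ha
  obtain ⟨U, hUb, hU, hxU⟩ := eventually_nhds_iff.1 (hT b hb)
  refine (iInf₂_le (G ∩ U) ⟨hG.inter hU, hxG, hxU⟩).trans (limsup_le_of_le (h := ?_))
  filter_upwards [hle, eventually_lt_of_limsup_lt hGa] with d hd hda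
  calc F₁ (G ∩ U) d ≤ F₂ (G ∩ U) d * b := hd _ _ fun y hy ↦ (hUb y hy.2).le
    _ ≤ F₂ G d * b := by gcongr; exact hmono d Set.inter_subset_left
    _ ≤ a * b := by gcongr

end LocalLimsup

section ExpIntegral

variable {X : Type*} [MeasurableSpace X]

/-- The functional `ρ ↦ exp (∫ f dρ)` on probability measures, valued in `ℝ≥0∞` as the
determinants `absVDMQ` are. -/
def expIntegral (f : X → ℝ) (ρ : ProbabilityMeasure X) : ℝ≥0∞ :=
  ENNReal.ofReal (Real.exp (∫ x, f x ∂(ρ : Measure X)))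

lemma expIntegral_ne_zero (f : X → ℝ) (ρ : ProbabilityMeasure X) : expIntegral f ρ ≠ 0 := by
  simp [expIntegral, Real.exp_pos]

lemma expIntegral_ne_top (f : X → ℝ) (ρ : ProbabilityMeasure X) : expIntegral f ρ ≠ ∞ :=
  ENNReal.ofReal_ne_top

lemma expIntegral_neg (f : X → ℝ) (ρ : ProbabilityMeasure X) :
    expIntegral (-f) ρ = (expIntegral f ρ)⁻¹ := by
  simp [expIntegral, integral_neg, Real.exp_neg, ENNReal.ofReal_inv_of_pos, Real.exp_pos]

lemma continuous_expIntegral [TopologicalSpace X] [OpensMeasurableSpace X]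
    (f : BoundedContinuousFunction X ℝ) : Continuous (expIntegral f) :=
  ENNReal.continuous_ofReal.comp <| Real.continuous_exp.comp <|
    ProbabilityMeasure.continuous_integral_boundedContinuousFunction f

lemma expIntegral_empPM_pow [MeasurableSingletonClass X] {s : ℕ} (hs : s ≠ 0) (a : Fin s → X)
    (f : X → ℝ) :
    expIntegral f (empPM hs a) ^ s = ENNReal.ofReal (∏ j, Real.exp (f (a j))) := by
  have integral_eq : ∫ x, f x ∂(empPM hs a : Measure X) = (s : ℝ)⁻¹ * ∑ j, f (a j) := by
    change ∫ x, f x ∂(emp a) = _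
    rw [emp, integral_smul_measure,
      integral_finsetSum_measure fun j _ ↦ integrable_dirac (by simp)]
    simp
  rw [expIntegral, integral_eq, ← ENNReal.ofReal_pow (Real.exp_pos _).le, ← Real.exp_nat_mul,
    mul_inv_cancel_left₀ (by exact_mod_cast hs), Real.exp_sum]

end ExpIntegral

section Vandermonde

variable {n d : ℕ} {E : Fin (sdim n d) → Fin n → ℕ} {H : Set (Pt n)}

lemma absVDMQ_eq_absVDMQ_add_mul (Q f : H → ℝ) (a : Fin (sdim n d) → H) :
    absVDMQ n d E H Q a =
      absVDMQ n d E H (Q + f) a * expIntegral f (empPM (sdim_pos n d).ne' a) ^ (sdim n d * d) := by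
  have weight_eq (j) : Real.exp (-d * Q (a j)) =
      Real.exp (-d * (Q + f) (a j)) * Real.exp (f (a j)) ^ d := by
    rw [← Real.exp_nat_mul, ← Real.exp_add, Pi.add_apply]
    ring_nf
  rw [pow_mul, expIntegral_empPM_pow, ← ENNReal.ofReal_pow (by positivity), absVDMQ, absVDMQ,
    ← ENNReal.ofReal_mul (by positivity), mul_assoc, ← Finset.prod_pow, ← Finset.prod_mul_distrib,
    Finset.prod_congr rfl fun j _ ↦ weight_eq j]

lemma continuous_VDM : Continuous (VDM n d E) := by
  refine Continuous.matrix_det (continuous_matrix fun i j ↦ ?_)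
  simp only [Matrix.of_apply]
  fun_prop

lemma measurable_absVDMQ {Q : H → ℝ} (hQ : Measurable Q) : Measurable (absVDMQ n d E H Q) := by
  have measurable_VDM : Measurable (VDM n d E) := continuous_VDM.measurable
  unfold absVDMQ
  fun_prop

variable {G : Set (ProbabilityMeasure H)} {Q f : H → ℝ} {c : ℝ≥0∞}

lemma absVDMQ_le_absVDMQ_add_mul_pow (hc : ∀ ρ ∈ G, expIntegral f ρ ≤ c)
    {a : Fin (sdim n d) → H} (ha : a ∈ Gtilde d H G) :
    absVDMQ n d E H Q a ≤ absVDMQ n d E H (Q + f) a * c ^ (sdim n d * d) := by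
  rw [absVDMQ_eq_absVDMQ_add_mul Q f]
  gcongr
  exact hc _ ha

lemma Jd_mono (ν : Measure H) (Q : H → ℝ) : Monotone (Jd n d E H ν Q) := fun _ _ hG ↦
  ENNReal.rpow_le_rpow (lintegral_mono_set fun _ ha ↦ hG ha) (by positivity)

lemma Wd_mono (Q : H → ℝ) : Monotone (Wd n d E H Q) := fun _ _ hG ↦
  biSup_mono fun _ ha ↦ hG ha

lemma Jd_le_Jd_add_mul (hd : d ≠ 0) (ν : Measure H) (hQ : Measurable Q) (hf : Measurable f)
    (hc : ∀ ρ ∈ G, expIntegral f ρ ≤ c) :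
    Jd n d E H ν Q G ≤ Jd n d E H ν (Q + f) G * c := by
  have hm : Measurable fun a ↦ absVDMQ n d E H (Q + f) a ^ 2 :=
    (measurable_absVDMQ (hQ.add hf)).pow_const 2
  have root_pow : ((c ^ (sdim n d * d)) ^ 2) ^ (1 / (2 * d * sdim n d) : ℝ) = c := by
    convert ENNReal.pow_rpow_inv_natCast (n := sdim n d * d * 2) (by simp [hd, (sdim_pos n d).ne'])
      c using 2
    · rw [← pow_mul]
    · push_cast; ring
  calc Jd n d E H ν Q G
      ≤ (∫⁻ a in Gtilde d H G, absVDMQ n d E H (Q + f) a ^ 2 * (c ^ (sdim n d * d)) ^ 2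
          ∂(Measure.pi fun _ ↦ ν)) ^ (1 / (2 * d * sdim n d) : ℝ) := by
        refine ENNReal.rpow_le_rpow (setLIntegral_mono (hm.mul_const _) fun a ha ↦ ?_)
          (by positivity)
        rw [← mul_pow]
        gcongr
        exact absVDMQ_le_absVDMQ_add_mul_pow hc ha
    _ = Jd n d E H ν (Q + f) G * c := by
        rw [lintegral_mul_const _ hm, ENNReal.mul_rpow_of_nonneg _ _ (by positivity), root_pow, Jd]

lemma Wd_le_Wd_add_mul (hd : d ≠ 0) (hc : ∀ ρ ∈ G, expIntegral f ρ ≤ c) :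
    Wd n d E H Q G ≤ Wd n d E H (Q + f) G * c := by
  have root_pow : (c ^ (sdim n d * d)) ^ (1 / (d * sdim n d) : ℝ) = c := by
    convert ENNReal.pow_rpow_inv_natCast (n := sdim n d * d) (by simp [hd, (sdim_pos n d).ne'])
      c using 2
    push_cast; ring
  refine iSup₂_le fun a ha ↦ ?_
  calc absVDMQ n d E H Q a ^ (1 / (d * sdim n d) : ℝ)
      ≤ (absVDMQ n d E H (Q + f) a * c ^ (sdim n d * d)) ^ (1 / (d * sdim n d) : ℝ) := by
        gcongr
        exact absVDMQ_le_absVDMQ_add_mul_pow hc ha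
    _ = absVDMQ n d E H (Q + f) a ^ (1 / (d * sdim n d) : ℝ) * c := by
        rw [ENNReal.mul_rpow_of_nonneg _ _ (by positivity), root_pow]
    _ ≤ Wd n d E H (Q + f) G * c := by
        gcongr
        exact le_iSup₂_of_le a ha le_rfl

end Vandermonde

section Functionals

variable {n : ℕ} (E : ∀ d, Fin (sdim n d) → Fin n → ℕ) {H : Set (Pt n)} (ν : Measure H)
  {Q : H → ℝ} (f : BoundedContinuousFunction H ℝ) (μ : ProbabilityMeasure H)

lemma JQ_le_JQ_add_mul_expIntegral (hQ : Measurable Q) :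
    JQ n E H ν Q μ ≤ JQ n E H ν (Q + f) μ * expIntegral f μ :=
  localLimsup_le_mul (continuous_expIntegral f).continuousAt.upperSemicontinuousAt
    (expIntegral_ne_zero f μ) (expIntegral_ne_top f μ) (fun _ ↦ Jd_mono ν _)
    ((eventually_ne_atTop 0).mono fun _ hd _ _ ↦
      Jd_le_Jd_add_mul hd ν hQ f.continuous.measurable)

variable (Q) in
lemma WQ_le_WQ_add_mul_expIntegral :
    WQ n E H Q μ ≤ WQ n E H (Q + f) μ * expIntegral f μ :=
  localLimsup_le_mul (continuous_expIntegral f).continuousAt.upperSemicontinuousAt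
    (expIntegral_ne_zero f μ) (expIntegral_ne_top f μ) (fun _ ↦ Wd_mono _)
    ((eventually_ne_atTop 0).mono fun _ hd _ _ ↦ Wd_le_Wd_add_mul hd)

theorem JQ_eq_JQ_add_mul_expIntegral (hQ : Measurable Q) :
    JQ n E H ν Q μ = JQ n E H ν (Q + f) μ * expIntegral f μ := by
  have reverse := JQ_le_JQ_add_mul_expIntegral E ν (-f) μ (hQ.add f.continuous.measurable)
  rw [BoundedContinuousFunction.coe_neg, add_neg_cancel_right, expIntegral_neg] at reverse
  exact eq_mul_of_le_mul_of_le_mul_inv (expIntegral_ne_zero f μ) (expIntegral_ne_top f μ)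
    (JQ_le_JQ_add_mul_expIntegral E ν f μ hQ) reverse

variable (Q) in
theorem WQ_eq_WQ_add_mul_expIntegral :
    WQ n E H Q μ = WQ n E H (Q + f) μ * expIntegral f μ := by
  have reverse := WQ_le_WQ_add_mul_expIntegral E (Q + ⇑f) (-f) μ
  rw [BoundedContinuousFunction.coe_neg, add_neg_cancel_right, expIntegral_neg] at reverse
  exact eq_mul_of_le_mul_of_le_mul_inv (expIntegral_ne_zero f μ) (expIntegral_ne_top f μ)
    (WQ_le_WQ_add_mul_expIntegral E Q f μ) reverse

end Functionals

theorem J_eq_JQ_mul_exp_and_W_eq_WQ_mul_exp_general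
    (n : ℕ) (E : ∀ d, Fin (sdim n d) → (Fin n → ℕ)) (hE : ∀ d, IsEnum n d (E d))
    (H : Set (Pt n)) (ν : Measure H) (Q : H → ℝ) (hQ : Measurable Q)
    (f : BoundedContinuousFunction H ℝ) (μ : ProbabilityMeasure H) :
    JQ n E H ν Q μ =
      JQ n E H ν (Q + f) μ * ENNReal.ofReal (Real.exp (∫ z, f z ∂(μ : Measure H))) ∧
    WQ n E H Q μ =
      WQ n E H (Q + f) μ * ENNReal.ofReal (Real.exp (∫ z, f z ∂(μ : Measure H))) :=
  ⟨JQ_eq_JQ_add_mul_expIntegral E ν f μ hQ, WQ_eq_WQ_add_mul_expIntegral E Q f μ⟩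

/-- **Proposition (weighted vs. unweighted functionals).** Let `Q : H → ℝ` be continuous and
`w = e^{-Q}`. Then for every `μ ∈ 𝓜(H)`: `J(μ) = J^Q(μ) · exp(∫_H Q dμ)` and
`W(μ) = W^Q(μ) · exp(∫_H Q dμ)`. -/
theorem J_eq_JQ_mul_exp_and_W_eq_WQ_mul_exp
    (n : ℕ) (hn : 1 ≤ n)
    (E : ∀ d, Fin (sdim n d) → (Fin n → ℕ)) (hE : ∀ d, IsEnum n d (E d))
    (H : Set (Pt n)) (hHcomp : IsCompact H)
    (ν : Measure H) (hν : ν Set.univ ≤ 1)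
    (Q : H → ℝ) (hQ : Continuous Q)
    (μ : ProbabilityMeasure H) :
    JQ n E H ν 0 μ = JQ n E H ν Q μ * ENNReal.ofReal (Real.exp (∫ z, Q z ∂(μ : Measure H))) ∧
    WQ n E H 0 μ = WQ n E H Q μ * ENNReal.ofReal (Real.exp (∫ z, Q z ∂(μ : Measure H))) := by
  have : CompactSpace H := isCompact_iff_compactSpace.1 hHcomp
  simpa only [zero_add] using! J_eq_JQ_mul_exp_and_W_eq_WQ_mul_exp_general n E hE H ν 0
    measurable_zero (.mkOfCompact ⟨Q, hQ⟩) μ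

end
end
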